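/- arXiv:1902.07426 — 2 statements merged into one kernel-verified Lean document; each statement's English description precedes it below -/
import Mathlib

section
/- For every ε ∈ (0,1/2] there exist a constant C_ε > 0 and n_0 such that the following holds. For every n ≥ n_0, every integer r with 1 ≤ r < (log* n)/5, every product probability measure μ = μ_1 × ... × μ_r on ({0,1}^n)^r, and every (n,r) coin-flipping protocol f : ({0,1}^n)^r → {0,1}, there exist b ∈ {0,1} and a coalition B ⊆ [n] with |B| ≤ C_ε·n·r·4^r/log^{(4r)} n such that I_B^b(f) ≥ 1 − ε. In particular, no such protocol is ε-resilient against coalitions of size ⌈C_ε·n·r·4^r/log^{(4r)} n⌉. -/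
open MeasureTheory
open scoped ENNReal

/-- An `(n,r)`-strategy for a coalition `B`: in round `i`, given the bits broadcast by the
players outside `B` in the first `i+1` rounds, it chooses the bits of the players in `B`
(coordinates outside `B` of the output are irrelevant). -/
def Strategy (n r : ℕ) (B : Finset (Fin n)) : Type :=
  (i : Fin r) → (Fin (i.val + 1) → ({j : Fin n // j ∉ B} → Bool)) → (Fin n → Bool)

/-- The transcript of the protocol when the good players broadcast according to `α` and the
coalition `B` follows strategy `π` (with rushing: in round `i` the coalition sees the good
players' round-`i` bits). -/
def execP {n r : ℕ} (B : Finset (Fin n)) (π : Strategy n r B)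
    (α : Fin r → Fin n → Bool) : Fin r → Fin n → Bool :=
  fun i j =>
    if j ∈ B then
      π i (fun k => fun j' =>
        α ⟨k.val, by have hk := k.isLt; have hi := i.isLt; omega⟩ j'.val) j
    else α i j

/-- `I_{π,B}^b(f)`: the probability that the output is `b` when the coalition `B` follows `π`.
The good players' bits are sampled from the product measure `⨂_i ⨂_j μs i j`; since the
transcript and the strategy only depend on the coordinates outside `B`, this agrees with
sampling only the coordinates outside `B`. -/
noncomputable def IPi {n r : ℕ} (μs : Fin r → Fin n → Measure Bool)
    (f : (Fin r → Fin n → Bool) → Bool) (B : Finset (Fin n)) (π : Strategy n r B)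
    (b : Bool) : ℝ≥0∞ :=
  (Measure.pi fun i => Measure.pi fun j => μs i j) {α | f (execP B π α) = b}

/-- `I_B^b(f)`: the influence of coalition `B` towards `b`, i.e. the supremum over strategies
of the probability that the output is `b`. -/
noncomputable def IB {n r : ℕ} (μs : Fin r → Fin n → Measure Bool)
    (f : (Fin r → Fin n → Bool) → Bool) (B : Finset (Fin n)) (b : Bool) : ℝ :=
  (⨆ π : Strategy n r B, IPi μs f B π b).toReal

/-- The `j`-times iterated base-2 logarithm. -/
noncomputable def iterLog : ℕ → ℝ → ℝ
  | 0, x => x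
  | (j+1), x => Real.logb 2 (iterLog j x)

/-- `log* x`: the least `j` with `log^{(j)} x ≤ 1`. -/
noncomputable def logStar (x : ℝ) : ℕ := sInf {j : ℕ | iterLog j x ≤ 1}

/-!
Suppose first that every bit takes both of its values with probability at least `1 / Q`. By the
logarithmic Sobolev inequality and the resulting Kahn–Kalai–Linial inequality, either some single
player raises the probability of an event by `1 / K`, and a random block of players catches that
player with chance about `1 / (K Q)`, or the gains of the players have a large sum, and a few random
players achieve the same. Hence a random coalition that is *independent of the event* brings every
event of probability at least `η / 4` to probability at least `1 - ε`, with a chance that is tiny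
but does not depend on `n`.

Rounds are then treated backwards. Inductively, for every first round `y` the chances that a random
coalition `D` can force the outcome `true`, respectively `false`, in the remaining game add up to at
least `η`. For one outcome the average of this chance over `y` is at least `η / 2`, so with chance
at least `η / 4` over `D` the set of those `y` from which `D` wins has probability at least `η / 4`,
and an independent random coalition steers the first round into it. A positive chance is all that is
needed at the end.

Bits that are more one-sided are handled by overwriting each bit by each of the two constants with
probability `1 / Q`; a coalition simulates this noise by containing the overwritten players, of
which there are `O(n / Q)` per round. Each round costs at most four exponentials in `Q`, which is
why `Q = ⌈log^(4r) n⌉` is affordable.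
-/

namespace CoinFlipping

section ProductMeasure

variable {α : Type*} [MeasurableSpace α] {n : ℕ}

lemma integral_pi_succ (μ : Fin (n + 1) → Measure α) [∀ i, SigmaFinite (μ i)]
    {F : (Fin (n + 1) → α) → ℝ} (hF : Integrable F (Measure.pi μ)) :
    ∫ x, F x ∂Measure.pi μ
      = ∫ a, ∫ y, F (Fin.cons a y) ∂Measure.pi (fun i => μ i.succ) ∂μ 0 := by
  have split := (measurePreserving_piFinSuccAbove μ 0).symm
  have hF' := split.integrable_comp_of_integrable hF
  rw [← split.integral_comp', integral_prod _ (by simpa [Function.comp_def] using hF')]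
  simp only [MeasurableEquiv.piFinSuccAbove_symm_apply, Fin.insertNthEquiv, Fin.insertNth_zero,
    Equiv.coe_fn_mk, Fin.zero_succAbove]
  rfl

lemma measurePreserving_piecewise {ι : Type*} [Fintype ι] [DecidableEq ι] (C : Finset ι)
    (μ ν : ι → Measure α) [∀ i, IsProbabilityMeasure (μ i)] [∀ i, IsProbabilityMeasure (ν i)] :
    MeasurePreserving (fun p : (ι → α) × (ι → α) => C.piecewise p.2 p.1)
      ((Measure.pi μ).prod (Measure.pi ν)) (Measure.pi (C.piecewise ν μ)) := by
  have hmeas : Measurable fun p : (ι → α) × (ι → α) => C.piecewise p.2 p.1 := by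
    refine measurable_pi_lambda _ fun i => ?_
    by_cases hi : i ∈ C <;> simp only [Finset.piecewise, hi, if_true, if_false] <;> fun_prop
  have hprob (i : ι) : IsProbabilityMeasure (C.piecewise ν μ i) := by
    by_cases hi : i ∈ C <;> simp only [Finset.piecewise, hi, if_true, if_false] <;> infer_instance
  refine ⟨hmeas, (Measure.pi_eq fun s hs => ?_).symm⟩
  have hpre : (fun p : (ι → α) × (ι → α) => C.piecewise p.2 p.1) ⁻¹' Set.univ.pi s
      = (Set.univ.pi (C.piecewise (fun _ => Set.univ) s))
        ×ˢ (Set.univ.pi (C.piecewise s (fun _ => Set.univ))) := by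
    ext p
    simp only [Set.mem_preimage, Set.mem_prod, Set.mem_univ_pi, ← forall_and]
    refine forall_congr' fun i => ?_
    by_cases hi : i ∈ C <;> simp [Finset.piecewise, hi]
  rw [Measure.map_apply hmeas (.univ_pi hs), hpre, Measure.prod_prod, Measure.pi_pi,
    Measure.pi_pi, ← Finset.prod_mul_distrib]
  refine Finset.prod_congr rfl fun i _ => ?_
  by_cases hi : i ∈ C <;> simp [Finset.piecewise, hi]

end ProductMeasure

section LogSobolev

variable {Ω : Type*} [MeasurableSpace Ω]

lemma sq_sqrt_integral_sub_sqrt_integral_le {ν : Measure Ω} {f g : Ω → ℝ} (hf : MemLp f 2 ν)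
    (hg : MemLp g 2 ν) :
    (√(∫ x, f x ^ 2 ∂ν) - √(∫ x, g x ^ 2 ∂ν)) ^ 2 ≤ ∫ x, (f x - g x) ^ 2 ∂ν := by
  have cauchySchwarz : ∫ x, f x * g x ∂ν ≤ √(∫ x, f x ^ 2 ∂ν) * √(∫ x, g x ^ 2 ∂ν) := by
    have holder := integral_mul_norm_le_Lp_mul_Lq (μ := ν) (f := f) (g := g)
      Real.HolderConjugate.two_two (by simpa using hf) (by simpa using hg)
    simp only [Real.norm_eq_abs, Real.rpow_two, sq_abs, ← Real.sqrt_eq_rpow] at holder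
    refine (integral_mono (hf.integrable_mul hg) (hf.abs.integrable_mul hg.abs) fun x => ?_).trans
      holder
    exact (le_abs_self _).trans (abs_mul _ _).le
  have expand : ∫ x, (f x - g x) ^ 2 ∂ν
      = ∫ x, f x ^ 2 ∂ν + ∫ x, g x ^ 2 ∂ν - 2 * ∫ x, f x * g x ∂ν := by
    have split := integral_sub (hf.integrable_sq.add hg.integrable_sq)
      ((hf.integrable_mul hg).const_mul 2)
    simp only [Pi.add_apply, Pi.mul_apply, integral_const_mul,
      integral_add hf.integrable_sq hg.integrable_sq] at split
    rw [← split]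
    exact integral_congr_ae (.of_forall fun x => by ring)
  have hf0 := Real.sq_sqrt (integral_nonneg (μ := ν) fun x => sq_nonneg (f x))
  have hg0 := Real.sq_sqrt (integral_nonneg (μ := ν) fun x => sq_nonneg (g x))
  linarith

/-- The entropy functional `Ent_ν(f) = E[f log f] - E[f] log E[f]` of a nonnegative function. -/
noncomputable def entropy (ν : Measure Ω) (f : Ω → ℝ) : ℝ :=
  ∫ x, f x * Real.log (f x) ∂ν - (∫ x, f x ∂ν) * Real.log (∫ x, f x ∂ν)

variable [Finite Ω] [MeasurableSingletonClass Ω]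

lemma entropy_le_variance_div (ν : Measure Ω) [IsProbabilityMeasure ν] {f : Ω → ℝ}
    (hf : 0 ≤ f) : entropy ν f ≤ (∫ x, f x ^ 2 ∂ν - (∫ x, f x ∂ν) ^ 2) / ∫ x, f x ∂ν := by
  unfold entropy
  set m := ∫ x, f x ∂ν with hm
  rcases (integral_nonneg hf : 0 ≤ m).eq_or_lt with hzero | hpos
  · have hfzero := (integral_eq_zero_iff_of_nonneg hf .of_finite).mp (hm.symm.trans hzero.symm)
    have : ∫ x, f x * Real.log (f x) ∂ν = 0 :=
      integral_eq_zero_of_ae (hfzero.mono fun x hx => by simp [hx])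
    rw [← hm] at hzero
    simp [this, ← hzero]
  have pointwise (x : Ω) : f x * Real.log (f x) ≤ f x * Real.log m + (f x ^ 2 / m - f x) := by
    rcases (hf x).eq_or_lt with h | h
    · simp [← h]
    · have := mul_le_mul_of_nonneg_left (Real.log_le_sub_one_of_pos (div_pos h hpos)) h.le
      rw [Real.log_div h.ne' hpos.ne'] at this
      calc f x * Real.log (f x) ≤ f x * Real.log m + f x * (f x / m - 1) := by linarith
        _ = _ := by ring
  have := integral_mono .of_finite .of_finite pointwise (μ := ν)
  rw [integral_add .of_finite .of_finite, integral_sub .of_finite .of_finite, integral_mul_const,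
    integral_div, ← hm] at this
  calc _ ≤ (∫ x, f x ^ 2 ∂ν) / m - m := by linarith
    _ = _ := by field_simp

lemma integral_bool (ν : Measure Bool) [IsFiniteMeasure ν] (f : Bool → ℝ) :
    ∫ b, f b ∂ν = ν.real {true} * f true + ν.real {false} * f false := by
  simp [integral_fintype .of_finite]

lemma real_true_add_real_false (ν : Measure Bool) [IsProbabilityMeasure ν] :
    ν.real {true} + ν.real {false} = 1 := by
  simpa only [integral_const, probReal_univ, smul_eq_mul, mul_one]
    using (integral_bool ν fun _ => 1).symm

lemma entropy_sq_le_bool (ν : Measure Bool) [IsProbabilityMeasure ν] (f : Bool → ℝ) :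
    entropy ν (fun b => f b ^ 2) ≤ (f true - f false) ^ 2 := by
  refine (entropy_le_variance_div ν fun b => sq_nonneg (f b)).trans ?_
  refine div_le_of_le_mul₀ (integral_nonneg fun b => sq_nonneg (f b)) (sq_nonneg _) ?_
  simp only [integral_bool]
  have hq : ν.real {false} = 1 - ν.real {true} := by linarith [real_true_add_real_false ν]
  rw [hq]
  set p := ν.real {true}
  have : (f true - f false) ^ 2 * (p * f true ^ 2 + (1 - p) * f false ^ 2)
      - (p * (f true ^ 2) ^ 2 + (1 - p) * (f false ^ 2) ^ 2
        - (p * f true ^ 2 + (1 - p) * f false ^ 2) ^ 2)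
      = ((f true - f false) * (p * f true - (1 - p) * f false)) ^ 2 := by ring
  linarith [sq_nonneg ((f true - f false) * (p * f true - (1 - p) * f false))]

lemma entropy_sq_ge (ν : Measure Ω) [IsProbabilityMeasure ν] (f : Ω → ℝ) {s : ℝ} (hs : 0 < s) :
    (1 + Real.log s) * ∫ x, f x ^ 2 ∂ν - s * (∫ x, |f x| ∂ν) ^ 2
      ≤ entropy ν fun x => f x ^ 2 := by
  unfold entropy
  set v := ∫ x, f x ^ 2 ∂ν with hv
  set m := ∫ x, |f x| ∂ν with hm
  rcases (integral_nonneg fun x => sq_nonneg (f x) : 0 ≤ v).eq_or_lt with hzero | hpos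
  · have hfzero := (integral_eq_zero_iff_of_nonneg (fun x => sq_nonneg (f x)) .of_finite).mp
      (hv.symm.trans hzero.symm)
    have : ∫ x, f x ^ 2 * Real.log (f x ^ 2) ∂ν = 0 :=
      integral_eq_zero_of_ae (hfzero.mono fun x (hx : f x ^ 2 = 0) => by simp [hx])
    rw [← hv] at hzero
    simp only [this, ← hzero, mul_zero, zero_mul, sub_zero, zero_sub]
    exact neg_nonpos.mpr (mul_nonneg hs.le (sq_nonneg m))
  -- Tangent-line bound at `|t| = √(s v)`, the value for which the errors form a square.
  have pointwise (x : Ω) :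
      (2 + Real.log (s * v)) * f x ^ 2 - 2 * √(s * v) * |f x| ≤ f x ^ 2 * Real.log (f x ^ 2) := by
    rcases eq_or_ne (f x) 0 with h | h
    · simp [h]
    have habs := abs_pos.mpr h
    have hroot : 0 < √(s * v) := by positivity
    have tangent := mul_le_mul_of_nonneg_left (Real.log_le_sub_one_of_pos (div_pos hroot habs))
      (sq_nonneg (|f x|))
    rw [Real.log_div hroot.ne' habs.ne', Real.log_sqrt (by positivity)] at tangent
    have cancel : |f x| ^ 2 * (√(s * v) / |f x| - 1) = √(s * v) * |f x| - |f x| ^ 2 := by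
      field_simp
    rw [cancel] at tangent
    rw [← sq_abs, Real.log_pow, Nat.cast_ofNat]
    linarith
  have integrated := integral_mono .of_finite .of_finite pointwise (μ := ν)
  rw [integral_sub .of_finite .of_finite, integral_const_mul, integral_const_mul, ← hv, ← hm,
    Real.log_mul hs.ne' hpos.ne', Real.sqrt_mul hs.le] at integrated
  have square : (√v - √s * m) ^ 2 = v - 2 * (√s * √v) * m + s * m ^ 2 := by
    calc (√v - √s * m) ^ 2 = √v ^ 2 - 2 * (√s * √v) * m + √s ^ 2 * m ^ 2 := by ring
      _ = _ := by rw [Real.sq_sqrt hpos.le, Real.sq_sqrt hs.le]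
  linarith [sq_nonneg (√v - √s * m)]

end LogSobolev

section Influence

variable {n : ℕ}

/-- The discrete derivative of a function on the Boolean cube in the direction `j`. -/
def discreteDeriv (j : Fin n) (F : (Fin n → Bool) → ℝ) (x : Fin n → Bool) : ℝ :=
  F (Function.update x j true) - F (Function.update x j false)

lemma discreteDeriv_zero_cons (F : (Fin (n + 1) → Bool) → ℝ) (b : Bool) (x : Fin n → Bool) :
    discreteDeriv 0 F (Fin.cons b x) = F (Fin.cons true x) - F (Fin.cons false x) := by
  simp [discreteDeriv, Fin.update_cons_zero]

lemma discreteDeriv_succ_cons (j : Fin n) (F : (Fin (n + 1) → Bool) → ℝ) (b : Bool)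
    (x : Fin n → Bool) :
    discreteDeriv j.succ F (Fin.cons b x) = discreteDeriv j (fun y => F (Fin.cons b y)) x := by
  simp [discreteDeriv, Fin.cons_update]

theorem entropy_sq_le_sum_discreteDeriv (μ : Fin n → Measure Bool)
    [∀ j, IsProbabilityMeasure (μ j)] (F : (Fin n → Bool) → ℝ) :
    entropy (Measure.pi μ) (fun x => F x ^ 2)
      ≤ ∑ j, ∫ x, discreteDeriv j F x ^ 2 ∂Measure.pi μ := by
  induction n with
  | zero => simp [entropy, integral_unique]
  | succ n ih =>
    set ν := Measure.pi fun j : Fin n => μ j.succ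
    set norm : Bool → ℝ := fun b => √(∫ y, F (Fin.cons b y) ^ 2 ∂ν)
    have norm_sq (b : Bool) : ∫ y, F (Fin.cons b y) ^ 2 ∂ν = norm b ^ 2 :=
      (Real.sq_sqrt (integral_nonneg fun y => sq_nonneg _)).symm
    have chainRule : entropy (Measure.pi μ) (fun x => F x ^ 2)
        = ∫ b, entropy ν (fun y => F (Fin.cons b y) ^ 2) ∂μ 0
          + entropy (μ 0) (fun b => norm b ^ 2) := by
      simp only [entropy, integral_pi_succ μ .of_finite, integral_sub .of_finite .of_finite,
        ← norm_sq, ν]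
      ring
    have head : entropy (μ 0) (fun b => norm b ^ 2)
        ≤ ∫ x, discreteDeriv 0 F x ^ 2 ∂Measure.pi μ := by
      refine (entropy_sq_le_bool (μ 0) norm).trans ?_
      simpa only [integral_pi_succ μ .of_finite, discreteDeriv_zero_cons, integral_const,
        probReal_univ, one_smul] using sq_sqrt_integral_sub_sqrt_integral_le (ν := ν)
          (f := fun y => F (Fin.cons true y)) (g := fun y => F (Fin.cons false y))
          .of_discrete .of_discrete
    have tail : ∫ b, entropy ν (fun y => F (Fin.cons b y) ^ 2) ∂μ 0
        ≤ ∑ j : Fin n, ∫ x, discreteDeriv j.succ F x ^ 2 ∂Measure.pi μ := by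
      simp only [integral_pi_succ μ .of_finite, discreteDeriv_succ_cons]
      rw [← integral_finsetSum _ fun _ _ => .of_finite]
      exact integral_mono .of_finite .of_finite fun b => ih _ _
    rw [chainRule, Fin.sum_univ_succ]
    linarith

/-- The average of a function on the Boolean cube over its first coordinate. -/
noncomputable def avgHead (ν : Measure Bool) (F : (Fin (n + 1) → Bool) → ℝ) (y : Fin n → Bool) :
    ℝ :=
  ∫ b, F (Fin.cons b y) ∂ν

lemma discreteDeriv_avgHead (ν : Measure Bool) [IsFiniteMeasure ν] (j : Fin n)
    (F : (Fin (n + 1) → Bool) → ℝ) :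
    discreteDeriv j (avgHead ν F) = avgHead ν (discreteDeriv j.succ F) := by
  ext y
  simp only [avgHead, discreteDeriv_succ_cons]
  simp only [discreteDeriv, integral_sub .of_finite .of_finite, avgHead]

lemma integral_sq_eq_avgHead_add (μ : Fin (n + 1) → Measure Bool)
    [∀ j, IsProbabilityMeasure (μ j)] (F : (Fin (n + 1) → Bool) → ℝ) :
    ∫ x, F x ^ 2 ∂Measure.pi μ
      = ∫ y, avgHead (μ 0) F y ^ 2 ∂Measure.pi (fun j => μ j.succ)
        + ∫ x, (F x - avgHead (μ 0) F (Fin.tail x)) ^ 2 ∂Measure.pi μ := by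
  simp only [integral_pi_succ μ .of_finite, Fin.tail_cons]
  have pythagoras (y : Fin n → Bool) :
      ∑ b, (μ 0).real {b} * F (Fin.cons b y) ^ 2 = avgHead (μ 0) F y ^ 2
        + ∑ b, (μ 0).real {b} * (F (Fin.cons b y) - avgHead (μ 0) F y) ^ 2 := by
    have hfalse : (μ 0).real {false} = 1 - (μ 0).real {true} := by
      linarith [real_true_add_real_false (μ 0)]
    simp only [Fintype.sum_bool, avgHead, integral_bool, hfalse]
    ring
  simp only [integral_fintype (μ := μ 0) .of_finite, smul_eq_mul, ← integral_const_mul]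
  rw [← integral_finsetSum _ fun _ _ => .of_finite, ← integral_finsetSum _ fun _ _ => .of_finite,
    ← integral_add .of_finite .of_finite]
  exact integral_congr_ae (.of_forall pythagoras)

lemma abs_sub_avgHead_le (ν : Measure Bool) [IsProbabilityMeasure ν]
    (F : (Fin (n + 1) → Bool) → ℝ) (x : Fin (n + 1) → Bool) :
    |F x - avgHead ν F (Fin.tail x)| ≤ |discreteDeriv 0 F x| := by
  induction x using Fin.consCases with | _ b y
  have hsum := real_true_add_real_false ν
  have deviation : F (Fin.cons b y) - avgHead ν F y
      = ν.real {!b} * (F (Fin.cons b y) - F (Fin.cons (!b) y)) := by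
    rw [avgHead, integral_bool]
    cases b
    · rw [Bool.not_false]
      linear_combination -F (Fin.cons false y) * hsum
    · rw [Bool.not_true]
      linear_combination -F (Fin.cons true y) * hsum
  have hle : ν.real {!b} ≤ 1 := measureReal_le_one
  rw [Fin.tail_cons, deviation, abs_mul, abs_of_nonneg measureReal_nonneg,
    discreteDeriv_zero_cons]
  refine (mul_le_of_le_one_left (abs_nonneg _) hle).trans_eq ?_
  cases b
  · exact abs_sub_comm _ _
  · rfl

lemma integral_abs_avgHead_le (μ : Fin (n + 1) → Measure Bool)
    [∀ j, IsProbabilityMeasure (μ j)] (F : (Fin (n + 1) → Bool) → ℝ) :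
    ∫ y, |avgHead (μ 0) F y| ∂Measure.pi (fun j => μ j.succ) ≤ ∫ x, |F x| ∂Measure.pi μ := by
  rw [integral_pi_succ μ .of_finite, integral_integral_swap .of_finite]
  exact integral_mono .of_finite .of_finite fun y => abs_integral_le_integral_abs

lemma discreteDeriv_sub (j : Fin n) (F G : (Fin n → Bool) → ℝ) (x : Fin n → Bool) :
    discreteDeriv j (fun y => F y - G y) x = discreteDeriv j F x - discreteDeriv j G x := by
  simp only [discreteDeriv]
  ring

/-- The Kahn–Kalai–Linial inequality for product measures, with a free parameter `s`. -/
theorem mul_variance_le_sum_discreteDeriv (μ : Fin n → Measure Bool)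
    [∀ j, IsProbabilityMeasure (μ j)] (F : (Fin n → Bool) → ℝ) {s : ℝ} (hs : 0 < s) :
    (1 + Real.log s) * (∫ x, F x ^ 2 ∂Measure.pi μ - (∫ x, F x ∂Measure.pi μ) ^ 2)
      ≤ ∑ j, ∫ x, discreteDeriv j F x ^ 2 ∂Measure.pi μ
        + s * ∑ j, (∫ x, |discreteDeriv j F x| ∂Measure.pi μ) ^ 2 := by
  induction n with
  | zero => simp [integral_unique]
  | succ n ih =>
    set A := avgHead (μ 0) F with hA
    set G := fun x => F x - A (Fin.tail x) with hG
    have deriv_zero (x) : discreteDeriv 0 G x = discreteDeriv 0 F x := by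
      simp [hG, discreteDeriv, Fin.tail_update_zero]
    have deriv_succ (j : Fin n) (x) :
        discreteDeriv j.succ G x
          = discreteDeriv j.succ F x - avgHead (μ 0) (discreteDeriv j.succ F) (Fin.tail x) := by
      rw [← discreteDeriv_avgHead, hG, discreteDeriv_sub]
      simp only [discreteDeriv, Fin.tail_update_succ, hA]
    have mean : ∫ x, F x ∂Measure.pi μ = ∫ y, A y ∂Measure.pi fun j => μ j.succ := by
      rw [integral_pi_succ μ .of_finite, integral_integral_swap .of_finite]
      rfl
    have fluctuation := (entropy_sq_ge (Measure.pi μ) G hs).trans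
      (entropy_sq_le_sum_discreteDeriv μ G)
    have hl1_zero : (∫ x, |G x| ∂Measure.pi μ) ^ 2
        ≤ (∫ x, |discreteDeriv 0 F x| ∂Measure.pi μ) ^ 2 := by
      refine pow_le_pow_left₀ (integral_nonneg fun x => abs_nonneg _) ?_ 2
      exact integral_mono .of_finite .of_finite (abs_sub_avgHead_le (μ 0) F)
    have hl1_succ : ∑ j, (∫ y, |discreteDeriv j A y| ∂Measure.pi fun j => μ j.succ) ^ 2
        ≤ ∑ j : Fin n, (∫ x, |discreteDeriv j.succ F x| ∂Measure.pi μ) ^ 2 := by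
      gcongr with j
      rw [discreteDeriv_avgHead]
      exact integral_abs_avgHead_le μ _
    have := ih (fun j => μ j.succ) A
    rw [Fin.sum_univ_succ] at fluctuation
    simp only [deriv_zero, deriv_succ] at fluctuation
    simp only [Fin.sum_univ_succ (n := n), mean, integral_sq_eq_avgHead_add μ F,
      integral_sq_eq_avgHead_add μ (discreteDeriv (Fin.succ _) F),
      Finset.sum_add_distrib, ← discreteDeriv_avgHead, ← hA]
    simp only [← discreteDeriv_avgHead, ← hA] at fluctuation
    linarith [mul_le_mul_of_nonneg_left hl1_zero hs.le, mul_le_mul_of_nonneg_left hl1_succ hs.le]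

end Influence

section Expansion

variable {ι α : Type*}

/-- The inputs from which the coalition `D` can reach `A` by changing only its own coordinates. -/
def expansion (A : Set (ι → α)) (D : Finset ι) : Set (ι → α) :=
  {x | ∃ y ∈ A, ∀ j ∉ D, y j = x j}

lemma expansion_mono (A : Set (ι → α)) {D E : Finset ι} (h : D ⊆ E) :
    expansion A D ⊆ expansion A E :=
  fun _ ⟨y, hy, hyx⟩ => ⟨y, hy, fun j hj => hyx j fun hD => hj (h hD)⟩

lemma subset_expansion (A : Set (ι → α)) (D : Finset ι) : A ⊆ expansion A D :=
  fun x hx => ⟨x, hx, fun _ _ => rfl⟩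

lemma expansion_empty (A : Set (ι → α)) : expansion A ∅ = A := by
  refine (subset_expansion A ∅).antisymm' ?_
  rintro x ⟨y, hy, hyx⟩
  rwa [← funext fun j => hyx j (Finset.notMem_empty j)]

lemma expansion_union [DecidableEq ι] (A : Set (ι → α)) (D E : Finset ι) :
    expansion A (D ∪ E) = expansion (expansion A D) E := by
  ext x
  constructor
  · rintro ⟨y, hy, hyx⟩
    refine ⟨E.piecewise y x, ⟨y, hy, fun j hj => ?_⟩, fun j hj => by simp [hj]⟩
    by_cases hE : j ∈ E
    · simp [hE]
    · simp [hE, hyx j (by simp [hj, hE])]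
  · rintro ⟨z, ⟨y, hy, hyz⟩, hzx⟩
    refine ⟨y, hy, fun j hj => ?_⟩
    rw [Finset.mem_union, not_or] at hj
    rw [hyz j hj.1, hzx j hj.2]

lemma exists_update_mem_iff_mem_expansion_singleton [DecidableEq ι] {A : Set (ι → α)} {j : ι}
    {x : ι → α} : (∃ b, Function.update x j b ∈ A) ↔ x ∈ expansion A {j} := by
  constructor
  · rintro ⟨b, hb⟩
    exact ⟨_, hb, fun i hi => Function.update_of_ne (by simpa using hi) _ _⟩
  · rintro ⟨y, hy, hyx⟩
    refine ⟨y j, ?_⟩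
    have : Function.update x j (y j) = y :=
      Function.update_eq_iff.mpr ⟨rfl, fun i hi => (hyx i (by simpa using hi)).symm⟩
    rwa [this]

end Expansion

section Gain

lemma integral_pi_update {ι α : Type*} [Fintype ι] [DecidableEq ι] [MeasurableSpace α] [Finite α]
    [MeasurableSingletonClass α] (μ : ι → Measure α) [∀ j, IsProbabilityMeasure (μ j)] (j : ι)
    (F : (ι → α) → ℝ) :
    ∫ x, F x ∂Measure.pi μ = ∫ x, ∫ b, F (Function.update x j b) ∂μ j ∂Measure.pi μ := by
  have resample := measurePreserving_piecewise {j} μ μ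
  rw [Finset.piecewise_same] at resample
  simp only [Finset.piecewise_singleton] at resample
  conv_lhs => rw [← resample.map_eq]
  rw [integral_map resample.aemeasurable .of_discrete, integral_prod _ .of_finite]
  refine integral_congr_ae (.of_forall fun x => ?_)
  have marginal := measurePreserving_eval μ j
  beta_reduce
  conv_rhs => rw [← marginal.map_eq]
  rw [integral_map marginal.aemeasurable .of_discrete]

variable {n : ℕ} {μ : Fin n → Measure Bool} [∀ j, IsProbabilityMeasure (μ j)]

lemma mul_integral_abs_discreteDeriv_le {δ : ℝ} (hδ : ∀ j b, δ ≤ (μ j).real {b})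
    (A : Set (Fin n → Bool)) (j : Fin n) :
    δ * ∫ x, |discreteDeriv j (A.indicator 1) x| ∂Measure.pi μ
      ≤ (Measure.pi μ).real (expansion A {j}) - (Measure.pi μ).real A := by
  rw [← integral_indicator_one (.of_discrete : MeasurableSet A),
    ← integral_indicator_one (.of_discrete : MeasurableSet (expansion A {j})),
    integral_pi_update μ j (A.indicator 1), ← integral_const_mul,
    ← integral_sub .of_finite .of_finite]
  refine integral_mono .of_finite .of_finite fun x => ?_
  classical
  have hsum := real_true_add_real_false (μ j)
  have htrue := hδ j true
  have hfalse := hδ j false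
  have hmem := exists_update_mem_iff_mem_expansion_singleton (A := A) (j := j) (x := x)
  simp only [Bool.exists_bool] at hmem
  simp only [integral_bool, discreteDeriv, Set.indicator_apply, ← hmem, Pi.one_apply]
  by_cases ht : Function.update x j true ∈ A <;> by_cases hf : Function.update x j false ∈ A <;>
    simp only [ht, hf, or_true, or_false, if_true, if_false, sub_self, zero_sub, abs_neg, abs_one,
      abs_zero, sub_zero] <;> linarith

lemma log_mul_variance_le_sum_gain {δ τ : ℝ} (hδ0 : 0 < δ) (hτ : 0 < τ)
    (hδ : ∀ j b, δ ≤ (μ j).real {b}) (A : Set (Fin n → Bool))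
    (hgain : ∀ j, (Measure.pi μ).real (expansion A {j}) - (Measure.pi μ).real A ≤ τ) :
    δ * Real.log (δ / τ) * ((Measure.pi μ).real A * (1 - (Measure.pi μ).real A))
      ≤ 2 * ∑ j, ((Measure.pi μ).real (expansion A {j}) - (Measure.pi μ).real A) := by
  set p := (Measure.pi μ).real A
  set influence : Fin n → ℝ := fun j => ∫ x, |discreteDeriv j (A.indicator 1) x| ∂Measure.pi μ
  have influence_le (j) := mul_integral_abs_discreteDeriv_le hδ A j
  have sq_eq (j) : ∫ x, discreteDeriv j (A.indicator 1) x ^ 2 ∂Measure.pi μ = influence j := by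
    refine integral_congr_ae (.of_forall fun x => ?_)
    classical
    simp only [discreteDeriv, Set.indicator_apply, Pi.one_apply]
    split_ifs <;> norm_num
  have mean : ∫ x, A.indicator 1 x ∂Measure.pi μ = p := integral_indicator_one .of_discrete
  have mean_sq : ∫ x, A.indicator 1 x ^ 2 ∂Measure.pi μ = p := by
    rw [← mean]
    refine integral_congr_ae (.of_forall fun x => ?_)
    by_cases hx : x ∈ A <;> simp [hx]
  have kkl := mul_variance_le_sum_discreteDeriv μ (A.indicator 1) (div_pos hδ0 hτ)
  rw [mean, mean_sq] at kkl
  simp only [sq_eq] at kkl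
  have low_influence : δ / τ * ∑ j, influence j ^ 2 ≤ ∑ j, influence j := by
    rw [Finset.mul_sum]
    refine Finset.sum_le_sum fun j _ => ?_
    have hsmall : δ / τ * influence j ≤ 1 := by
      rw [div_mul_eq_mul_div, div_le_one hτ]
      exact (influence_le j).trans (hgain j)
    calc δ / τ * influence j ^ 2 = δ / τ * influence j * influence j := by ring
      _ ≤ influence j := mul_le_of_le_one_left (integral_nonneg fun x => abs_nonneg _) hsmall
  have hvar : 0 ≤ p * (1 - p) := mul_nonneg measureReal_nonneg (sub_nonneg.mpr measureReal_le_one)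
  calc δ * Real.log (δ / τ) * (p * (1 - p)) ≤ δ * (2 * ∑ j, influence j) := by
        rw [mul_assoc]
        exact mul_le_mul_of_nonneg_left (by linear_combination kkl + low_influence + hvar) hδ0.le
    _ = 2 * ∑ j, δ * influence j := by rw [← Finset.mul_sum]; ring
    _ ≤ _ := mul_le_mul_of_nonneg_left (Finset.sum_le_sum fun j _ => influence_le j) zero_le_two

end Gain

section RandomCoalition

variable {n : ℕ}

/-- The union of two independent random coalitions. A random coalition is encoded throughout by its
distribution, a probability measure on `Finset (Fin n)`. -/
noncomputable def unionProd (ρ σ : Measure (Finset (Fin n))) : Measure (Finset (Fin n)) :=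
  (ρ.prod σ).map fun p => p.1 ∪ p.2

instance (ρ σ : Measure (Finset (Fin n))) [IsProbabilityMeasure ρ] [IsProbabilityMeasure σ] :
    IsProbabilityMeasure (unionProd ρ σ) :=
  Measure.isProbabilityMeasure_map .of_discrete

/-- The union of `k` independent copies of a random coalition. -/
noncomputable def unionPower (ρ : Measure (Finset (Fin n))) : ℕ → Measure (Finset (Fin n))
  | 0 => Measure.dirac ∅
  | k + 1 => unionProd (unionPower ρ k) ρ

instance (ρ : Measure (Finset (Fin n))) [IsProbabilityMeasure ρ] (k : ℕ) :
    IsProbabilityMeasure (unionPower ρ k) := by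
  induction k with
  | zero => exact Measure.dirac.isProbabilityMeasure
  | succ k ih => exact inferInstanceAs (IsProbabilityMeasure (unionProd _ _))

/-- A uniformly random member of a finite family of coalitions. -/
noncomputable def randomMember {m : ℕ} (D : Fin m → Finset (Fin n)) : Measure (Finset (Fin n)) :=
  (ProbabilityTheory.uniformOn Set.univ).map D

instance {m : ℕ} [NeZero m] (D : Fin m → Finset (Fin n)) :
    IsProbabilityMeasure (randomMember D) :=
  Measure.isProbabilityMeasure_map .of_discrete

lemma integral_unionProd (ρ σ : Measure (Finset (Fin n))) [IsProbabilityMeasure ρ]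
    [IsProbabilityMeasure σ] (F : Finset (Fin n) → ℝ) :
    ∫ E, F E ∂unionProd ρ σ = ∫ E, ∫ E', F (E ∪ E') ∂σ ∂ρ := by
  rw [unionProd, integral_map .of_discrete .of_discrete, integral_prod _ .of_finite]

lemma ae_card_unionProd_le {ρ σ : Measure (Finset (Fin n))} [IsProbabilityMeasure ρ]
    [IsProbabilityMeasure σ] {s t : ℕ} (hρ : ∀ᵐ E ∂ρ, E.card ≤ s) (hσ : ∀ᵐ E ∂σ, E.card ≤ t) :
    ∀ᵐ E ∂unionProd ρ σ, E.card ≤ s + t := by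
  rw [unionProd, ae_map_iff .of_discrete .of_discrete]
  filter_upwards [Measure.quasiMeasurePreserving_fst.ae hρ,
    Measure.quasiMeasurePreserving_snd.ae hσ] with p h₁ h₂
  exact (Finset.card_union_le _ _).trans (add_le_add h₁ h₂)

lemma ae_card_unionPower_le {ρ : Measure (Finset (Fin n))} [IsProbabilityMeasure ρ] {s : ℕ}
    (hρ : ∀ᵐ E ∂ρ, E.card ≤ s) (k : ℕ) : ∀ᵐ E ∂unionPower ρ k, E.card ≤ k * s := by
  induction k with
  | zero => simp [unionPower, ae_dirac_eq]
  | succ k ih =>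
    rw [Nat.succ_mul]
    exact ae_card_unionProd_le ih hρ

lemma integral_uniformOn_univ {Ω : Type*} [Fintype Ω] [Nonempty Ω] [MeasurableSpace Ω]
    [MeasurableSingletonClass Ω] (F : Ω → ℝ) :
    ∫ ω, F ω ∂ProbabilityTheory.uniformOn (Set.univ : Set Ω) = (∑ ω, F ω) / Fintype.card Ω := by
  rw [integral_fintype .of_finite, Finset.sum_div]
  refine Finset.sum_congr rfl fun ω _ => ?_
  rw [measureReal_def, ProbabilityTheory.uniformOn_univ]
  simp [div_eq_inv_mul]

lemma integral_randomMember {m : ℕ} [NeZero m] (D : Fin m → Finset (Fin n))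
    (F : Finset (Fin n) → ℝ) : ∫ E, F E ∂randomMember D = (∑ i, F (D i)) / m := by
  rw [randomMember, integral_map .of_discrete .of_discrete, integral_uniformOn_univ,
    Fintype.card_fin]

lemma ae_card_randomMember_le {m s : ℕ} {D : Fin m → Finset (Fin n)} (hD : ∀ i, (D i).card ≤ s) :
    ∀ᵐ E ∂randomMember D, E.card ≤ s := by
  rw [randomMember, ae_map_iff .of_discrete .of_discrete]
  exact .of_forall hD

lemma mul_real_le_unionProd_real {ρ σ : Measure (Finset (Fin n))} [IsProbabilityMeasure ρ]
    [IsProbabilityMeasure σ] {H T : Set (Finset (Fin n))} {a : ℝ}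
    (h : ∀ E ∈ H, a ≤ σ.real {E' | E ∪ E' ∈ T}) : a * ρ.real H ≤ (unionProd ρ σ).real T := by
  have fubini : (unionProd ρ σ).real T = ∫ E, σ.real {E' | E ∪ E' ∈ T} ∂ρ := by
    simp only [← integral_indicator_one (.of_discrete : MeasurableSet _), integral_unionProd]
    rfl
  rw [fubini, mul_comm, ← smul_eq_mul, ← integral_indicator_const _ .of_discrete]
  refine integral_mono .of_finite .of_finite fun E => ?_
  exact Set.indicator_le' h (fun _ _ => measureReal_nonneg) E

lemma card_filter_mod_eq_le (n M u : ℕ) [NeZero M] :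
    (Finset.univ.filter fun j : Fin n => j.val % M = u).card ≤ n / M + 1 := by
  rw [← Finset.card_range (n / M + 1)]
  refine Finset.card_le_card_of_injOn (fun j => j.val / M) (fun j _ => ?_) fun i hi j hj hij => ?_
  · simpa [Nat.lt_succ_iff] using Nat.div_le_div_right j.isLt.le
  · simp only [Finset.coe_filter_univ, Set.mem_ofPred_eq] at hi hj hij
    rw [Fin.ext_iff, ← Nat.div_add_mod i.val M, ← Nat.div_add_mod j.val M, hi, hj, hij]

/-- A uniformly random single player. -/
noncomputable def randomPlayer (n : ℕ) : Measure (Finset (Fin n)) :=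
  randomMember fun j : Fin n => {j}

instance (n : ℕ) [NeZero n] : IsProbabilityMeasure (randomPlayer n) :=
  inferInstanceAs (IsProbabilityMeasure (randomMember _))

/-- A uniformly random residue class of players modulo `M`. -/
noncomputable def randomBlock (n M : ℕ) : Measure (Finset (Fin n)) :=
  randomMember fun u : Fin M => Finset.univ.filter fun j : Fin n => j.val % M = u

instance (n M : ℕ) [NeZero M] : IsProbabilityMeasure (randomBlock n M) :=
  inferInstanceAs (IsProbabilityMeasure (randomMember _))

lemma inv_le_randomBlock_real_mem (M : ℕ) [NeZero M] (j : Fin n) :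
    (M : ℝ)⁻¹ ≤ (randomBlock n M).real {E | j ∈ E} := by
  rw [← integral_indicator_one (.of_discrete : MeasurableSet _), randomBlock, integral_randomMember,
    inv_eq_one_div]
  gcongr
  have hj := Finset.single_le_sum
    (f := fun u : Fin M => {E : Finset (Fin n) | j ∈ E}.indicator (1 : Finset (Fin n) → ℝ)
      (Finset.univ.filter fun i : Fin n => i.val % M = u))
    (fun u _ => Set.indicator_nonneg (fun _ _ => zero_le_one) _)
    (Finset.mem_univ ⟨j.val % M, Nat.mod_lt _ (NeZero.pos M)⟩)
  simpa using hj

lemma le_integral_unionPower_randomPlayer [NeZero n] {G h : Finset (Fin n) → ℝ} {L : ℝ}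
    (hL : 0 ≤ L) (hanti : Antitone h) (hgain : ∀ E, L * h E ≤ ∑ j, (G (E ∪ {j}) - G E)) (m : ℕ) :
    G ∅ + m * (L / n) * ∫ E, h E ∂unionPower (randomPlayer n) m
      ≤ ∫ E, G E ∂unionPower (randomPlayer n) m := by
  have hn : (0 : ℝ) < n := Nat.cast_pos.mpr (NeZero.pos n)
  induction m with
  | zero => simp [unionPower]
  | succ m ih =>
    set ρ := unionPower (randomPlayer n) m
    have integral_succ (F : Finset (Fin n) → ℝ) :
        ∫ E, F E ∂unionPower (randomPlayer n) (m + 1) = ∫ E, (∑ j, F (E ∪ {j})) / n ∂ρ := by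
      rw [unionPower, randomPlayer, integral_unionProd]
      simp only [integral_randomMember]
      rfl
    have weight_le : ∫ E, h E ∂unionPower (randomPlayer n) (m + 1) ≤ ∫ E, h E ∂ρ := by
      rw [integral_succ]
      refine integral_mono .of_finite .of_finite fun E => ?_
      rw [div_le_iff₀' hn]
      calc ∑ j, h (E ∪ {j}) ≤ ∑ _j : Fin n, h E :=
            Finset.sum_le_sum fun j _ => hanti Finset.subset_union_left
        _ = n * h E := by simp
    have increment : ∫ E, G E ∂ρ + L / n * ∫ E, h E ∂ρ
        ≤ ∫ E, G E ∂unionPower (randomPlayer n) (m + 1) := by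
      rw [integral_succ, ← integral_const_mul, ← integral_add .of_finite .of_finite]
      refine integral_mono .of_finite .of_finite fun E => ?_
      have := hgain E
      rw [Finset.sum_sub_distrib, Finset.sum_const, Finset.card_univ, Fintype.card_fin,
        nsmul_eq_mul] at this
      calc G E + L / n * h E = (n * G E + L * h E) / n := by field_simp
        _ ≤ _ := by gcongr; linarith
    have := mul_le_mul_of_nonneg_left weight_le (show 0 ≤ ((m : ℝ) + 1) * (L / n) by positivity)
    push_cast
    linarith

end RandomCoalition

section OneRound

variable {n : ℕ}

/-- Random players that raise the probability of a target event by `1 / K` unless a single further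
player would do so, together with a random block catching that player. -/
noncomputable def stageCoalition (n K Q : ℕ) : Measure (Finset (Fin n)) :=
  unionProd (unionPower (randomPlayer n) (n / (K * Q))) (randomBlock n (K * Q))

/-- The coalition used in each round: `K` stages, each raising the probability by `1 / K`. -/
noncomputable def roundCoalition (n K Q : ℕ) : Measure (Finset (Fin n)) :=
  unionPower (stageCoalition n K Q) K

instance (n K Q : ℕ) [NeZero n] [NeZero K] [NeZero Q] :
    IsProbabilityMeasure (stageCoalition n K Q) :=
  inferInstanceAs (IsProbabilityMeasure (unionProd _ _))

instance (n K Q : ℕ) [NeZero n] [NeZero K] [NeZero Q] :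
    IsProbabilityMeasure (roundCoalition n K Q) :=
  inferInstanceAs (IsProbabilityMeasure (unionPower _ _))

lemma ae_card_roundCoalition_le {K Q : ℕ} [NeZero n] [NeZero K] [NeZero Q] (hKQ : K * Q ≤ n) :
    ∀ᵐ E ∂roundCoalition n K Q, E.card ≤ 3 * (n / Q) := by
  have player : ∀ᵐ E ∂randomPlayer n, E.card ≤ 1 := ae_card_randomMember_le fun j => by simp
  have block : ∀ᵐ E ∂randomBlock n (K * Q), E.card ≤ n / (K * Q) + 1 :=
    ae_card_randomMember_le fun u => card_filter_mod_eq_le n (K * Q) u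
  have hstage : K * (n / (K * Q)) ≤ n / Q := by
    rw [mul_comm K Q, ← Nat.div_div_eq_div_mul]
    exact Nat.mul_div_le _ _
  have hK : K ≤ n / Q := (Nat.le_div_iff_mul_le (NeZero.pos Q)).mpr hKQ
  have hplayers := ae_card_unionPower_le player (n / (K * Q))
  have hcard := ae_card_unionPower_le (ae_card_unionProd_le hplayers block) K
  exact hcard.mono fun E hE => hE.trans (by linarith)

variable {μ : Fin n → Measure Bool} [∀ j, IsProbabilityMeasure (μ j)]

lemma le_sum_gain_of_stuck {K Q : ℕ} [NeZero K] [NeZero Q]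
    (hμ : ∀ j b, (Q : ℝ)⁻¹ ≤ (μ j).real {b}) {η ε : ℝ} (hη : 0 < η) (hε : 0 < ε)
    (hK : 8 * (Q : ℝ) ^ 2 / (η * ε) ≤ Real.log (K / Q)) {B : Set (Fin n → Bool)}
    (hB : η ≤ (Measure.pi μ).real B) (hB' : (Measure.pi μ).real B ≤ 1 - ε)
    (hstuck : ∀ j, (Measure.pi μ).real (expansion B {j}) - (Measure.pi μ).real B ≤ (K : ℝ)⁻¹) :
    4 * Q ≤ ∑ j, ((Measure.pi μ).real (expansion B {j}) - (Measure.pi μ).real B) := by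
  have hQ0 : (0 : ℝ) < Q := Nat.cast_pos.mpr (NeZero.pos Q)
  have hK0 : (0 : ℝ) < K := Nat.cast_pos.mpr (NeZero.pos K)
  have total := log_mul_variance_le_sum_gain (inv_pos.mpr hQ0) (inv_pos.mpr hK0) hμ B hstuck
  rw [inv_div_inv] at total
  have hvar : η * ε ≤ (Measure.pi μ).real B * (1 - (Measure.pi μ).real B) :=
    mul_le_mul hB (by linarith) hε.le measureReal_nonneg
  have hlog : (Q : ℝ)⁻¹ * (8 * (Q : ℝ) ^ 2 / (η * ε)) * (η * ε) = 2 * (4 * Q) := by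
    field_simp
    norm_num
  have : (Q : ℝ)⁻¹ * (8 * (Q : ℝ) ^ 2 / (η * ε)) * (η * ε)
      ≤ (Q : ℝ)⁻¹ * Real.log (K / Q) * ((Measure.pi μ).real B * (1 - (Measure.pi μ).real B)) := by
    have : 0 ≤ Real.log (K / Q) := le_trans (by positivity) hK
    gcongr
  linarith

lemma two_div_le_mul_div {K Q : ℕ} [NeZero n] [NeZero K] [NeZero Q] (hKQ : K * Q ≤ n) :
    2 * (K : ℝ)⁻¹ ≤ (n / (K * Q) : ℕ) * (4 * Q / n) := by
  have hn : (0 : ℝ) < n := Nat.cast_pos.mpr (NeZero.pos n)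
  have hK : (0 : ℝ) < K := Nat.cast_pos.mpr (NeZero.pos K)
  have hM : 0 < K * Q := NeZero.pos _
  have half : n ≤ 2 * (n / (K * Q)) * (K * Q) := by
    have hdiv := Nat.div_add_mod n (K * Q)
    have hmod := Nat.mod_lt n hM
    have := Nat.mul_le_mul_left (K * Q) (Nat.div_pos hKQ hM)
    nlinarith
  have half' : (n : ℝ) ≤ 2 * (n / (K * Q) : ℕ) * (K * Q) := mod_cast half
  rw [← div_eq_mul_inv, mul_div_assoc', div_le_div_iff₀ hK hn]
  linarith

/-- The coalitions which some single further player brings to an expansion of `A` of probability at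
least `t`. -/
def nearTarget (μ : Fin n → Measure Bool) (A : Set (Fin n → Bool)) (t : ℝ) :
    Set (Finset (Fin n)) :=
  {E | ∃ j, t ≤ (Measure.pi μ).real (expansion A (E ∪ {j}))}

lemma monotone_real_expansion (A : Set (Fin n → Bool)) :
    Monotone fun E => (Measure.pi μ).real (expansion A E) :=
  fun _ _ h => measureReal_mono (expansion_mono A h)

lemma isUpperSet_nearTarget (A : Set (Fin n → Bool)) (t : ℝ) : IsUpperSet (nearTarget μ A t) :=
  fun _ _ h ⟨j, hj⟩ =>
    ⟨j, hj.trans (monotone_real_expansion A (Finset.union_subset_union_left h))⟩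

lemma mul_indicator_le_sum_gain {K Q : ℕ} [NeZero n] [NeZero K] [NeZero Q]
    (hμ : ∀ j b, (Q : ℝ)⁻¹ ≤ (μ j).real {b}) {η ε : ℝ} (hη : 0 < η) (hε : 0 < ε)
    (hK : 8 * (Q : ℝ) ^ 2 / (η * ε) ≤ Real.log (K / Q)) {A : Set (Fin n → Bool)}
    (hA : η ≤ (Measure.pi μ).real A) (E : Finset (Fin n)) :
    4 * Q * (nearTarget μ A (min ((Measure.pi μ).real A + (K : ℝ)⁻¹) (1 - ε)))ᶜ.indicator 1 E
      ≤ ∑ j, ((Measure.pi μ).real (expansion A (E ∪ {j}))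
        - (Measure.pi μ).real (expansion A E)) := by
  set t := min ((Measure.pi μ).real A + (K : ℝ)⁻¹) (1 - ε)
  by_cases hE : E ∈ nearTarget μ A t
  · rw [Set.indicator_of_notMem (by simpa using hE), mul_zero]
    exact Finset.sum_nonneg fun j _ =>
      sub_nonneg.mpr (monotone_real_expansion A Finset.subset_union_left)
  have lt_target (j : Fin n) : (Measure.pi μ).real (expansion A (E ∪ {j})) < t :=
    not_le.mp fun h => hE ⟨j, h⟩
  have le_current : (Measure.pi μ).real A ≤ (Measure.pi μ).real (expansion A E) :=
    measureReal_mono (subset_expansion A E)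
  have current_lt : (Measure.pi μ).real (expansion A E) < t :=
    (monotone_real_expansion A Finset.subset_union_left).trans_lt (lt_target 0)
  rw [Set.indicator_of_mem (by simpa using hE), Pi.one_apply, mul_one]
  simp only [expansion_union] at lt_target ⊢
  refine le_sum_gain_of_stuck hμ hη hε hK (hA.trans le_current)
    (current_lt.le.trans (min_le_right _ _)) fun j => ?_
  linarith [lt_target j, min_le_left ((Measure.pi μ).real A + (K : ℝ)⁻¹) (1 - ε)]

lemma inv_le_unionPower_real_nearTarget {K Q : ℕ} [NeZero n] [NeZero K] [NeZero Q]
    (hKQ : K * Q ≤ n) (hμ : ∀ j b, (Q : ℝ)⁻¹ ≤ (μ j).real {b}) {η ε : ℝ} (hη : 0 < η) (hε : 0 < ε)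
    (hK : 8 * (Q : ℝ) ^ 2 / (η * ε) ≤ Real.log (K / Q)) {A : Set (Fin n → Bool)}
    (hA : η ≤ (Measure.pi μ).real A) :
    (3 * (K : ℝ))⁻¹ ≤ (unionPower (randomPlayer n) (n / (K * Q))).real
      (nearTarget μ A (min ((Measure.pi μ).real A + (K : ℝ)⁻¹) (1 - ε))) := by
  set t := min ((Measure.pi μ).real A + (K : ℝ)⁻¹) (1 - ε)
  set ρ := unionPower (randomPlayer n) (n / (K * Q))
  set near := nearTarget μ A t
  have anti : Antitone (nearᶜ.indicator (1 : Finset (Fin n) → ℝ)) := fun E E' h => by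
    refine Set.indicator_apply_le' (fun hE' => ?_)
      fun _ => Set.indicator_nonneg (fun _ _ => zero_le_one) E
    have hE : E ∈ nearᶜ := fun hE => hE' (isUpperSet_nearTarget A t h hE)
    rw [Set.indicator_of_mem hE]
    rfl
  have growth := le_integral_unionPower_randomPlayer
    (G := fun E => (Measure.pi μ).real (expansion A E)) (L := 4 * Q) (by positivity) anti
    (mul_indicator_le_sum_gain hμ hη hε hK hA) (n / (K * Q))
  rw [expansion_empty, integral_indicator_one .of_discrete, probReal_compl_eq_one_sub .of_discrete]
    at growth
  have bound : ∫ E, (Measure.pi μ).real (expansion A E) ∂ρ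
      ≤ (Measure.pi μ).real A + (K : ℝ)⁻¹ + ρ.real near := by
    have pointwise (E : Finset (Fin n)) : (Measure.pi μ).real (expansion A E)
        ≤ (Measure.pi μ).real A + (K : ℝ)⁻¹ + near.indicator 1 E := by
      by_cases hE : E ∈ near
      · rw [Set.indicator_of_mem hE, Pi.one_apply]
        linarith [measureReal_le_one (μ := Measure.pi μ) (s := expansion A E),
          measureReal_nonneg (μ := Measure.pi μ) (s := A),
          inv_nonneg.mpr (K.cast_nonneg (α := ℝ))]
      · have lt_target : _ < t := not_le.mp fun h => hE ⟨0, h⟩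
        rw [Set.indicator_of_notMem hE, add_zero]
        exact ((monotone_real_expansion A Finset.subset_union_left).trans lt_target.le).trans
          (min_le_left _ _)
    refine (integral_mono .of_finite .of_finite pointwise).trans_eq ?_
    rw [integral_add .of_finite .of_finite, integral_indicator_one .of_discrete, integral_const,
      probReal_univ, one_smul]
  have hK0 : (0 : ℝ) < (K : ℝ)⁻¹ := inv_pos.mpr (Nat.cast_pos.mpr (NeZero.pos K))
  have near_le : ρ.real near ≤ 1 := measureReal_le_one
  have := mul_le_mul_of_nonneg_right (two_div_le_mul_div hKQ) (sub_nonneg.mpr near_le)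
  have hK1 : (K : ℝ)⁻¹ ≤ 1 := Nat.cast_inv_le_one K
  rw [mul_inv]
  nlinarith

lemma inv_le_stageCoalition_real {K Q : ℕ} [NeZero n] [NeZero K] [NeZero Q]
    (hKQ : K * Q ≤ n) (hμ : ∀ j b, (Q : ℝ)⁻¹ ≤ (μ j).real {b}) {η ε : ℝ} (hη : 0 < η) (hε : 0 < ε)
    (hK : 8 * (Q : ℝ) ^ 2 / (η * ε) ≤ Real.log (K / Q)) {A : Set (Fin n → Bool)}
    (hA : η ≤ (Measure.pi μ).real A) :
    (3 * (K : ℝ) ^ 2 * Q)⁻¹ ≤ (stageCoalition n K Q).real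
      {E | min ((Measure.pi μ).real A + (K : ℝ)⁻¹) (1 - ε)
        ≤ (Measure.pi μ).real (expansion A E)} := by
  have near := inv_le_unionPower_real_nearTarget hKQ hμ hη hε hK hA
  calc (3 * (K : ℝ) ^ 2 * Q)⁻¹ = ((K * Q : ℕ) : ℝ)⁻¹ * (3 * (K : ℝ))⁻¹ := by
        rw [← mul_inv]
        push_cast
        ring_nf
    _ ≤ ((K * Q : ℕ) : ℝ)⁻¹ * _ := mul_le_mul_of_nonneg_left near (by positivity)
    _ ≤ _ := mul_real_le_unionProd_real ?_
  rintro E ⟨j, hj⟩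
  refine (inv_le_randomBlock_real_mem (K * Q) j).trans (measureReal_mono fun E' hE' => ?_)
  exact hj.trans <| monotone_real_expansion A <|
    Finset.union_subset_union_right (Finset.singleton_subset_iff.mpr hE')

lemma pow_le_unionPower_real {ρ : Measure (Finset (Fin n))} [IsProbabilityMeasure ρ]
    {η τ t κ : ℝ} (hτ : 0 ≤ τ) (hκ : 0 ≤ κ)
    (hρ : ∀ A, η ≤ (Measure.pi μ).real A → κ ≤ ρ.real
      {E | min ((Measure.pi μ).real A + τ) t ≤ (Measure.pi μ).real (expansion A E)})
    {A : Set (Fin n → Bool)} (hA : η ≤ (Measure.pi μ).real A) (k : ℕ) :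
    κ ^ k ≤ (unionPower ρ k).real
      {E | min ((Measure.pi μ).real A + k * τ) t ≤ (Measure.pi μ).real (expansion A E)} := by
  induction k with
  | zero => simp [unionPower, expansion_empty, measureReal_def]
  | succ k ih =>
    rw [pow_succ']
    refine (mul_le_mul_of_nonneg_left ih hκ).trans (mul_real_le_unionProd_real fun E hE => ?_)
    refine (hρ (expansion A E) (hA.trans (measureReal_mono (subset_expansion A E)))).trans
      (measureReal_mono fun E' hE' => ?_)
    rw [Set.mem_ofPred_eq] at hE hE'
    rw [Set.mem_ofPred_eq, Set.mem_ofPred_eq, expansion_union]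
    refine le_trans ?_ hE'
    push_cast
    grind

lemma pow_le_roundCoalition_real {K Q : ℕ} [NeZero n] [NeZero K] [NeZero Q]
    (hKQ : K * Q ≤ n) (hμ : ∀ j b, (Q : ℝ)⁻¹ ≤ (μ j).real {b}) {η ε : ℝ} (hη : 0 < η) (hε : 0 < ε)
    (hK : 8 * (Q : ℝ) ^ 2 / (η * ε) ≤ Real.log (K / Q)) {A : Set (Fin n → Bool)}
    (hA : η ≤ (Measure.pi μ).real A) :
    (3 * (K : ℝ) ^ 2 * Q)⁻¹ ^ K ≤ (roundCoalition n K Q).real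
      {E | 1 - ε ≤ (Measure.pi μ).real (expansion A E)} := by
  refine (pow_le_unionPower_real (by positivity) (by positivity)
    (fun A => inv_le_stageCoalition_real hKQ hμ hη hε hK) hA K).trans
    (measureReal_mono fun E hE => ?_)
  refine le_trans ?_ (Set.mem_ofPred_eq ▸ hE)
  rw [mul_inv_cancel₀ (NeZero.ne _)]
  exact le_min (by linarith [measureReal_nonneg (μ := Measure.pi μ) (s := A)]) le_rfl

end OneRound

section Game

variable {n r : ℕ}

/-- The largest value of `F` that the coalition `B` can reach by changing its own bits of `x`. -/
noncomputable def bestResponse (B : Finset (Fin n)) (F : (Fin n → Bool) → ℝ) (x : Fin n → Bool) :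
    ℝ :=
  ⨆ y : {y : Fin n → Bool // ∀ j ∉ B, y j = x j}, F y

lemma le_bestResponse {B : Finset (Fin n)} (F : (Fin n → Bool) → ℝ) {x y : Fin n → Bool}
    (h : ∀ j ∉ B, y j = x j) : F y ≤ bestResponse B F x :=
  le_ciSup (f := fun y : {y : Fin n → Bool // ∀ j ∉ B, y j = x j} => F y)
    (Set.finite_range _).bddAbove ⟨y, h⟩

lemma exists_bestResponse_eq (B : Finset (Fin n)) (F : (Fin n → Bool) → ℝ) (x : Fin n → Bool) :
    ∃ y : Fin n → Bool, (∀ j ∉ B, y j = x j) ∧ F y = bestResponse B F x := by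
  have : Nonempty {y : Fin n → Bool // ∀ j ∉ B, y j = x j} := ⟨x, fun _ _ => rfl⟩
  obtain ⟨y, hy⟩ := exists_eq_ciSup_of_finite
    (f := fun y : {y : Fin n → Bool // ∀ j ∉ B, y j = x j} => F y)
  exact ⟨y, y.2, hy⟩

lemma bestResponse_mono {B B' : Finset (Fin n)} {F G : (Fin n → Bool) → ℝ} (hB : B ⊆ B')
    (hFG : ∀ y, F y ≤ G y) (x : Fin n → Bool) : bestResponse B F x ≤ bestResponse B' G x := by
  obtain ⟨y, hy, hyx⟩ := exists_bestResponse_eq B F x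
  rw [← hyx]
  exact (hFG y).trans (le_bestResponse G fun j hj => hy j fun h => hj (hB h))

/-- The probability of outcome `b` under optimal play by the coalition `B`, by backward recursion on
the number of rounds. -/
noncomputable def gameValue (B : Finset (Fin n)) (b : Bool) : {r : ℕ} →
    (Fin r → Fin n → Measure Bool) → ((Fin r → Fin n → Bool) → Bool) → ℝ
  | 0, _, f => if f Fin.elim0 = b then 1 else 0
  | _ + 1, μs, f => ∫ x, bestResponse B
      (fun y => gameValue B b (fun i => μs i.succ) fun α => f (Fin.cons y α)) x ∂Measure.pi (μs 0)

lemma gameValue_nonneg (B : Finset (Fin n)) (b : Bool) (μs : Fin r → Fin n → Measure Bool)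
    (f : (Fin r → Fin n → Bool) → Bool) : 0 ≤ gameValue B b μs f := by
  induction r with
  | zero =>
    rw [gameValue]
    split_ifs <;> norm_num
  | succ r ih =>
    exact integral_nonneg fun x => (ih _ _).trans (le_bestResponse
      (fun y => gameValue B b (fun i => μs i.succ) fun α => f (Fin.cons y α)) fun _ _ => rfl)

lemma gameValue_le_one (B : Finset (Fin n)) (b : Bool) (μs : Fin r → Fin n → Measure Bool)
    [∀ i j, IsProbabilityMeasure (μs i j)] (f : (Fin r → Fin n → Bool) → Bool) :
    gameValue B b μs f ≤ 1 := by
  induction r with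
  | zero =>
    rw [gameValue]
    split_ifs <;> norm_num
  | succ r ih =>
    rw [gameValue]
    refine (integral_mono (g := fun _ => 1) .of_finite .of_finite fun x => ?_).trans_eq (by simp)
    obtain ⟨y, -, hyx⟩ := exists_bestResponse_eq B (fun y => gameValue B b (fun i => μs i.succ)
      fun α => f (Fin.cons y α)) x
    exact hyx.symm.trans_le (ih _ _)

lemma gameValue_mono {B B' : Finset (Fin n)} (h : B ⊆ B') (b : Bool)
    (μs : Fin r → Fin n → Measure Bool) [∀ i j, IsProbabilityMeasure (μs i j)]
    (f : (Fin r → Fin n → Bool) → Bool) : gameValue B b μs f ≤ gameValue B' b μs f := by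
  induction r with
  | zero => exact le_rfl
  | succ r ih =>
    exact integral_mono .of_finite .of_finite (bestResponse_mono h fun y => ih _ _)

/-- The coalition `E` steers the first round into the event that `D` then wins with probability at
least `c`. -/
lemma mul_real_expansion_le_gameValue (D E : Finset (Fin n)) (b : Bool) (c : ℝ)
    {μs : Fin (r + 1) → Fin n → Measure Bool} [∀ i j, IsProbabilityMeasure (μs i j)]
    (f : (Fin (r + 1) → Fin n → Bool) → Bool) :
    c * (Measure.pi (μs 0)).real (expansion
        {y | c ≤ gameValue D b (fun i => μs i.succ) fun α => f (Fin.cons y α)} E)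
      ≤ gameValue (D ∪ E) b μs f := by
  rw [gameValue, mul_comm, ← smul_eq_mul, ← integral_indicator_const _ .of_discrete]
  refine integral_mono .of_finite .of_finite fun x => Set.indicator_apply_le' ?_ fun _ => ?_
  · rintro ⟨y, hy, hyx⟩
    refine le_trans hy ((gameValue_mono (Finset.subset_union_left (s₂ := E)) b _ _).trans ?_)
    exact le_bestResponse (fun y => gameValue (D ∪ E) b (fun i => μs i.succ)
      fun α => f (Fin.cons y α)) fun j hj => hyx j fun h => hj (Finset.mem_union_right D h)
  · exact (gameValue_nonneg (D ∪ E) b _ _).trans (le_bestResponse (fun y => gameValue (D ∪ E) b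
      (fun i => μs i.succ) fun α => f (Fin.cons y α)) (y := x) fun _ _ => rfl)

end Game

section MultiRound

lemma integral_real_le_add_real {Ω Y : Type*} [Finite Ω] [MeasurableSpace Ω]
    [DiscreteMeasurableSpace Ω] [Finite Y] [MeasurableSpace Y] [DiscreteMeasurableSpace Y]
    (ρ : Measure Ω) [IsProbabilityMeasure ρ] (ν : Measure Y) [IsProbabilityMeasure ν]
    (S : Ω → Set Y) {a : ℝ} (ha : 0 ≤ a) :
    ∫ y, ρ.real {ω | y ∈ S ω} ∂ν ≤ a + ρ.real {ω | a ≤ ν.real (S ω)} := by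
  have fubini : ∫ y, ρ.real {ω | y ∈ S ω} ∂ν = ∫ ω, ν.real (S ω) ∂ρ := by
    simp only [← integral_indicator_one (.of_discrete : MeasurableSet _)]
    exact integral_integral_swap .of_finite
  rw [fubini]
  refine (integral_mono (g := fun ω => a + {ω | a ≤ ν.real (S ω)}.indicator 1 ω) .of_finite
    .of_finite fun ω => ?_).trans_eq ?_
  · by_cases h : a ≤ ν.real (S ω)
    · simpa [h] using measureReal_le_one.trans (le_add_of_nonneg_left ha)
    · simpa [h] using (not_le.mp h).le
  · rw [integral_add .of_finite .of_finite, integral_indicator_one .of_discrete]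
    simp

variable {n r : ℕ}

/-- The number of stages with which a round succeeds on every event of probability at least
`η / 4`. -/
noncomputable def stageCount (Q : ℕ) (ε η : ℝ) : ℕ :=
  ⌈Q * Real.exp (32 * (Q : ℝ) ^ 2 / (η * ε))⌉₊

/-- A lower bound for the probability that the random coalition for `r` rounds biases a protocol. -/
noncomputable def biasProb (Q : ℕ) (ε : ℝ) : ℕ → ℝ
  | 0 => 1
  | r + 1 => biasProb Q ε r / 2 * (3 * (stageCount Q ε (biasProb Q ε r) : ℝ) ^ 2 * Q)⁻¹
      ^ stageCount Q ε (biasProb Q ε r)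

/-- The random coalition that biases every `r`-round protocol. -/
noncomputable def protocolCoalition (n Q : ℕ) (ε : ℝ) : ℕ → Measure (Finset (Fin n))
  | 0 => Measure.dirac ∅
  | r + 1 => unionProd (protocolCoalition n Q ε r)
      (roundCoalition n (stageCount Q ε (biasProb Q ε r)) Q)

instance (Q : ℕ) [NeZero Q] (ε η : ℝ) : NeZero (stageCount Q ε η) :=
  ⟨(Nat.ceil_pos.mpr (mul_pos (Nat.cast_pos.mpr (NeZero.pos Q)) (Real.exp_pos _))).ne'⟩

instance (Q : ℕ) [NeZero n] [NeZero Q] (ε : ℝ) (r : ℕ) :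
    IsProbabilityMeasure (protocolCoalition n Q ε r) := by
  induction r with
  | zero => exact Measure.dirac.isProbabilityMeasure
  | succ r ih => exact inferInstanceAs (IsProbabilityMeasure (unionProd _ _))

lemma biasProb_pos (Q : ℕ) [NeZero Q] (ε : ℝ) (r : ℕ) : 0 < biasProb Q ε r := by
  have hQ : (0 : ℝ) < Q := Nat.cast_pos.mpr (NeZero.pos Q)
  induction r with
  | zero => exact one_pos
  | succ r ih =>
    have hK : (0 : ℝ) < stageCount Q ε (biasProb Q ε r) := Nat.cast_pos.mpr (NeZero.pos _)
    rw [biasProb]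
    positivity

lemma ae_card_protocolCoalition_le {Q : ℕ} [NeZero n] [NeZero Q] {ε : ℝ}
    (hn : ∀ i < r, stageCount Q ε (biasProb Q ε i) * Q ≤ n) :
    ∀ᵐ D ∂protocolCoalition n Q ε r, D.card ≤ r * (3 * (n / Q)) := by
  induction r with
  | zero => simp [protocolCoalition, ae_dirac_eq]
  | succ r ih =>
    rw [Nat.succ_mul]
    exact ae_card_unionProd_le (ih fun i hi => hn i (by lia))
      (ae_card_roundCoalition_le (hn r r.lt_succ_self))

lemma le_log_stageCount_div (Q : ℕ) [NeZero Q] (ε η : ℝ) :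
    8 * (Q : ℝ) ^ 2 / (η / 4 * ε) ≤ Real.log (stageCount Q ε η / Q) := by
  have hQ : (0 : ℝ) < Q := Nat.cast_pos.mpr (NeZero.pos Q)
  have hK : (0 : ℝ) < stageCount Q ε η := Nat.cast_pos.mpr (NeZero.pos _)
  have harg : 8 * (Q : ℝ) ^ 2 / (η / 4 * ε) = 32 * (Q : ℝ) ^ 2 / (η * ε) := by
    rw [div_mul_eq_mul_div, div_div_eq_mul_div]
    ring
  rw [harg, Real.le_log_iff_exp_le (by positivity), le_div_iff₀' hQ]
  exact Nat.le_ceil _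

lemma mul_real_le_protocolCoalition_succ_real {Q : ℕ} [NeZero n] [NeZero Q] {ε : ℝ} (hε : 0 < ε)
    (hn : stageCount Q ε (biasProb Q ε r) * Q ≤ n) {μs : Fin (r + 1) → Fin n → Measure Bool}
    [∀ i j, IsProbabilityMeasure (μs i j)] (hμ : ∀ j b, (Q : ℝ)⁻¹ ≤ (μs 0 j).real {b})
    (f : (Fin (r + 1) → Fin n → Bool) → Bool) (b : Bool) :
    (3 * (stageCount Q ε (biasProb Q ε r) : ℝ) ^ 2 * Q)⁻¹ ^ stageCount Q ε (biasProb Q ε r)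
        * (protocolCoalition n Q ε r).real {D | biasProb Q ε r / 4 ≤ (Measure.pi (μs 0)).real
          {y | 1 - r * ε ≤ gameValue D b (fun i => μs i.succ) fun α => f (Fin.cons y α)}}
      ≤ (protocolCoalition n Q ε (r + 1)).real {D | 1 - (r + 1 : ℕ) * ε ≤ gameValue D b μs f} := by
  refine mul_real_le_unionProd_real fun D hD => ?_
  refine (pow_le_roundCoalition_real hn hμ (div_pos (biasProb_pos Q ε r) four_pos) hε
    (le_log_stageCount_div Q ε _) hD).trans (measureReal_mono fun E hE => ?_)
  refine le_trans ?_ (mul_real_expansion_le_gameValue D E b (1 - r * ε) f)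
  set p := (Measure.pi (μs 0)).real (expansion _ E)
  have hp : 1 - ε ≤ p := hE
  have : r * ε * p ≤ r * ε := mul_le_of_le_one_right (by positivity) measureReal_le_one
  push_cast
  linarith

lemma biasProb_le_protocolCoalition_real {Q : ℕ} [NeZero n] [NeZero Q] {ε : ℝ} (hε : 0 < ε)
    (hn : ∀ i < r, stageCount Q ε (biasProb Q ε i) * Q ≤ n) (μs : Fin r → Fin n → Measure Bool)
    [∀ i j, IsProbabilityMeasure (μs i j)] (hμ : ∀ i j b, (Q : ℝ)⁻¹ ≤ (μs i j).real {b})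
    (f : (Fin r → Fin n → Bool) → Bool) :
    biasProb Q ε r ≤ (protocolCoalition n Q ε r).real {D | 1 - r * ε ≤ gameValue D true μs f}
      + (protocolCoalition n Q ε r).real {D | 1 - r * ε ≤ gameValue D false μs f} := by
  induction r with
  | zero =>
    cases hf : f Fin.elim0 <;> simp [protocolCoalition, biasProb, gameValue, hf, measureReal_def]
  | succ r ih =>
    set η := biasProb Q ε r
    have η_pos : 0 < η := biasProb_pos Q ε r
    set win : Bool → Finset (Fin n) → Set (Fin n → Bool) := fun b D =>
      {y | 1 - r * ε ≤ gameValue D b (fun i => μs i.succ) fun α => f (Fin.cons y α)}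
    have average : η ≤ ∫ y, (protocolCoalition n Q ε r).real {D | y ∈ win true D}
        ∂Measure.pi (μs 0) + ∫ y, (protocolCoalition n Q ε r).real {D | y ∈ win false D}
        ∂Measure.pi (μs 0) := by
      rw [← integral_add .of_finite .of_finite]
      refine le_trans (by simp) (integral_mono (f := fun _ => η) .of_finite .of_finite fun y => ?_)
      exact ih (fun i hi => hn i (by lia)) _ (fun i => hμ i.succ) fun α => f (Fin.cons y α)
    have markov (b : Bool) := integral_real_le_add_real (protocolCoalition n Q ε r)
      (Measure.pi (μs 0)) (win b) (div_pos η_pos four_pos).le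
    have compose := mul_real_le_protocolCoalition_succ_real hε (hn r r.lt_succ_self) (hμ 0) f
    rw [biasProb]
    set κ := (3 * (stageCount Q ε η : ℝ) ^ 2 * Q)⁻¹ ^ stageCount Q ε η
    have hκ : 0 ≤ κ := by positivity
    refine le_trans ?_ (add_le_add (compose true) (compose false))
    rw [← mul_add, mul_comm]
    refine mul_le_mul_of_nonneg_left ?_ hκ
    linarith [markov true, markov false]

end MultiRound

section Noise

open ProbabilityTheory (uniformOn)

variable {n Q r : ℕ}

/-- Overwrites a bit by `false` when `u = 0` and by `true` when `u = 1`. -/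
def overwrite (u : Fin Q) (x : Bool) : Bool :=
  if u.val = 0 then false else if u.val = 1 then true else x

/-- The law of a `μ`-distributed bit that is overwritten by each of the two constants with
probability `1 / Q`. -/
noncomputable def noisy (Q : ℕ) (μ : Measure Bool) : Measure Bool :=
  ((uniformOn (Set.univ : Set (Fin Q))).prod μ).map fun p => overwrite p.1 p.2

instance (Q : ℕ) [NeZero Q] (μ : Measure Bool) [IsProbabilityMeasure μ] :
    IsProbabilityMeasure (noisy Q μ) :=
  Measure.isProbabilityMeasure_map .of_discrete

/-- The players whose bits are overwritten by independent noise. -/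
def overwritten (u : Fin n → Fin Q) : Finset (Fin n) :=
  Finset.univ.filter fun j => (u j).val < 2

/-- The random coalition of the players overwritten in one round. -/
noncomputable def noiseCoalition (n Q : ℕ) : Measure (Finset (Fin n)) :=
  (Measure.pi fun _ : Fin n => uniformOn (Set.univ : Set (Fin Q))).map overwritten

instance (n Q : ℕ) [NeZero Q] : IsProbabilityMeasure (noiseCoalition n Q) :=
  Measure.isProbabilityMeasure_map .of_discrete

lemma inv_le_noisy_real [NeZero Q] (hQ : 2 ≤ Q) (μ : Measure Bool) [IsProbabilityMeasure μ]
    (b : Bool) : (Q : ℝ)⁻¹ ≤ (noisy Q μ).real {b} := by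
  obtain ⟨u, hu⟩ : ∃ u : Fin Q, ∀ x, overwrite u x = b := by
    cases b
    · exact ⟨⟨0, by lia⟩, fun x => rfl⟩
    · exact ⟨⟨1, by lia⟩, fun x => rfl⟩
  have overwritten_mass : ((uniformOn (Set.univ : Set (Fin Q))).prod μ).real ({u} ×ˢ Set.univ)
      = (Q : ℝ)⁻¹ := by
    rw [measureReal_prod_prod, probReal_univ, mul_one, measureReal_def,
      ProbabilityTheory.uniformOn_univ]
    simp
  rw [noisy, map_measureReal_apply .of_discrete .of_discrete, ← overwritten_mass]
  refine measureReal_mono ?_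
  rintro ⟨v, x⟩ ⟨hv, -⟩
  obtain rfl : v = u := hv
  exact hu x

lemma integral_pi_noisy [NeZero Q] (μ : Fin n → Measure Bool) [∀ j, IsProbabilityMeasure (μ j)]
    (F : (Fin n → Bool) → ℝ) :
    ∫ x, F x ∂Measure.pi (fun j => noisy Q (μ j))
      = ∫ u, ∫ x, F (fun j => overwrite (u j) (x j)) ∂Measure.pi μ
        ∂Measure.pi fun _ : Fin n => uniformOn (Set.univ : Set (Fin Q)) := by
  have unzip := measurePreserving_arrowProdEquivProdArrow (Fin Q) Bool (Fin n)
    (fun _ => uniformOn Set.univ) μ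
  have noise_law : Measure.pi (fun j => noisy Q (μ j))
      = (Measure.pi fun j => (uniformOn (Set.univ : Set (Fin Q))).prod (μ j)).map
        fun p j => overwrite (p j).1 (p j).2 :=
    (Measure.pi_map_pi fun _ => .of_discrete).symm
  rw [noise_law, integral_map .of_discrete .of_discrete, integral_integral .of_finite,
    ← unzip.map_eq, integral_map .of_discrete .of_discrete]
  rfl

lemma integral_pi_noisy_le [NeZero Q] (μ : Fin n → Measure Bool)
    [∀ j, IsProbabilityMeasure (μ j)] (F : (Fin n → Bool) → ℝ) :
    ∫ x, F x ∂Measure.pi (fun j => noisy Q (μ j))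
      ≤ ∫ C, ∫ x, bestResponse C F x ∂Measure.pi μ ∂noiseCoalition n Q := by
  rw [integral_pi_noisy, noiseCoalition, integral_map .of_discrete .of_discrete]
  refine integral_mono .of_finite .of_finite fun u => integral_mono .of_finite .of_finite fun x =>
    le_bestResponse F fun j hj => ?_
  have hu : ¬ (u j).val < 2 := by simpa [overwritten] using hj
  rw [overwrite, if_neg (by lia), if_neg (by lia)]

lemma integral_card_noiseCoalition_le [NeZero Q] :
    ∫ C, (C.card : ℝ) ∂noiseCoalition n Q ≤ n * (2 / Q) := by
  have card_eq (u : Fin n → Fin Q) :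
      ((overwritten u).card : ℝ) = ∑ j, if (u j).val < 2 then 1 else 0 := by
    simp [overwritten]
  have marginal (j : Fin n) : ∫ u, (if (u j).val < 2 then 1 else 0 : ℝ)
      ∂Measure.pi (fun _ : Fin n => uniformOn (Set.univ : Set (Fin Q))) ≤ 2 / Q := by
    rw [integral_comp_eval (μ := fun _ : Fin n => uniformOn (Set.univ : Set (Fin Q))) (i := j)
      (f := fun v : Fin Q => if v.val < 2 then (1 : ℝ) else 0) .of_discrete,
      integral_uniformOn_univ, Fintype.card_fin]
    gcongr
    rw [Finset.sum_boole]
    have : (Finset.univ.filter fun v : Fin Q => v.val < 2).card ≤ (Finset.range 2).card :=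
      Finset.card_le_card_of_injOn Fin.val (by simp [Set.MapsTo]) Fin.val_injective.injOn
    exact_mod_cast this
  rw [noiseCoalition, integral_map .of_discrete .of_discrete]
  simp only [card_eq]
  rw [integral_finsetSum _ fun _ _ => .of_finite]
  refine (Finset.sum_le_sum fun j _ => marginal j).trans_eq ?_
  rw [Finset.sum_const, Finset.card_univ, Fintype.card_fin, nsmul_eq_mul]

lemma integral_card_unionPower_le {ρ : Measure (Finset (Fin n))} [IsProbabilityMeasure ρ] {s : ℝ}
    (hρ : ∫ C, (C.card : ℝ) ∂ρ ≤ s) (k : ℕ) : ∫ C, (C.card : ℝ) ∂unionPower ρ k ≤ k * s := by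
  induction k with
  | zero => simp [unionPower]
  | succ k ih =>
    calc ∫ C, (C.card : ℝ) ∂unionPower ρ (k + 1)
        = ∫ C, ∫ C', ((C ∪ C').card : ℝ) ∂ρ ∂unionPower ρ k := integral_unionProd _ _ _
      _ ≤ ∫ C, ∫ C', ((C.card : ℝ) + C'.card) ∂ρ ∂unionPower ρ k :=
          integral_mono .of_finite .of_finite fun C => integral_mono .of_finite .of_finite
            fun C' => (Nat.cast_le.mpr (Finset.card_union_le C C')).trans_eq (Nat.cast_add _ _)
      _ = ∫ C, (C.card : ℝ) ∂unionPower ρ k + ∫ C, (C.card : ℝ) ∂ρ := by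
          simp [integral_add .of_finite .of_finite]
      _ ≤ (k + 1 : ℕ) * s := by
          push_cast
          linarith

lemma bestResponse_bestResponse_le (B C : Finset (Fin n)) (F : (Fin n → Bool) → ℝ)
    (x : Fin n → Bool) : bestResponse C (bestResponse B F) x ≤ bestResponse (B ∪ C) F x := by
  obtain ⟨y, hy, hyx⟩ := exists_bestResponse_eq C (bestResponse B F) x
  obtain ⟨z, hz, hzy⟩ := exists_bestResponse_eq B F y
  rw [← hyx, ← hzy]
  refine le_bestResponse F fun j hj => ?_
  rw [Finset.mem_union, not_or] at hj
  rw [hz j hj.1, hy j hj.2]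

lemma bestResponse_integral_le {Ω : Type*} [MeasurableSpace Ω] [DiscreteMeasurableSpace Ω]
    [Finite Ω] (ρ : Measure Ω) [IsProbabilityMeasure ρ] (B : Finset (Fin n))
    (F : Ω → (Fin n → Bool) → ℝ) (x : Fin n → Bool) :
    bestResponse B (fun y => ∫ ω, F ω y ∂ρ) x ≤ ∫ ω, bestResponse B (F ω) x ∂ρ := by
  obtain ⟨y, hy, hyx⟩ := exists_bestResponse_eq B (fun y => ∫ ω, F ω y ∂ρ) x
  rw [← hyx]
  exact integral_mono .of_finite .of_finite fun ω => le_bestResponse (F ω) hy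

/-- A coalition can simulate the noise by adding the overwritten players to its members. -/
lemma gameValue_noisy_le [NeZero Q] (B : Finset (Fin n)) (b : Bool)
    (μs : Fin r → Fin n → Measure Bool) [∀ i j, IsProbabilityMeasure (μs i j)]
    (f : (Fin r → Fin n → Bool) → Bool) :
    gameValue B b (fun i j => noisy Q (μs i j)) f
      ≤ ∫ C, gameValue (B ∪ C) b μs f ∂unionPower (noiseCoalition n Q) r := by
  induction r with
  | zero => simp [unionPower, gameValue]
  | succ r ih =>
    set ρ := unionPower (noiseCoalition n Q) r
    set V : Finset (Fin n) → (Fin n → Bool) → ℝ := fun C y =>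
      gameValue (B ∪ C) b (fun i => μs i.succ) fun α => f (Fin.cons y α)
    have noiseless (C : Finset (Fin n)) (x : Fin n → Bool) : bestResponse C (bestResponse B fun y =>
        gameValue B b (fun i j => noisy Q (μs (Fin.succ i) j)) fun α => f (Fin.cons y α)) x
        ≤ ∫ C', bestResponse (B ∪ (C' ∪ C)) (V (C' ∪ C)) x ∂ρ := by
      refine (bestResponse_bestResponse_le B C _ x).trans ?_
      refine (bestResponse_mono subset_rfl (fun y => ih _ _) x).trans ?_
      refine (bestResponse_integral_le ρ _ V x).trans (integral_mono .of_finite .of_finite fun C' =>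
        bestResponse_mono (by grind) (fun y => gameValue_mono (by grind) b _ _) x)
    calc gameValue B b (fun i j => noisy Q (μs i j)) f
        ≤ ∫ C, ∫ x, bestResponse C (bestResponse B fun y => gameValue B b
            (fun i j => noisy Q (μs (Fin.succ i) j)) fun α => f (Fin.cons y α)) x
            ∂Measure.pi (μs 0) ∂noiseCoalition n Q := integral_pi_noisy_le _ _
      _ ≤ ∫ C, ∫ x, ∫ C', bestResponse (B ∪ (C' ∪ C)) (V (C' ∪ C)) x ∂ρ
            ∂Measure.pi (μs 0) ∂noiseCoalition n Q :=
          integral_mono .of_finite .of_finite fun C =>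
            integral_mono .of_finite .of_finite (noiseless C)
      _ = ∫ C, ∫ C', gameValue (B ∪ (C' ∪ C)) b μs f ∂ρ ∂noiseCoalition n Q :=
          integral_congr_ae (.of_forall fun C => integral_integral_swap .of_finite)
      _ = ∫ C, gameValue (B ∪ C) b μs f ∂unionPower (noiseCoalition n Q) (r + 1) := by
          rw [unionPower, integral_unionProd, integral_integral_swap .of_finite]

end Noise

section Combination

variable {n Q r : ℕ}

lemma exists_card_le_one_sub_le_gameValue_of_inv_le [NeZero n] [NeZero Q] {ε : ℝ} (hε : 0 < ε)
    (hn : ∀ i < r, stageCount Q ε (biasProb Q ε i) * Q ≤ n) (μs : Fin r → Fin n → Measure Bool)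
    [∀ i j, IsProbabilityMeasure (μs i j)] (hμ : ∀ i j b, (Q : ℝ)⁻¹ ≤ (μs i j).real {b})
    (f : (Fin r → Fin n → Bool) → Bool) :
    ∃ (b : Bool) (D : Finset (Fin n)), D.card ≤ r * (3 * (n / Q)) ∧
      1 - r * ε ≤ gameValue D b μs f := by
  by_contra! hcon
  have null (b : Bool) :
      (protocolCoalition n Q ε r).real {D | 1 - r * ε ≤ gameValue D b μs f} = 0 := by
    have large_null := ae_iff.mp (ae_card_protocolCoalition_le (ε := ε) hn)
    rw [measureReal_eq_zero_iff]
    exact measure_mono_null (fun D hD hcard => (hcon b D hcard).not_ge hD) large_null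
  have := biasProb_le_protocolCoalition_real hε hn μs hμ f
  rw [null, null, add_zero] at this
  exact (biasProb_pos Q ε r).not_ge this

lemma exists_card_le_one_sub_le {ρ : Measure (Finset (Fin n))} [IsProbabilityMeasure ρ] {s ε : ℝ}
    (hs : 0 < s) (hε : 0 < ε) (hcard : ∫ C, (C.card : ℝ) ∂ρ ≤ s) {V : Finset (Fin n) → ℝ}
    (hV : ∀ C, V C ≤ 1) (hmean : 1 - ε / 3 ≤ ∫ C, V C ∂ρ) :
    ∃ C : Finset (Fin n), (C.card : ℝ) ≤ 2 * s ∧ 1 - ε ≤ V C := by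
  obtain ⟨C, hC⟩ := exists_le_integral (μ := ρ)
    (f := fun C => (1 - V C) / ε + C.card / (2 * s)) .of_finite
  have cost_lt : (1 - V C) / ε + C.card / (2 * s) < 1 := by
    calc (1 - V C) / ε + C.card / (2 * s)
        ≤ (1 - ∫ C, V C ∂ρ) / ε + (∫ C, (C.card : ℝ) ∂ρ) / (2 * s) := by
          refine hC.trans_eq ?_
          rw [integral_add .of_finite .of_finite, integral_div, integral_div,
            integral_sub .of_finite .of_finite, integral_const, probReal_univ, one_smul]
      _ ≤ (ε / 3) / ε + s / (2 * s) := by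
          gcongr
          linarith
      _ < 1 := by
          field_simp
          norm_num
  have value_nonneg : 0 ≤ (1 - V C) / ε := div_nonneg (sub_nonneg.mpr (hV C)) hε.le
  have card_nonneg : 0 ≤ C.card / (2 * s) := by positivity
  refine ⟨C, ?_, ?_⟩
  · have : C.card / (2 * s) ≤ 1 := by linarith
    rwa [div_le_one (by positivity)] at this
  · have : (1 - V C) / ε ≤ 1 := by linarith
    rw [div_le_one hε] at this
    linarith

lemma exists_card_le_one_sub_le_gameValue [NeZero n] [NeZero r] (hQ : 2 ≤ Q) {ε : ℝ} (hε : 0 < ε)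
    (hn : ∀ i < r, stageCount Q (ε / (3 * r)) (biasProb Q (ε / (3 * r)) i) * Q ≤ n)
    (μs : Fin r → Fin n → Measure Bool) [∀ i j, IsProbabilityMeasure (μs i j)]
    (f : (Fin r → Fin n → Bool) → Bool) :
    ∃ (b : Bool) (B : Finset (Fin n)), (B.card : ℝ) ≤ 7 * (r * (n / Q)) ∧
      1 - ε ≤ gameValue B b μs f := by
  have : NeZero Q := ⟨by lia⟩
  have hn0 : (0 : ℝ) < n := Nat.cast_pos.mpr (NeZero.pos n)
  have hr0 : (0 : ℝ) < r := Nat.cast_pos.mpr (NeZero.pos r)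
  have : (0 : ℝ) < Q := Nat.cast_pos.mpr (NeZero.pos Q)
  obtain ⟨b, D, hD, hvalue⟩ := exists_card_le_one_sub_le_gameValue_of_inv_le (ε := ε / (3 * r))
    (by positivity) hn (fun i j => noisy Q (μs i j)) (fun i j => inv_le_noisy_real hQ (μs i j)) f
  have hmean : 1 - ε / 3 ≤ ∫ C, gameValue (D ∪ C) b μs f ∂unionPower (noiseCoalition n Q) r := by
    refine le_trans ?_ (hvalue.trans (gameValue_noisy_le D b μs f))
    rw [show r * (ε / (3 * r)) = ε / 3 by field_simp]
  obtain ⟨C, hC, hvalueC⟩ := exists_card_le_one_sub_le (by positivity) hε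
    (integral_card_unionPower_le integral_card_noiseCoalition_le r)
    (fun C => gameValue_le_one (D ∪ C) b μs f) hmean
  refine ⟨b, D ∪ C, ?_, hvalueC⟩
  calc ((D ∪ C).card : ℝ) ≤ D.card + C.card := mod_cast Finset.card_union_le D C
    _ ≤ r * (3 * (n / Q)) + 2 * (r * (n * (2 / Q))) := by
      refine add_le_add ((Nat.cast_le.mpr hD).trans ?_) hC
      push_cast
      gcongr
      exact Nat.cast_div_le
    _ = 7 * (r * (n / Q)) := by ring

end Combination

section Strategies

variable {n r : ℕ}

/-- The strategy for one more round that answers the outside bits `x` of the first round by `ys x`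
and then follows `ρ (ys x)`. -/
def consStrategy (B : Finset (Fin n)) (ys : ({j : Fin n // j ∉ B} → Bool) → Fin n → Bool)
    (ρ : (Fin n → Bool) → Strategy n r B) : Strategy n (r + 1) B :=
  fun i => Fin.cases (motive := fun i => (Fin (i.val + 1) → {j : Fin n // j ∉ B} → Bool) →
      Fin n → Bool)
    (fun h => ys (h 0)) (fun k h => ρ (ys (h 0)) k fun m => h m.succ) i

lemma execP_consStrategy {B : Finset (Fin n)}
    {ys : ({j : Fin n // j ∉ B} → Bool) → Fin n → Bool}
    (hys : ∀ x : Fin n → Bool, ∀ j ∉ B, ys (fun k => x k) j = x j)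
    (ρ : (Fin n → Bool) → Strategy n r B) (x : Fin n → Bool) (α : Fin r → Fin n → Bool) :
    execP B (consStrategy B ys ρ) (Fin.cons x α : Fin (r + 1) → Fin n → Bool) =
      (Fin.cons (ys fun k => x k) (execP B (ρ (ys fun k => x k)) α) :
        Fin (r + 1) → Fin n → Bool) := by
  funext i j
  refine Fin.cases ?_ (fun k => ?_) i
  · by_cases hj : j ∈ B
    · simp only [execP, hj, if_true]
      rfl
    · simp only [execP, hj, if_false]
      exact (hys x j hj).symm
  · by_cases hj : j ∈ B
    · simp only [execP, hj, if_true, Fin.cons_succ]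
      rfl
    · simp only [execP, hj, if_false, Fin.cons_succ]

lemma exists_bestResponse_eq_restrict (B : Finset (Fin n)) (F : (Fin n → Bool) → ℝ) :
    ∃ ys : ({j : Fin n // j ∉ B} → Bool) → Fin n → Bool, ∀ x : Fin n → Bool,
      (∀ j ∉ B, ys (fun k => x k) j = x j) ∧ bestResponse B F x ≤ F (ys fun k => x k) := by
  choose y hy hyF using exists_bestResponse_eq B F
  refine ⟨fun x => y fun j => if h : j ∉ B then x ⟨j, h⟩ else false, fun x => ?_⟩
  set x₀ : Fin n → Bool := fun j => if j ∉ B then x j else false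
  have hx₀ : ∀ j ∉ B, x₀ j = x j := fun j hj => if_pos hj
  refine ⟨fun j hj => (hy x₀ j hj).trans (hx₀ j hj), ?_⟩
  rw [← hyF x]
  refine (le_bestResponse F fun j hj => ?_).trans_eq (hyF x₀).symm
  rw [hy x j hj, hx₀ j hj]

lemma toReal_IPi_consStrategy {B : Finset (Fin n)}
    {ys : ({j : Fin n // j ∉ B} → Bool) → Fin n → Bool}
    (hys : ∀ x : Fin n → Bool, ∀ j ∉ B, ys (fun k => x k) j = x j)
    (ρ : (Fin n → Bool) → Strategy n r B) (b : Bool) (μs : Fin (r + 1) → Fin n → Measure Bool)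
    [∀ i j, IsProbabilityMeasure (μs i j)] (f : (Fin (r + 1) → Fin n → Bool) → Bool) :
    (IPi μs f B (consStrategy B ys ρ) b).toReal =
      ∫ x, (IPi (fun i => μs i.succ) (fun α => f (Fin.cons (ys fun k => x k) α)) B
        (ρ (ys fun k => x k)) b).toReal ∂Measure.pi (μs 0) := by
  simp only [IPi, ← measureReal_def, ← integral_indicator_one (.of_discrete : MeasurableSet _)]
  rw [integral_pi_succ (fun i => Measure.pi (μs i)) .of_finite]
  simp only [Set.indicator, Set.mem_ofPred_eq, execP_consStrategy hys, Pi.one_apply]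

lemma toReal_IPi_eq_one (μs : Fin r → Fin n → Measure Bool)
    [∀ i j, IsProbabilityMeasure (μs i j)] {f : (Fin r → Fin n → Bool) → Bool}
    {B : Finset (Fin n)} {π : Strategy n r B} {b : Bool} (h : ∀ α, f (execP B π α) = b) :
    (IPi μs f B π b).toReal = 1 := by
  simp only [IPi, h, Set.ofPred_true, measure_univ, ENNReal.toReal_one]

lemma exists_gameValue_le_toReal_IPi (B : Finset (Fin n)) (b : Bool)
    (μs : Fin r → Fin n → Measure Bool) [∀ i j, IsProbabilityMeasure (μs i j)]
    (f : (Fin r → Fin n → Bool) → Bool) :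
    ∃ π : Strategy n r B, gameValue B b μs f ≤ (IPi μs f B π b).toReal := by
  induction r with
  | zero =>
    refine ⟨fun i => i.elim0, ?_⟩
    rw [gameValue]
    split_ifs with hf
    · exact (toReal_IPi_eq_one μs fun α => (congrArg f (Subsingleton.elim _ _)).trans hf).ge
    · exact ENNReal.toReal_nonneg
  | succ r ih =>
    choose ρ hρ using fun y : Fin n → Bool =>
      ih (fun i => μs i.succ) fun α => f (Fin.cons y α)
    obtain ⟨ys, hys⟩ := exists_bestResponse_eq_restrict B
      fun y => gameValue B b (fun i => μs i.succ) fun α => f (Fin.cons y α)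
    refine ⟨consStrategy B ys ρ, ?_⟩
    rw [gameValue, toReal_IPi_consStrategy fun x => (hys x).1]
    exact integral_mono .of_finite .of_finite fun x => (hys x).2.trans (hρ _)

lemma toReal_IPi_le_IB (μs : Fin r → Fin n → Measure Bool) [∀ i j, IsProbabilityMeasure (μs i j)]
    (f : (Fin r → Fin n → Bool) → Bool) {B : Finset (Fin n)} (π : Strategy n r B) (b : Bool) :
    (IPi μs f B π b).toReal ≤ IB μs f B b :=
  ENNReal.toReal_mono (ne_top_of_le_ne_top ENNReal.one_ne_top (iSup_le fun _ => prob_le_one))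
    (le_iSup (fun π => IPi μs f B π b) π)

lemma gameValue_le_IB (B : Finset (Fin n)) (b : Bool) (μs : Fin r → Fin n → Measure Bool)
    [∀ i j, IsProbabilityMeasure (μs i j)] (f : (Fin r → Fin n → Bool) → Bool) :
    gameValue B b μs f ≤ IB μs f B b := by
  obtain ⟨π, hπ⟩ := exists_gameValue_le_toReal_IPi B b μs f
  exact hπ.trans (toReal_IPi_le_IB μs f π b)

lemma one_le_IB_univ (μs : Fin r → Fin n → Measure Bool) [∀ i j, IsProbabilityMeasure (μs i j)]
    (f : (Fin r → Fin n → Bool) → Bool) : 1 ≤ IB μs f Finset.univ (f fun _ _ => false) := by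
  rw [← toReal_IPi_eq_one μs (B := Finset.univ) (π := fun _ _ _ => false) fun α => ?_]
  · exact toReal_IPi_le_IB μs f _ _
  · congr 1
    funext i j
    exact if_pos (Finset.mem_univ j)

end Strategies

section Numerics

lemma add_one_le_two_rpow {x : ℝ} (hx : 1 ≤ x) : x + 1 ≤ 2 ^ x := by
  have bernoulli := one_add_mul_self_le_rpow_one_add (s := 1) (by norm_num) hx
  norm_num at bernoulli
  linarith

lemma pow_eight_le_two_rpow {x : ℝ} (hx : 64 ≤ x) : x ^ 8 ≤ 2 ^ x := by
  have root_le : x ≤ 2 ^ (x / 8) := by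
    have := add_one_le_two_rpow (x := x / 8 - 5) (by linarith)
    have shift : (2 : ℝ) ^ (x / 8) = 2 ^ (x / 8 - 5) * 2 ^ 5 := by
      rw [← Real.rpow_natCast, ← Real.rpow_add two_pos]
      norm_num
    linarith
  calc x ^ 8 ≤ (2 ^ (x / 8)) ^ 8 := by gcongr
    _ = 2 ^ x := by
      rw [← Real.rpow_mul_natCast zero_le_two]
      norm_num

lemma exp_le_two_rpow_two_mul {x : ℝ} (hx : 0 ≤ x) : Real.exp x ≤ 2 ^ (2 * x) := by
  rw [Real.rpow_def_of_pos two_pos, Real.exp_le_exp]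
  nlinarith [Real.log_two_gt_d9]

variable {Q : ℕ} {Y ε η : ℝ}

lemma stageCount_le_two_rpow (hY : 64 ≤ Y) (hη : 0 < η) (hηY : η⁻¹ ≤ Y) (hε : 0 < ε)
    (hεY : ε⁻¹ ≤ 3 * Y ^ 2) (hQ : Q ≤ 2 * Y) : (stageCount Q ε η : ℝ) ≤ 2 ^ (2 : ℝ) ^ Y := by
  have : 0 < Y := by linarith
  have exponent_le : 32 * (Q : ℝ) ^ 2 / (η * ε) ≤ 384 * Y ^ 5 := by
    calc 32 * (Q : ℝ) ^ 2 / (η * ε) = 32 * (Q : ℝ) ^ 2 * η⁻¹ * ε⁻¹ := by field_simp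
      _ ≤ 32 * (2 * Y) ^ 2 * Y * (3 * Y ^ 2) := by gcongr
      _ = 384 * Y ^ 5 := by ring
  have exp_le : Real.exp (32 * (Q : ℝ) ^ 2 / (η * ε)) ≤ 2 ^ (768 * Y ^ 5) := by
    refine (Real.exp_le_exp.mpr exponent_le).trans
      ((exp_le_two_rpow_two_mul (by positivity)).trans_eq ?_)
    ring_nf
  have pow_le := pow_eight_le_two_rpow hY
  have four_mul_le : 4 * Y ≤ 2 ^ Y := by
    refine le_trans ?_ pow_le
    calc 4 * Y ≤ Y ^ 7 * Y := by
          gcongr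
          linarith [le_self_pow₀ (by linarith : 1 ≤ Y) (by norm_num : 7 ≠ 0)]
      _ = Y ^ 8 := by ring
  have sum_le : Y + 768 * Y ^ 5 ≤ 2 ^ Y := by
    refine le_trans ?_ pow_le
    calc Y + 768 * Y ^ 5 ≤ Y ^ 5 + 768 * Y ^ 5 := by
          gcongr
          exact le_self_pow₀ (by linarith) (by norm_num)
      _ = 769 * Y ^ 5 := by ring
      _ ≤ 64 ^ 3 * Y ^ 5 := by gcongr; norm_num
      _ ≤ Y ^ 3 * Y ^ 5 := by gcongr
      _ = Y ^ 8 := by ring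
  calc (stageCount Q ε η : ℝ) ≤ Q * Real.exp (32 * (Q : ℝ) ^ 2 / (η * ε)) + 1 :=
        (Nat.ceil_lt_add_one (by positivity)).le
    _ ≤ 2 * Y * 2 ^ (768 * Y ^ 5) + 2 * Y * 2 ^ (768 * Y ^ 5) := by
        gcongr
        exact one_le_mul_of_one_le_of_one_le (by linarith)
          (Real.one_le_rpow one_le_two (by positivity))
    _ = 4 * Y * 2 ^ (768 * Y ^ 5) := by ring
    _ ≤ 2 ^ Y * 2 ^ (768 * Y ^ 5) := by gcongr
    _ = 2 ^ (Y + 768 * Y ^ 5) := (Real.rpow_add two_pos _ _).symm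
    _ ≤ 2 ^ (2 : ℝ) ^ Y := Real.rpow_le_rpow_of_exponent_le one_le_two sum_le

lemma le_two_rpow {x : ℝ} (hx : 1 ≤ x) : x ≤ 2 ^ x := by
  linarith [add_one_le_two_rpow hx]

lemma mul_le_two_rpow {K : ℝ} (hY : 64 ≤ Y) (hQ : Q ≤ 2 * Y) (hK : K ≤ 2 ^ (2 : ℝ) ^ Y) :
    K * Q ≤ 2 ^ (2 : ℝ) ^ (2 : ℝ) ^ (2 : ℝ) ^ Y := by
  have hYZ : Y ≤ 2 ^ Y := le_two_rpow (by linarith)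
  set Z : ℝ := 2 ^ Y
  have hZV : Z ≤ 2 ^ Z := le_two_rpow (by linarith)
  set V : ℝ := 2 ^ Z
  have hVW : V ^ 8 ≤ 2 ^ V := pow_eight_le_two_rpow (by linarith)
  set W : ℝ := 2 ^ V
  have : 64 ≤ V := by linarith
  calc K * Q ≤ V * V ^ 2 := by
        gcongr
        nlinarith
    _ = V ^ 3 := by ring
    _ ≤ V ^ 8 := pow_le_pow_right₀ (by linarith) (by norm_num)
    _ ≤ W := hVW
    _ ≤ 2 ^ W := le_two_rpow ((one_le_pow₀ (by linarith)).trans hVW)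

lemma mul_pow_le_two_rpow {K : ℕ} {x : ℝ} (hY : 64 ≤ Y) (hx : x ≤ Y) (hQ : Q ≤ 2 * Y)
    (hK : (K : ℝ) ≤ 2 ^ (2 : ℝ) ^ Y) :
    2 * x * (3 * (K : ℝ) ^ 2 * Q) ^ K ≤ 2 ^ (2 : ℝ) ^ (2 : ℝ) ^ (2 : ℝ) ^ Y := by
  have hYZ : Y ≤ 2 ^ Y := le_two_rpow (by linarith)
  set Z : ℝ := 2 ^ Y
  have hZV : Z ≤ 2 ^ Z := le_two_rpow (by linarith)
  have hVW : ((2 : ℝ) ^ Z) ^ 8 ≤ 2 ^ (2 : ℝ) ^ Z := pow_eight_le_two_rpow (by linarith)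
  set V : ℝ := 2 ^ Z
  have : 64 ≤ V := by linarith
  have base_le : 3 * (K : ℝ) ^ 2 * Q ≤ V ^ 5 := by
    calc 3 * (K : ℝ) ^ 2 * Q ≤ V * V ^ 2 * V ^ 2 := by
          gcongr
          · linarith
          · nlinarith
      _ = V ^ 5 := by ring
  have exponent_le : Z * (2 + 5 * K : ℕ) ≤ 2 ^ V := by
    push_cast
    calc Z * (2 + 5 * K) ≤ V * V ^ 2 := by
          gcongr
          nlinarith
      _ = V ^ 3 := by ring
      _ ≤ V ^ 8 := pow_le_pow_right₀ (by linarith) (by norm_num)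
      _ ≤ 2 ^ V := hVW
  calc 2 * x * (3 * (K : ℝ) ^ 2 * Q) ^ K ≤ V ^ 2 * (V ^ 5) ^ K := by
        gcongr
        nlinarith
    _ = (2 ^ Z) ^ (2 + 5 * K) := by rw [← pow_mul, ← pow_add]
    _ = 2 ^ (Z * (2 + 5 * K : ℕ)) := (Real.rpow_mul_natCast zero_le_two _ _).symm
    _ ≤ 2 ^ (2 : ℝ) ^ V := Real.rpow_le_rpow_of_exponent_le one_le_two exponent_le

end Numerics

section IteratedLog

variable {x : ℝ} {j k m r Q : ℕ} {ε : ℝ}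

lemma one_lt_iterLog (h : j < logStar x) : 1 < iterLog j x :=
  not_le.mp (Nat.notMem_of_lt_sInf h)

lemma two_rpow_iterLog_succ (h : j < logStar x) : 2 ^ iterLog (j + 1) x = iterLog j x :=
  Real.rpow_logb two_pos (by norm_num) (one_pos.trans (one_lt_iterLog h))

lemma two_rpow_iterLog_add_four (h : j + 4 ≤ logStar x) :
    2 ^ (2 : ℝ) ^ (2 : ℝ) ^ (2 : ℝ) ^ iterLog (j + 4) x = iterLog j x := by
  rw [two_rpow_iterLog_succ (by lia), two_rpow_iterLog_succ (by lia),
    two_rpow_iterLog_succ (by lia), two_rpow_iterLog_succ (by lia)]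

lemma iterLog_add_add_le (h : k + m < logStar x) : iterLog (k + m) x + m ≤ iterLog k x := by
  induction m with
  | zero => simp
  | succ m ih =>
    have step := add_one_le_two_rpow (one_lt_iterLog (x := x) (j := k + m + 1) h).le
    rw [two_rpow_iterLog_succ (by lia)] at step
    rw [← add_assoc]
    push_cast
    linarith [ih (by lia)]

lemma iterLog_le_iterLog (hjk : j ≤ k) (h : k < logStar x) : iterLog k x ≤ iterLog j x := by
  obtain ⟨m, rfl⟩ := Nat.exists_eq_add_of_le hjk
  exact (le_add_of_nonneg_right m.cast_nonneg).trans (iterLog_add_add_le h)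

lemma stageCount_le_of_le_iterLog {η : ℝ} (hr : 4 * r < logStar x)
    (h64 : 64 ≤ iterLog (4 * r) x) (hε : 0 < ε) (hεL : ε⁻¹ ≤ 3 * iterLog (4 * r) x ^ 2)
    (hQL : Q ≤ 2 * iterLog (4 * r) x) (hkr : k ≤ 4 * r) (hη : 0 < η) (hηL : η⁻¹ ≤ iterLog k x) :
    (stageCount Q ε η : ℝ) ≤ 2 ^ (2 : ℝ) ^ iterLog k x := by
  have hL := iterLog_le_iterLog hkr hr
  exact stageCount_le_two_rpow (h64.trans hL) hη hηL hε (hεL.trans (by gcongr))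
    (hQL.trans (by gcongr))

lemma inv_biasProb_le_iterLog [NeZero Q] (hr : 4 * r < logStar x) (h64 : 64 ≤ iterLog (4 * r) x)
    (hε : 0 < ε) (hεL : ε⁻¹ ≤ 3 * iterLog (4 * r) x ^ 2) (hQL : Q ≤ 2 * iterLog (4 * r) x)
    (hkj : k + j = r) : (biasProb Q ε k)⁻¹ ≤ iterLog (4 * j) x := by
  induction k generalizing j with
  | zero =>
    obtain rfl : j = r := by lia
    rw [biasProb, inv_one]
    linarith
  | succ k ih =>
    have inv_le := ih (j := j + 1) (by lia)
    have hL : iterLog (4 * r) x ≤ iterLog (4 * (j + 1)) x := iterLog_le_iterLog (by lia) hr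
    have count_le := stageCount_le_of_le_iterLog hr h64 hε hεL hQL (by lia) (biasProb_pos Q ε k)
      inv_le
    rw [biasProb, ← two_rpow_iterLog_add_four (by lia)]
    refine le_trans ?_ (mul_pow_le_two_rpow (h64.trans hL) inv_le
      (hQL.trans (mul_le_mul_of_nonneg_left hL zero_le_two)) count_le)
    rw [mul_inv, inv_div, inv_pow, inv_inv, div_eq_mul_inv]

lemma stageCount_mul_le [NeZero Q] {n : ℕ} (hr : 4 * r < logStar n)
    (h64 : 64 ≤ iterLog (4 * r) n) (hε : 0 < ε) (hεL : ε⁻¹ ≤ 3 * iterLog (4 * r) n ^ 2)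
    (hQL : Q ≤ 2 * iterLog (4 * r) n) (hkr : k < r) :
    stageCount Q ε (biasProb Q ε k) * Q ≤ n := by
  obtain ⟨j, hkj⟩ : ∃ j, k + (j + 1) = r := ⟨r - k - 1, by lia⟩
  have hL : iterLog (4 * r) n ≤ iterLog (4 * (j + 1)) n := iterLog_le_iterLog (by lia) hr
  have count_le := stageCount_le_of_le_iterLog hr h64 hε hεL hQL (by lia) (biasProb_pos Q ε k)
    (inv_biasProb_le_iterLog hr h64 hε hεL hQL hkj)
  rw [← Nat.cast_le (α := ℝ)]
  push_cast
  calc (stageCount Q ε (biasProb Q ε k) : ℝ) * Q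
      ≤ 2 ^ (2 : ℝ) ^ (2 : ℝ) ^ (2 : ℝ) ^ iterLog (4 * (j + 1)) n :=
        mul_le_two_rpow (h64.trans hL) (hQL.trans (by gcongr)) count_le
    _ = iterLog (4 * j) n := two_rpow_iterLog_add_four (by lia)
    _ ≤ n := iterLog_le_iterLog (j := 0) (by lia) (by lia)

end IteratedLog

lemma exists_card_le_one_sub_le_gameValue_of_le_iterLog {ε : ℝ} (hε : 0 < ε) {n r : ℕ}
    (hr : 1 ≤ r) (hrn : 5 * r < logStar n) (hlarge : ε⁻¹ + 64 ≤ iterLog (4 * r) n)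
    (μs : Fin r → Fin n → Measure Bool) [∀ i j, IsProbabilityMeasure (μs i j)]
    (f : (Fin r → Fin n → Bool) → Bool) :
    ∃ (b : Bool) (B : Finset (Fin n)), (B.card : ℝ) ≤ 7 * n * r / iterLog (4 * r) n ∧
      1 - ε ≤ gameValue B b μs f := by
  have hε' : 0 < ε⁻¹ := inv_pos.mpr hε
  have hrL : r ≤ iterLog (4 * r) n := by
    linarith [iterLog_add_add_le (x := n) (k := 4 * r) (m := r) (by lia),
      one_lt_iterLog (x := n) (j := 4 * r + r) (by lia)]
  have hn : (1 : ℝ) < n := one_lt_iterLog (j := 0) (by lia)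
  have : NeZero n := ⟨fun h => by norm_num [h] at hn⟩
  have : NeZero r := ⟨by lia⟩
  set L := iterLog (4 * r) n
  have hL : 0 < L := by linarith
  have hεL : ε⁻¹ ≤ L := by linarith
  have hLQ : L ≤ ⌈L⌉₊ := Nat.le_ceil L
  have hQL : ⌈L⌉₊ ≤ 2 * L := by linarith [Nat.ceil_lt_add_one (a := L) (by linarith)]
  have hQ : 2 ≤ ⌈L⌉₊ := by
    rw [← Nat.cast_le (α := ℝ)]
    push_cast
    linarith
  have : NeZero ⌈L⌉₊ := ⟨by lia⟩
  have hεrL : (ε / (3 * r))⁻¹ ≤ 3 * L ^ 2 := by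
    calc (ε / (3 * r))⁻¹ = 3 * (r * ε⁻¹) := by field_simp
      _ ≤ 3 * (L * L) := by gcongr
      _ = 3 * L ^ 2 := by ring
  obtain ⟨b, B, hB, hvalue⟩ := exists_card_le_one_sub_le_gameValue hQ hε
    (fun i hi => stageCount_mul_le (by lia) (by linarith) (by positivity) hεrL hQL hi) μs f
  refine ⟨b, B, hB.trans ?_, hvalue⟩
  calc 7 * (r * (n / ⌈L⌉₊)) ≤ 7 * (r * (n / L)) := by gcongr
    _ = 7 * n * r / L := by ring

end CoinFlipping

theorem multi_round_biasing_general {ε : ℝ} (hε : 0 < ε) {n r : ℕ} (hr : 1 ≤ r)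
    (hrn : 5 * r < logStar n) (μs : Fin r → Fin n → Measure Bool)
    [∀ i j, IsProbabilityMeasure (μs i j)] (f : (Fin r → Fin n → Bool) → Bool) :
    ∃ (b : Bool) (B : Finset (Fin n)),
      (B.card : ℝ) ≤ (1 / ε + 64) * n * r / iterLog (4 * r) n ∧ 1 - ε ≤ IB μs f B b := by
  have hε' : 0 < ε⁻¹ := inv_pos.mpr hε
  have hL : 0 < iterLog (4 * r) n := one_pos.trans (CoinFlipping.one_lt_iterLog (by lia))
  rw [one_div]
  obtain hsmall | hlarge := lt_or_ge (iterLog (4 * r) n) (ε⁻¹ + 64)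
  · refine ⟨_, Finset.univ, ?_, le_trans (by linarith) (CoinFlipping.one_le_IB_univ μs f)⟩
    rw [Finset.card_fin, le_div_iff₀ hL]
    calc n * iterLog (4 * r) n ≤ n * (ε⁻¹ + 64) := by gcongr
      _ ≤ n * (ε⁻¹ + 64) * r := le_mul_of_one_le_right (by positivity) (mod_cast hr)
      _ = (ε⁻¹ + 64) * n * r := by ring
  · obtain ⟨b, B, hB, hvalue⟩ := CoinFlipping.exists_card_le_one_sub_le_gameValue_of_le_iterLog
      hε hr hrn hlarge μs f
    refine ⟨b, B, hB.trans ?_, hvalue.trans (CoinFlipping.gameValue_le_IB B b μs f)⟩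
    gcongr
    linarith

/-- over any product measure, any `r`-round protocol with `r < (log* n)/5` can be
biased towards some `b` by a coalition of size `O_ε(n·r·4^r / log^{(4r)} n)`. -/
theorem multi_round_biasing :
    ∀ ε : ℝ, 0 < ε → ε ≤ 1/2 →
    ∃ C : ℝ, C > 0 ∧
    ∃ n₀ : ℕ, ∀ n : ℕ, n₀ ≤ n →
    ∀ r : ℕ, 1 ≤ r → (r : ℝ) < (logStar n : ℝ) / 5 →
    ∀ μs : Fin r → Fin n → Measure Bool, (∀ i j, IsProbabilityMeasure (μs i j)) →
    ∀ f : (Fin r → Fin n → Bool) → Bool,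
    ∃ (b : Bool) (B : Finset (Fin n)),
      (B.card : ℝ) ≤ C * n * r * 4 ^ r / iterLog (4 * r) n ∧
      IB μs f B b ≥ 1 - ε := by
  intro ε hε _
  refine ⟨1 / ε + 64, by positivity, 0, fun n _ r hr hrn μs _ f => ?_⟩
  rw [lt_div_iff₀' (by norm_num)] at hrn
  have hrn' : 5 * r < logStar n := mod_cast hrn
  have hL : 0 < iterLog (4 * r) n := one_pos.trans (CoinFlipping.one_lt_iterLog (by lia))
  obtain ⟨b, B, hB, hIB⟩ := multi_round_biasing_general hε hr hrn' μs f
  exact ⟨b, B, hB.trans (div_le_div_of_nonneg_right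
    (le_mul_of_one_le_right (by positivity) (one_le_pow₀ (by norm_num))) hL.le), hIB⟩
end

section
/- For every ε ∈ (0,1/2] and every β ∈ (0,1) there exists n_0 such that for all n ≥ n_0 the following holds: if an (n,r) coin-flipping protocol f : ({0,1}^n)^r → {0,1} over some product probability measure on ({0,1}^n)^r is ε-resilient against all coalitions of size ⌊βn⌋, then r ≥ (log* n)/5. In other words, over any product distribution, Ω(log* n) rounds are necessary for a protocol to be resilient against coalitions of linear size. -/
open MeasureTheory
open scoped ENNReal

/-!
Let every player, in every round, replace its bit by a uniform one with a small probability `η`.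
This costs the adversary only a coalition of about `η * n` players per round, namely those whose
bits were replaced, and now each bit takes either value with probability at least `η / 2`. In a
single round, an event of non-negligible probability can then be made almost certain by a small
coalition: greedily add players of large influence; while there are none, the Kahn–Kalai–Linial
inequality (which follows from the logarithmic Sobolev inequality applied to martingale differences,
as in the proof of Falik and Samorodnitsky) says that the total influence is large, so that a random
player raises the probability appreciably. The random players do not depend on the event and the
greedy ones are so few that they can be guessed up to a partition of the players into `M` blocks, so
one coalition works for a fraction of about `2 ^ (-M)` of all histories of the game.

A coalition that controls the whole protocol is found backwards. If the histories after which the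
goal is reached have probability at least `1 / y`, then there is a coalition to which a fraction
`1 / tower 3 y` of the histories preceding the last round grants control of that round, and these
histories are the goal for the remaining rounds. So a coalition of linear size controls `r` rounds
as soon as `n` exceeds a tower of height `3 * r` over `O(r)`, and `2 * r` further exponentials
absorb the `O(r)`.
-/

namespace CoinFlip

section Weights

variable {Ω Ω' : Type*} [Fintype Ω] [Fintype Ω'] {p : Ω → ℝ} {q : Ω' → ℝ} {F G : Ω → ℝ}
  {s t : Set Ω} {c : ℝ}

/-- The expectation of a random variable `F` on a finite space `Ω` whose points carry the weights
`p`. Distributions are the `p ∈ stdSimplex ℝ Ω`. -/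
def expect (p : Ω → ℝ) : (Ω → ℝ) →ₗ[ℝ] ℝ where
  toFun F := dotProduct p F
  map_add' := dotProduct_add p
  map_smul' c F := dotProduct_smul c p F

lemma expect_apply (p F : Ω → ℝ) : expect p F = ∑ x, p x * F x := rfl

lemma expect_mono (hp : 0 ≤ p) (h : F ≤ G) : expect p F ≤ expect p G :=
  Finset.sum_le_sum fun x _ => mul_le_mul_of_nonneg_left (h x) (hp x)

lemma expect_nonneg (hp : 0 ≤ p) (hF : 0 ≤ F) : 0 ≤ expect p F :=
  Finset.sum_nonneg fun x _ => mul_nonneg (hp x) (hF x)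

lemma abs_expect_le (hp : 0 ≤ p) (F : Ω → ℝ) : |expect p F| ≤ expect p |F| := by
  refine abs_le.2 ⟨?_, expect_mono hp (le_abs_self F)⟩
  rw [← map_neg]
  exact expect_mono hp fun x => neg_abs_le (F x)

lemma expect_const (hp : p ∈ stdSimplex ℝ Ω) (c : ℝ) : expect p (fun _ => c) = c := by
  rw [expect_apply, ← Finset.sum_mul, hp.2, one_mul]

lemma expect_comm (p : Ω → ℝ) (q : Ω' → ℝ) (F : Ω → Ω' → ℝ) :
    expect p (fun x => expect q (F x)) = expect q fun y => expect p fun x => F x y := by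
  simp only [expect_apply, Finset.mul_sum]
  rw [Finset.sum_comm]
  exact Finset.sum_congr rfl fun y _ => Finset.sum_congr rfl fun x _ => by ring

lemma exists_expect_le (hp : p ∈ stdSimplex ℝ Ω) (F : Ω → ℝ) : ∃ x, expect p F ≤ F x := by
  have : Nonempty Ω := by
    by_contra hΩ
    rw [not_nonempty_iff] at hΩ
    simpa using hp.2
  obtain ⟨x, hx⟩ := Finite.exists_max F
  exact ⟨x, (expect_mono hp.1 hx).trans_eq (expect_const hp _)⟩

/-- The probability of the event `s` under the weights `p`. -/
noncomputable def prob (p : Ω → ℝ) (s : Set Ω) : ℝ := expect p (s.indicator 1)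

lemma prob_nonneg (hp : 0 ≤ p) (s : Set Ω) : 0 ≤ prob p s :=
  expect_nonneg hp (Set.indicator_nonneg fun _ _ => zero_le_one)

lemma prob_mono (hp : 0 ≤ p) (h : s ⊆ t) : prob p s ≤ prob p t :=
  expect_mono hp (Set.indicator_le_indicator_of_subset h fun _ => zero_le_one)

lemma prob_univ (hp : p ∈ stdSimplex ℝ Ω) : prob p Set.univ = 1 := by
  rw [prob, Set.indicator_univ]
  exact expect_const hp 1

lemma prob_le_one (hp : p ∈ stdSimplex ℝ Ω) (s : Set Ω) : prob p s ≤ 1 :=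
  (prob_mono hp.1 s.subset_univ).trans_eq (prob_univ hp)

lemma prob_compl (hp : p ∈ stdSimplex ℝ Ω) (s : Set Ω) : prob p sᶜ = 1 - prob p s := by
  rw [prob, Set.indicator_compl, map_sub, ← prob_univ hp, prob, prob, Set.indicator_univ]

lemma exists_half_le_prob_preimage (hp : p ∈ stdSimplex ℝ Ω) (f : Ω → Bool) :
    ∃ b, 1 / 2 ≤ prob p (f ⁻¹' {b}) := by
  have hcompl := prob_compl hp (f ⁻¹' {false})
  rw [← Set.preimage_compl, Bool.compl_singleton, Bool.not_false] at hcompl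
  by_contra! h
  linarith [h true, h false]

lemma nonempty_of_prob_pos (h : 0 < prob p s) : s.Nonempty := by
  rw [Set.nonempty_iff_ne_empty]
  rintro rfl
  simp [prob, ← Pi.zero_def] at h

lemma prob_add_prob_le (hp : p ∈ stdSimplex ℝ Ω) (s t : Set Ω) :
    prob p s + prob p t ≤ prob p (s ∩ t) + 1 := by
  have h := congrArg (expect p) (Set.indicator_union_add_inter (1 : Ω → ℝ) s t)
  simp only [map_add] at h
  have := prob_le_one hp (s ∪ t)
  simp only [prob] at this ⊢
  linarith

lemma mul_prob_le_expect (hp : 0 ≤ p) (hF : 0 ≤ F) (c : ℝ) :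
    c * prob p {x | c ≤ F x} ≤ expect p F := by
  rw [prob, ← smul_eq_mul, ← map_smul]
  refine expect_mono hp fun x => ?_
  by_cases hx : c ≤ F x
  · simp [hx]
  · simpa [hx] using hF x

lemma one_sub_div_le_prob (hp : p ∈ stdSimplex ℝ Ω) (hF : 0 ≤ F) (hc : 0 < c) :
    1 - expect p F / c ≤ prob p {x | F x ≤ c} := by
  have hlt : 1 - prob p {x | c ≤ F x} ≤ prob p {x | F x ≤ c} := by
    rw [← prob_compl hp]
    exact prob_mono hp.1 fun x (hx : ¬c ≤ F x) => (not_le.1 hx).le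
  have hmarkov : prob p {x | c ≤ F x} ≤ expect p F / c := by
    rw [le_div_iff₀' hc]
    exact mul_prob_le_expect hp.1 hF c
  linarith

lemma expect_le_prob_add (hp : p ∈ stdSimplex ℝ Ω) (hF : F ≤ 1) (hc : 0 ≤ c) :
    expect p F ≤ prob p {x | c ≤ F x} + c := by
  rw [prob, ← expect_const hp c, ← map_add, expect_const hp c]
  refine expect_mono hp.1 fun x => ?_
  by_cases hx : c ≤ F x
  · simpa [hx] using (hF x).trans (le_add_of_nonneg_right hc)
  · simpa [hx] using (not_le.1 hx).le

lemma exists_mul_prob_le_prob (hp : p ∈ stdSimplex ℝ Ω) (hq : 0 ≤ q) {g : Set Ω'}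
    {R : Ω → Ω' → Prop} (h : ∀ y ∈ g, c ≤ prob p {x | R x y}) :
    ∃ x, c * prob q g ≤ prob q {y ∈ g | R x y} := by
  obtain ⟨x, hx⟩ := exists_expect_le hp fun x => prob q {y ∈ g | R x y}
  refine ⟨x, le_trans ?_ hx⟩
  unfold prob
  rw [expect_comm, ← smul_eq_mul, ← map_smul]
  refine expect_mono hq fun y => ?_
  by_cases hy : y ∈ g
  · have hRy : (fun x => {y ∈ g | R x y}.indicator (1 : Ω' → ℝ) y) =
        {x | R x y}.indicator 1 := by
      ext x
      by_cases hR : R x y <;> simp [hy, hR]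
    simpa [hy, hRy, prob] using h y hy
  · simp [hy, ← Pi.zero_def]

/-- The uniform distribution on a finite type. -/
noncomputable def uniformWeight (Ω : Type*) [Fintype Ω] : Ω → ℝ :=
  fun _ => (Fintype.card Ω : ℝ)⁻¹

lemma uniformWeight_mem_stdSimplex [Nonempty Ω] : uniformWeight Ω ∈ stdSimplex ℝ Ω :=
  ⟨fun _ => by unfold uniformWeight; positivity, by simp [uniformWeight]⟩

lemma inv_card_le_prob_uniformWeight (hs : s.Nonempty) :
    (Fintype.card Ω : ℝ)⁻¹ ≤ prob (uniformWeight Ω) s := by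
  obtain ⟨x, hx⟩ := hs
  have hnonneg : ∀ y ∈ Finset.univ, 0 ≤ uniformWeight Ω y * s.indicator (1 : Ω → ℝ) y :=
    fun y _ => mul_nonneg (by unfold uniformWeight; positivity)
      (Set.indicator_nonneg (fun _ _ => zero_le_one) _)
  simpa [prob, expect_apply, uniformWeight, hx] using
    Finset.single_le_sum hnonneg (Finset.mem_univ x)

end Weights

section Averaging

variable {ι σ : Type*} [DecidableEq ι] [Fintype σ] {p : σ → ℝ} {F G : (ι → σ) → ℝ} {i j : ι}
  {A : Set ι}

/-- The conditional expectation of `F` given all coordinates but `i`, when coordinate `i` has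
distribution `p`. -/
def avg (p : σ → ℝ) (i : ι) : ((ι → σ) → ℝ) →ₗ[ℝ] (ι → σ) → ℝ where
  toFun F x := expect p fun b => F (Function.update x i b)
  map_add' F G := funext fun x =>
    (expect p).map_add (fun b => F (Function.update x i b)) fun b => G (Function.update x i b)
  map_smul' c F := funext fun x => (expect p).map_smul c fun b => F (Function.update x i b)

lemma avg_apply (p : σ → ℝ) (i : ι) (F : (ι → σ) → ℝ) (x : ι → σ) :
    avg p i F x = expect p fun b => F (Function.update x i b) := rfl

lemma avg_const (hp : p ∈ stdSimplex ℝ σ) (i : ι) (c : ℝ) :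
    avg p i (fun _ => c) = fun _ => c :=
  funext fun _ => expect_const hp c

lemma avg_nonneg (hp : 0 ≤ p) (hF : 0 ≤ F) : 0 ≤ avg p i F :=
  fun _ => expect_nonneg hp fun _ => hF _

lemma avg_le_one (hp : p ∈ stdSimplex ℝ σ) (hF : F ≤ 1) : avg p i F ≤ 1 :=
  fun _ => (expect_mono hp.1 fun _ => hF _).trans_eq (expect_const hp 1)

lemma abs_avg_le (hp : 0 ≤ p) (i : ι) (F : (ι → σ) → ℝ) : |avg p i F| ≤ avg p i |F| :=
  fun x => abs_expect_le hp fun b => F (Function.update x i b)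

lemma avg_comm (p q : σ → ℝ) (F : (ι → σ) → ℝ) (hij : i ≠ j) :
    avg p i (avg q j F) = avg q j (avg p i F) := by
  ext x
  simp only [avg_apply]
  rw [expect_comm]
  simp only [Function.update_comm hij]

lemma avg_mul_of_dependsOn (hG : DependsOn G {i}ᶜ) (p : σ → ℝ) (F : (ι → σ) → ℝ) :
    avg p i (G * F) = G * avg p i F := by
  ext x
  have hGx (b : σ) : G (Function.update x i b) = G x :=
    hG fun j hj => Function.update_of_ne hj _ _
  simp only [avg_apply, Pi.mul_apply, hGx]
  exact (expect p).map_smul (G x) fun b => F (Function.update x i b)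

lemma avg_of_dependsOn (hp : p ∈ stdSimplex ℝ σ) (hG : DependsOn G {i}ᶜ) : avg p i G = G := by
  have h := avg_mul_of_dependsOn hG p 1
  rwa [Pi.one_def, avg_const hp, ← Pi.one_def, mul_one] at h

lemma dependsOn_avg (hF : DependsOn F A) (p : σ → ℝ) (i : ι) : DependsOn (avg p i F) (A \ {i}) := by
  intro x y hxy
  simp only [avg_apply]
  congr 1
  ext b
  refine hF fun j hj => ?_
  obtain rfl | hji := eq_or_ne j i
  · simp
  · simp [hji, hxy j ⟨hj, hji⟩]

lemma dependsOn_avg_compl (p : σ → ℝ) (i : ι) (F : (ι → σ) → ℝ) : DependsOn (avg p i F) {i}ᶜ := by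
  simpa [Set.compl_eq_univ_sdiff] using dependsOn_avg (dependsOn_univ F) p i

end Averaging

/-- The product of the distributions `w i` on `σ`. -/
def prodWeight {ι σ : Type*} [Fintype ι] (w : ι → σ → ℝ) (x : ι → σ) : ℝ := ∏ i, w i (x i)

local notation "𝔼[" w "]" => expect (prodWeight w)
local notation "ℙ[" w "]" => prob (prodWeight w)

section ProductWeights

variable {ι σ : Type*} [Fintype ι] [DecidableEq ι] [Fintype σ] {w : ι → σ → ℝ} {p : σ → ℝ}
  {F : (ι → σ) → ℝ} {i : ι}

lemma prodWeight_mem_stdSimplex (hw : ∀ i, w i ∈ stdSimplex ℝ σ) :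
    prodWeight w ∈ stdSimplex ℝ (ι → σ) := by
  refine ⟨fun x => Finset.prod_nonneg fun i _ => (hw i).1 _, ?_⟩
  have h := Finset.prod_univ_sum (fun _ => Finset.univ) w
  rw [Fintype.piFinset_univ] at h
  simp [prodWeight, ← h, (hw _).2]

lemma expect_prodWeight_snoc {j : ℕ} (w : Fin (j + 1) → σ → ℝ) (F : (Fin (j + 1) → σ) → ℝ) :
    𝔼[w] F = 𝔼[Fin.init w] fun h => expect (w (Fin.last j)) fun a => F (Fin.snoc h a) := by
  simp only [expect_apply, Finset.mul_sum]
  rw [← (Fin.snocEquiv fun _ => σ).sum_comp, Fintype.sum_prod_type_right]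
  refine Finset.sum_congr rfl fun h _ => Finset.sum_congr rfl fun a _ => ?_
  simp [prodWeight, Fin.snocEquiv, Fin.prod_univ_castSucc, Fin.init, mul_assoc]

lemma prob_prodWeight_snoc {j : ℕ} (w : Fin (j + 1) → σ → ℝ) (s : Set (Fin (j + 1) → σ)) :
    ℙ[w] s = 𝔼[Fin.init w] fun h => prob (w (Fin.last j)) {a | Fin.snoc h a ∈ s} :=
  expect_prodWeight_snoc w _

lemma prob_sub_le_prob_prodWeight_snoc {j : ℕ} {w : Fin (j + 1) → σ → ℝ}
    (hw : ∀ i, w i ∈ stdSimplex ℝ σ) {c : ℝ} (hc : 0 ≤ c) (s : Set (Fin (j + 1) → σ)) :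
    ℙ[Fin.init w] {h | 1 - c ≤ prob (w (Fin.last j)) {a | Fin.snoc h a ∈ s}} - c ≤ ℙ[w] s := by
  have hinit : prodWeight (Fin.init w) ∈ stdSimplex ℝ (Fin j → σ) :=
    prodWeight_mem_stdSimplex fun i => hw i.castSucc
  have hmarkov := mul_prob_le_expect hinit.1
    (fun h => prob_nonneg (hw (Fin.last j)).1 {a | Fin.snoc h a ∈ s}) (1 - c)
  rw [← prob_prodWeight_snoc] at hmarkov
  linarith [mul_le_of_le_one_right hc (prob_le_one hinit
    {h | 1 - c ≤ prob (w (Fin.last j)) {a | Fin.snoc h a ∈ s}})]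

lemma prob_prodWeight_snoc_le {j : ℕ} {w : Fin (j + 1) → σ → ℝ} (hw : 0 ≤ w)
    {s : Set (Fin (j + 1) → σ)} {t : σ → Set (Fin j → σ)}
    (hst : ∀ (h : Fin j → σ) (a : σ), (Fin.snoc h a : Fin (j + 1) → σ) ∈ s → h ∈ t a) :
    ℙ[w] s ≤ expect (w (Fin.last j)) fun a => ℙ[Fin.init w] (t a) := by
  simp only [prob]
  rw [expect_prodWeight_snoc, expect_comm]
  refine expect_mono (hw _) fun a => expect_mono
    (fun x => Finset.prod_nonneg fun i _ => hw i.castSucc (x i)) fun h => ?_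
  by_cases hs : (Fin.snoc h a : Fin (j + 1) → σ) ∈ s
  · simp [hs, hst h a hs]
  · rw [Set.indicator_of_notMem hs]
    exact Set.indicator_nonneg (fun _ _ => zero_le_one) h

lemma expect_avg_eq_expect_update (hw : ∑ b, w i b = 1) (p : σ → ℝ) (F : (ι → σ) → ℝ) :
    𝔼[w] (avg p i F) = 𝔼[Function.update w i p] F := by
  have hinv : Function.Involutive
      fun z : (ι → σ) × σ => (Function.update z.1 i z.2, z.1 i) := fun z => by simp
  have hweight (x : ι → σ) (b : σ) :
      prodWeight (Function.update w i p) (Function.update x i b) * w i (x i) =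
        prodWeight w x * p b := by
    simp only [prodWeight]
    rw [← Finset.mul_prod_erase _ _ (Finset.mem_univ i),
      ← Finset.mul_prod_erase (a := i) (f := fun i => w i (x i)) _ (Finset.mem_univ i),
      Finset.prod_congr rfl fun j hj => by
        rw [Function.update_of_ne (Finset.ne_of_mem_erase hj),
          Function.update_of_ne (Finset.ne_of_mem_erase hj)]]
    simp only [Function.update_self]
    ring
  calc 𝔼[w] (avg p i F)
      = ∑ z : (ι → σ) × σ, prodWeight (Function.update w i p) (Function.update z.1 i z.2) *
          F (Function.update z.1 i z.2) * w i (z.1 i) := by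
        simp only [Fintype.sum_prod_type, expect_apply, avg_apply, Finset.mul_sum]
        refine Finset.sum_congr rfl fun x _ => Finset.sum_congr rfl fun b _ => ?_
        linear_combination -F (Function.update x i b) * hweight x b
    _ = ∑ z : (ι → σ) × σ, prodWeight (Function.update w i p) z.1 * F z.1 * w i z.2 :=
        (Equiv.sum_comp hinv.toPerm
          fun z => prodWeight (Function.update w i p) z.1 * F z.1 * w i z.2)
    _ = 𝔼[Function.update w i p] F := by
        simp only [Fintype.sum_prod_type, ← Finset.mul_sum, hw, mul_one, expect_apply]

lemma expect_avg_self (hw : ∑ b, w i b = 1) (F : (ι → σ) → ℝ) :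
    𝔼[w] (avg (w i) i F) = 𝔼[w] F := by
  rw [expect_avg_eq_expect_update hw, Function.update_eq_self]

lemma expect_update_of_dependsOn (hw : ∑ b, w i b = 1) (hp : p ∈ stdSimplex ℝ σ)
    (hF : DependsOn F {i}ᶜ) : 𝔼[Function.update w i p] F = 𝔼[w] F := by
  rw [← expect_avg_eq_expect_update hw, avg_of_dependsOn hp hF]

lemma expect_piecewise_of_dependsOn {w' : ι → σ → ℝ} (hw : ∀ i, w i ∈ stdSimplex ℝ σ)
    (hw' : ∀ i, w' i ∈ stdSimplex ℝ σ) (S : Finset ι) (hF : DependsOn F (S : Set ι)ᶜ) :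
    𝔼[S.piecewise w' w] F = 𝔼[w] F := by
  induction S using Finset.induction_on with
  | empty => rw [Finset.piecewise_empty]
  | insert a S ha ih =>
    rw [Finset.coe_insert] at hF
    have hsum : ∑ b, S.piecewise w' w a b = 1 := by
      rw [Finset.piecewise_eq_of_notMem _ _ _ ha]
      exact (hw a).2
    rw [Finset.piecewise_insert, expect_update_of_dependsOn hsum (hw' a),
      ih (hF.mono (Set.compl_subset_compl.2 (Set.subset_insert _ _)))]
    exact hF.mono (Set.compl_subset_compl.2 (Set.singleton_subset_iff.2 (Set.mem_insert _ _)))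

lemma expect_sub_avg_sq (hw : w i ∈ stdSimplex ℝ σ) (F : (ι → σ) → ℝ) :
    𝔼[w] ((F - avg (w i) i F) ^ 2) = 𝔼[w] (F ^ 2) - 𝔼[w] (avg (w i) i F ^ 2) := by
  have hcross : 𝔼[w] (avg (w i) i F * F) = 𝔼[w] (avg (w i) i F ^ 2) := by
    rw [← expect_avg_self hw.2, avg_mul_of_dependsOn (dependsOn_avg_compl _ _ _), sq]
  rw [show (F - avg (w i) i F) ^ 2 = F ^ 2 - (2 : ℝ) • (avg (w i) i F * F) + avg (w i) i F ^ 2 by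
    ext x; simp only [Pi.add_apply, Pi.sub_apply, Pi.pow_apply, Pi.smul_apply, Pi.mul_apply,
      smul_eq_mul]; ring]
  simp only [map_add, map_sub, map_smul, smul_eq_mul, hcross]
  ring

end ProductWeights

section LogSobolev

variable {Ω : Type*} [Fintype Ω] {p F G : Ω → ℝ}

lemma expect_mul_le_sqrt_mul_sqrt (hp : 0 ≤ p) (F G : Ω → ℝ) :
    expect p (F * G) ≤ √(expect p (F ^ 2)) * √(expect p (G ^ 2)) := by
  have h := Real.sum_mul_le_sqrt_mul_sqrt Finset.univ (fun x => √(p x) * F x) fun x => √(p x) * G x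
  simpa only [expect_apply, Pi.mul_apply, Pi.pow_apply, mul_pow, Real.sq_sqrt (hp _),
    mul_mul_mul_comm (√_) _ (√_), Real.mul_self_sqrt (hp _)] using h

lemma sq_sqrt_expect_sq_sub_le (hp : 0 ≤ p) (F G : Ω → ℝ) :
    (√(expect p (F ^ 2)) - √(expect p (G ^ 2))) ^ 2 ≤ expect p ((F - G) ^ 2) := by
  have hexpand : expect p ((F - G) ^ 2) =
      expect p (F ^ 2) - 2 * expect p (F * G) + expect p (G ^ 2) := by
    rw [show (F - G) ^ 2 = F ^ 2 - (2 : ℝ) • (F * G) + G ^ 2 by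
      ext x; simp only [Pi.add_apply, Pi.sub_apply, Pi.pow_apply, Pi.smul_apply, Pi.mul_apply,
        smul_eq_mul]; ring]
    simp only [map_add, map_sub, map_smul, smul_eq_mul]
  have hF := Real.sq_sqrt (expect_nonneg hp (F := F ^ 2) fun x => sq_nonneg _)
  have hG := Real.sq_sqrt (expect_nonneg hp (F := G ^ 2) fun x => sq_nonneg _)
  rw [hexpand, sub_sq, hF, hG]
  linarith [expect_mul_le_sqrt_mul_sqrt hp F G]

lemma expect_mul_log_le (hp : p ∈ stdSimplex ℝ Ω) (hF : 0 ≤ F) (hm : 0 < expect p F) :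
    expect p (fun x => F x * Real.log (F x)) ≤
      expect p F * Real.log (expect p F) + (expect p (F ^ 2) / expect p F - expect p F) := by
  set m := expect p F with hmF
  have hpointwise (x : Ω) :
      F x * Real.log (F x) ≤ (Real.log m • F + m⁻¹ • F ^ 2 - F) x := by
    simp only [Pi.sub_apply, Pi.add_apply, Pi.smul_apply, Pi.pow_apply, smul_eq_mul]
    obtain hx | hx := (hF x).eq_or_lt
    · simp [← hx]
    · have hlog := Real.log_le_sub_one_of_pos (div_pos hx hm)
      rw [Real.log_div hx.ne' hm.ne'] at hlog
      have := mul_le_mul_of_nonneg_left hlog hx.le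
      rw [div_eq_inv_mul] at this
      linarith
  refine (expect_mono hp.1 hpointwise).trans_eq ?_
  simp only [map_add, map_sub, map_smul, smul_eq_mul, ← hmF]
  ring

lemma expect_sq_mul_log_sq_le {p : Bool → ℝ} (hp : p ∈ stdSimplex ℝ Bool) (f : Bool → ℝ) :
    expect p (fun b => f b ^ 2 * Real.log (f b ^ 2)) ≤
      expect p (f ^ 2) * Real.log (expect p (f ^ 2)) + (f true - f false) ^ 2 := by
  have hf : 0 ≤ f ^ 2 := fun b => sq_nonneg _
  obtain hm | hm := (expect_nonneg hp.1 hf).eq_or_lt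
  · have hsum : ∑ b, p b * (f ^ 2) b = 0 := hm.symm
    have hzero (b : Bool) : p b * f b ^ 2 = 0 :=
      (Finset.sum_eq_zero_iff_of_nonneg fun b _ => mul_nonneg (hp.1 b) (hf b)).1 hsum b
        (Finset.mem_univ b)
    simp only [expect_apply, ← mul_assoc, hzero, ← hm]
    simpa using sq_nonneg _
  · refine (expect_mul_log_le hp hf hm).trans (add_le_add_right ?_ _)
    rw [sub_le_iff_le_add, div_le_iff₀ hm]
    obtain ⟨hp0, hp1⟩ := hp
    have hpf := hp0 false
    have hpt := hp0 true
    rw [Fintype.sum_bool] at hp1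
    simp only [expect_apply, Fintype.sum_bool, Pi.pow_apply] at hpf hpt ⊢
    have hsum : p true = 1 - p false := by linarith
    rw [hsum] at hpt ⊢
    generalize p false = r, f true = s, f false = t at *
    -- The difference of the two sides is `(s - t)² ((1 - r) s - r t)²`.
    nlinarith [mul_nonneg (sq_nonneg (s - t)) (sq_nonneg ((1 - r) * s - r * t))]

end LogSobolev

section Derivative

variable {ι : Type*} [DecidableEq ι] {i j : ι} {F : (ι → Bool) → ℝ}

/-- The discrete derivative of `F` in the coordinate `i`. -/
def diff (i : ι) : ((ι → Bool) → ℝ) →ₗ[ℝ] (ι → Bool) → ℝ where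
  toFun F x := F (Function.update x i true) - F (Function.update x i false)
  map_add' _ _ := funext fun _ => add_sub_add_comm ..
  map_smul' _ _ := funext fun _ => (mul_sub ..).symm

lemma diff_apply (i : ι) (F : (ι → Bool) → ℝ) (x : ι → Bool) :
    diff i F x = F (Function.update x i true) - F (Function.update x i false) := rfl

lemma diff_of_dependsOn (hF : DependsOn F {i}ᶜ) : diff i F = 0 :=
  funext fun x => sub_eq_zero.2 <| hF fun j (hj : j ≠ i) => by simp [hj]

lemma diff_avg_of_ne (hij : i ≠ j) (p : Bool → ℝ) (F : (ι → Bool) → ℝ) :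
    diff i (avg p j F) = avg p j (diff i F) := by
  ext x
  simp only [diff_apply, avg_apply, Function.update_comm hij]
  exact ((expect p).map_sub _ _).symm

lemma diff_avg_self (p : Bool → ℝ) (i : ι) (F : (ι → Bool) → ℝ) : diff i (avg p i F) = 0 :=
  diff_of_dependsOn (dependsOn_avg_compl p i F)

lemma abs_sub_avg_le {p : Bool → ℝ} (hp : p ∈ stdSimplex ℝ Bool) (i : ι) (F : (ι → Bool) → ℝ) :
    |F - avg p i F| ≤ |diff i F| := by
  intro x
  have hconst : F x - avg p i F x = expect p fun b => F x - F (Function.update x i b) := by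
    rw [← Pi.sub_def (fun _ => F x), map_sub, expect_const hp, avg_apply]
  rw [Pi.abs_apply, Pi.sub_apply, hconst, Pi.abs_apply]
  refine (abs_expect_le hp.1 _).trans ?_
  refine (expect_mono hp.1 fun b => ?_).trans_eq (expect_const hp _)
  rw [Pi.abs_apply, diff_apply]
  nth_rw 1 [← Function.update_eq_self i x]
  cases x i <;> cases b <;> simp [abs_sub_comm]

/-- The `L²` norm of `F` in the coordinate `i` alone. -/
noncomputable def rms (p : Bool → ℝ) (i : ι) (F : (ι → Bool) → ℝ) (x : ι → Bool) : ℝ :=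
  √(avg p i (F ^ 2) x)

lemma rms_sq {p : Bool → ℝ} (hp : 0 ≤ p) (i : ι) (F : (ι → Bool) → ℝ) :
    rms p i F ^ 2 = avg p i (F ^ 2) := by
  ext x
  refine Real.sq_sqrt ?_
  rw [avg_apply]
  exact expect_nonneg hp fun _ => sq_nonneg _

lemma dependsOn_rms {A : Set ι} (hF : DependsOn F A) (p : Bool → ℝ) (i : ι) :
    DependsOn (rms p i F) (A \ {i}) := by
  have hsq : DependsOn (F ^ 2) A := fun x y hxy => congrArg (· ^ 2) (hF hxy)
  exact fun x y hxy => congrArg Real.sqrt (dependsOn_avg hsq p i hxy)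

end Derivative

section Energy

variable {ι : Type*} [Fintype ι] [DecidableEq ι] {w : ι → Bool → ℝ} {a : ι} {h : (ι → Bool) → ℝ}
  {S : Finset ι}

/-- The Dirichlet form of the product distribution with marginals `w`, up to the variances of the
individual bits: these may be arbitrarily small, and are left out so that the logarithmic Sobolev
inequality holds with a constant independent of `w`. -/
def energy (w : ι → Bool → ℝ) (F : (ι → Bool) → ℝ) : ℝ := ∑ i, 𝔼[w] (diff i F ^ 2)

lemma expect_sq_nonneg (hw : ∀ i, w i ∈ stdSimplex ℝ Bool) (F : (ι → Bool) → ℝ) :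
    0 ≤ 𝔼[w] (F ^ 2) :=
  expect_nonneg (prodWeight_mem_stdSimplex hw).1 fun _ => sq_nonneg _

lemma energy_nonneg (hw : ∀ i, w i ∈ stdSimplex ℝ Bool) (F : (ι → Bool) → ℝ) : 0 ≤ energy w F :=
  Finset.sum_nonneg fun _ _ => expect_sq_nonneg hw _

lemma energy_sub_avg (hw : w a ∈ stdSimplex ℝ Bool) (F : (ι → Bool) → ℝ) :
    energy w (F - avg (w a) a F) = energy w F - energy w (avg (w a) a F) := by
  rw [energy, energy, energy, ← Finset.sum_sub_distrib]
  refine Finset.sum_congr rfl fun i _ => ?_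
  rw [map_sub]
  obtain rfl | hia := eq_or_ne i a
  · simp [diff_avg_self]
  · rw [diff_avg_of_ne hia, expect_sub_avg_sq hw]

lemma expect_diff_rms_sq_le (hw : ∀ i, w i ∈ stdSimplex ℝ Bool) (i j : ι)
    (h : (ι → Bool) → ℝ) : 𝔼[w] (diff j (rms (w i) i h) ^ 2) ≤ 𝔼[w] (diff j h ^ 2) := by
  obtain rfl | hji := eq_or_ne j i
  · have hdep : DependsOn (rms (w j) j h) {j}ᶜ := by
      simpa [Set.compl_eq_univ_sdiff] using dependsOn_rms (dependsOn_univ h) (w j) j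
    simpa [diff_of_dependsOn hdep] using expect_sq_nonneg hw _
  · rw [← expect_avg_self (hw i).2 (diff j h ^ 2)]
    refine expect_mono (prodWeight_mem_stdSimplex hw).1 fun x => ?_
    simp only [Pi.pow_apply, diff_apply, rms, avg_apply, Function.update_comm hji]
    exact sq_sqrt_expect_sq_sub_le (hw i).1 _ _

lemma expect_sq_mul_log_sq_le_rms (hw : ∀ i, w i ∈ stdSimplex ℝ Bool) (i : ι)
    (h : (ι → Bool) → ℝ) :
    𝔼[w] (fun x => h x ^ 2 * Real.log (h x ^ 2)) ≤
      𝔼[w] (fun x => rms (w i) i h x ^ 2 * Real.log (rms (w i) i h x ^ 2)) +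
        𝔼[w] (diff i h ^ 2) := by
  rw [← expect_avg_self (hw i).2, ← map_add]
  refine expect_mono (prodWeight_mem_stdSimplex hw).1 fun x => ?_
  have hsq := congrFun (rms_sq (hw i).1 i h) x
  rw [Pi.pow_apply] at hsq
  rw [Pi.add_apply, hsq]
  exact expect_sq_mul_log_sq_le (hw i) fun b => h (Function.update x i b)

lemma log_sobolev_of_dependsOn (hw : ∀ i, w i ∈ stdSimplex ℝ Bool) (hh : DependsOn h S) :
    𝔼[w] (fun x => h x ^ 2 * Real.log (h x ^ 2)) ≤
      𝔼[w] (h ^ 2) * Real.log (𝔼[w] (h ^ 2)) + ∑ i ∈ S, 𝔼[w] (diff i h ^ 2) := by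
  induction S using Finset.induction_on generalizing h with
  | empty =>
    rw [Finset.coe_empty] at hh
    obtain ⟨c, rfl⟩ : ∃ c, h = fun _ => c :=
      ⟨h fun _ => false, funext fun x => hh.empty _ _⟩
    have hW := prodWeight_mem_stdSimplex hw
    rw [expect_const hW, show (fun _ : ι → Bool => c) ^ 2 = fun _ => c ^ 2 from rfl,
      expect_const hW, Finset.sum_empty, add_zero]
  | insert a S ha ih =>
    have hrms : DependsOn (rms (w a) a h) S := by
      simpa [ha] using dependsOn_rms hh (w a) a
    have hstep := ih hrms
    rw [rms_sq (hw a).1, expect_avg_self (hw a).2] at hstep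
    rw [Finset.sum_insert ha]
    linarith [expect_sq_mul_log_sq_le_rms hw a h,
      Finset.sum_le_sum fun i (_ : i ∈ S) => expect_diff_rms_sq_le hw a i h]

lemma log_sobolev (hw : ∀ i, w i ∈ stdSimplex ℝ Bool) (h : (ι → Bool) → ℝ) :
    𝔼[w] (fun x => h x ^ 2 * Real.log (h x ^ 2)) ≤
      𝔼[w] (h ^ 2) * Real.log (𝔼[w] (h ^ 2)) + energy w h :=
  log_sobolev_of_dependsOn hw (by simpa using dependsOn_univ h)

lemma two_mul_sub_le_sq_mul_log_sq {m : ℝ} (hm : 0 < m) (L t : ℝ) :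
    (2 * (L + 1) + Real.log m) * t ^ 2 - 2 * Real.exp L * √m * |t| ≤ t ^ 2 * Real.log (t ^ 2) := by
  obtain rfl | ht := eq_or_ne t 0
  · simp
  have habs : 0 < |t| := abs_pos.2 ht
  have hsqrt : 0 < √m := Real.sqrt_pos.2 hm
  have hlog := Real.log_le_sub_one_of_pos (show 0 < Real.exp L * √m / |t| by positivity)
  rw [Real.log_div (by positivity) habs.ne', Real.log_mul (by positivity) hsqrt.ne',
    Real.log_exp, Real.log_sqrt hm.le] at hlog
  have hmul := mul_le_mul_of_nonneg_left hlog (show 0 ≤ 2 * |t| ^ 2 by positivity)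
  have hcancel : 2 * |t| ^ 2 * (Real.exp L * √m / |t| - 1) =
      2 * Real.exp L * √m * |t| - 2 * |t| ^ 2 := by
    field_simp
  rw [← sq_abs t, Real.log_pow, Nat.cast_two]
  linarith

lemma two_mul_expect_sq_sub_le_energy (hw : ∀ i, w i ∈ stdSimplex ℝ Bool) (h : (ι → Bool) → ℝ)
    (L : ℝ) :
    2 * (L + 1) * 𝔼[w] (h ^ 2) - 2 * Real.exp L * √(𝔼[w] (h ^ 2)) * 𝔼[w] |h| ≤ energy w h := by
  obtain hm | hm := (expect_sq_nonneg hw h).eq_or_lt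
  · simpa [← hm] using energy_nonneg hw h
  · have hbound := expect_mono (prodWeight_mem_stdSimplex hw).1
      fun x => two_mul_sub_le_sq_mul_log_sq hm L (h x)
    have hsplit : 𝔼[w] (fun x => (2 * (L + 1) + Real.log (𝔼[w] (h ^ 2))) * h x ^ 2 -
          2 * Real.exp L * √(𝔼[w] (h ^ 2)) * |h x|) =
        (2 * (L + 1) + Real.log (𝔼[w] (h ^ 2))) * 𝔼[w] (h ^ 2) -
          2 * Real.exp L * √(𝔼[w] (h ^ 2)) * 𝔼[w] |h| := by
      simp_rw [← smul_eq_mul]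
      rw [← map_smul, ← map_smul, ← map_sub]
      rfl
    linarith [log_sobolev hw h]

end Energy

section Influence

variable {ι : Type*} [Fintype ι] [DecidableEq ι] {w : ι → Bool → ℝ} {a : ι}
  {F : (ι → Bool) → ℝ} {S : Finset ι} {s : Set (ι → Bool)} {L : ℝ}

lemma expect_abs_avg_sub_avg_le (hw : ∀ i, w i ∈ stdSimplex ℝ Bool) (i a : ι)
    (F : (ι → Bool) → ℝ) :
    𝔼[w] |avg (w a) a F - avg (w i) i (avg (w a) a F)| ≤ 𝔼[w] |F - avg (w i) i F| := by
  have hW := (prodWeight_mem_stdSimplex hw).1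
  obtain rfl | hia := eq_or_ne i a
  · rw [avg_of_dependsOn (hw i) (dependsOn_avg_compl _ _ _), sub_self, abs_zero, map_zero]
    exact expect_nonneg hW (abs_nonneg _)
  · rw [avg_comm _ _ _ hia, ← map_sub, ← expect_avg_self (hw a).2 |F - avg (w i) i F|]
    exact expect_mono hW (abs_avg_le (hw a).1 _ _)

/-- One step of the Falik–Samorodnitsky argument: the logarithmic Sobolev inequality for the
martingale difference `F - avg (w a) a F`. -/
lemma mul_expect_sq_sub_le (hw : ∀ i, w i ∈ stdSimplex ℝ Bool) (hF0 : 0 ≤ F) (hF1 : F ≤ 1)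
    (hsmall : 𝔼[w] |F - avg (w a) a F| ≤ Real.exp (-2 * L)) :
    2 * (L + 1) * (𝔼[w] (F ^ 2) - 𝔼[w] (avg (w a) a F ^ 2)) ≤
      2 * 𝔼[w] |F - avg (w a) a F| + (energy w F - energy w (avg (w a) a F)) := by
  have hW := (prodWeight_mem_stdSimplex hw).1
  have hlsi := two_mul_expect_sq_sub_le_energy hw (F - avg (w a) a F) L
  rw [energy_sub_avg (hw a), expect_sub_avg_sq (hw a)] at hlsi
  have hvar : 𝔼[w] (F ^ 2) - 𝔼[w] (avg (w a) a F ^ 2) ≤ 𝔼[w] |F - avg (w a) a F| := by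
    rw [← expect_sub_avg_sq (hw a)]
    refine expect_mono hW fun x => ?_
    have habs : |F x - avg (w a) a F x| ≤ 1 := by
      simpa using abs_sub_le_of_le_of_le (hF0 x) (hF1 x) (avg_nonneg (hw a).1 hF0 x)
        (avg_le_one (hw a) hF1 x)
    simpa using pow_le_of_le_one (abs_nonneg _) habs two_ne_zero
  have hsqrt : Real.exp L * √(𝔼[w] (F ^ 2) - 𝔼[w] (avg (w a) a F ^ 2)) ≤ 1 := by
    rw [← le_div_iff₀' (Real.exp_pos L), one_div, ← Real.exp_neg]
    refine (Real.sqrt_le_left (Real.exp_pos _).le).2 ((hvar.trans hsmall).trans_eq ?_)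
    rw [← Real.exp_nat_mul]
    congr 1
    push_cast
    ring
  have := mul_le_mul_of_nonneg_right hsqrt (expect_nonneg hW (abs_nonneg (F - avg (w a) a F)))
  linarith

lemma mul_variance_le_of_dependsOn (hw : ∀ i, w i ∈ stdSimplex ℝ Bool) (hF0 : 0 ≤ F) (hF1 : F ≤ 1)
    (hF : DependsOn F S) (hsmall : ∀ i, 𝔼[w] |F - avg (w i) i F| ≤ Real.exp (-2 * L)) :
    2 * (L + 1) * (𝔼[w] (F ^ 2) - 𝔼[w] F ^ 2) ≤
      2 * ∑ i ∈ S, 𝔼[w] |F - avg (w i) i F| + energy w F := by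
  have hW := prodWeight_mem_stdSimplex hw
  induction S using Finset.induction_on generalizing F with
  | empty =>
    rw [Finset.coe_empty] at hF
    obtain ⟨c, rfl⟩ : ∃ c, F = fun _ => c := ⟨F fun _ => false, funext fun x => hF.empty _ _⟩
    rw [expect_const hW, show (fun _ : ι → Bool => c) ^ 2 = fun _ => c ^ 2 from rfl,
      expect_const hW]
    simpa using energy_nonneg hw _
  | insert a S ha ih =>
    have hA : DependsOn (avg (w a) a F) S := by simpa [ha] using dependsOn_avg hF (w a) a
    have hrest := ih (avg_nonneg (hw a).1 hF0) (avg_le_one (hw a) hF1) hA fun i =>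
      (expect_abs_avg_sub_avg_le hw i a F).trans (hsmall i)
    rw [expect_avg_self (hw a).2] at hrest
    rw [Finset.sum_insert ha]
    linarith [mul_expect_sq_sub_le hw hF0 hF1 (hsmall a),
      Finset.sum_le_sum fun i (_ : i ∈ S) => expect_abs_avg_sub_avg_le hw i a F]

/-- The probability that coordinate `i` is pivotal for the event `s`. -/
noncomputable def influence (w : ι → Bool → ℝ) (s : Set (ι → Bool)) (i : ι) : ℝ :=
  𝔼[w] (diff i (s.indicator 1) ^ 2)

lemma mul_prob_mul_le_sum_influence (hw : ∀ i, w i ∈ stdSimplex ℝ Bool)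
    (hsmall : ∀ i, influence w s i ≤ Real.exp (-2 * L)) :
    2 * (L + 1) * (ℙ[w] s * (1 - ℙ[w] s)) ≤ 3 * ∑ i, influence w s i := by
  have hind (x : ι → Bool) : s.indicator (1 : (ι → Bool) → ℝ) x = 0 ∨
      s.indicator (1 : (ι → Bool) → ℝ) x = 1 :=
    Set.indicator_eq_zero_or_self s 1 x
  have hle (i : ι) :
      𝔼[w] |s.indicator 1 - avg (w i) i (s.indicator 1)| ≤ influence w s i := by
    refine expect_mono (prodWeight_mem_stdSimplex hw).1 fun x => ?_
    refine (abs_sub_avg_le (hw i) i _ x).trans_eq ?_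
    rw [Pi.abs_apply, Pi.pow_apply, diff_apply]
    obtain h0 | h0 := hind (Function.update x i false) <;>
      obtain h1 | h1 := hind (Function.update x i true) <;> simp [h0, h1]
  have hsq : s.indicator (1 : (ι → Bool) → ℝ) ^ 2 = s.indicator 1 := by
    ext x
    obtain h | h := hind x <;> simp [h]
  have hkkl := mul_variance_le_of_dependsOn (S := Finset.univ) (F := s.indicator 1) hw
    (Set.indicator_nonneg fun _ _ => zero_le_one)
    (Set.indicator_le_self' fun _ _ => zero_le_one) (by simpa using dependsOn_univ _)
    fun i => (hle i).trans (hsmall i)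
  rw [hsq] at hkkl
  have henergy : energy w (s.indicator 1) = ∑ i, influence w s i := rfl
  have hvar : 2 * (L + 1) * (ℙ[w] s - ℙ[w] s ^ 2) ≤ _ := hkkl
  linarith [Finset.sum_le_sum fun i (_ : i ∈ Finset.univ) => hle i]

end Influence

section Reach

variable {ι : Type*} [DecidableEq ι] {A B : Finset ι} {s : Set (ι → Bool)}

/-- The event that the coalition `B`, which speaks last, can bring about `s`. -/
def reach (B : Finset ι) (s : Set (ι → Bool)) : Set (ι → Bool) :=
  {x | ∃ z, B.piecewise z x ∈ s}

lemma subset_reach (B : Finset ι) (s : Set (ι → Bool)) : s ⊆ reach B s :=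
  fun x hx => ⟨x, by rwa [Finset.piecewise_same]⟩

lemma reach_reach (A B : Finset ι) (s : Set (ι → Bool)) :
    reach A (reach B s) = reach (B ∪ A) s := by
  ext x
  constructor
  · rintro ⟨z, z', h⟩
    refine ⟨B.piecewise z' z, ?_⟩
    convert h using 1
    ext j
    by_cases hB : j ∈ B <;> by_cases hA : j ∈ A <;> simp [hA, hB]
  · rintro ⟨z, h⟩
    refine ⟨z, z, ?_⟩
    convert h using 1
    ext j
    by_cases hB : j ∈ B <;> by_cases hA : j ∈ A <;> simp [hA, hB]

lemma reach_mono (h : A ⊆ B) (s : Set (ι → Bool)) : reach A s ⊆ reach B s := by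
  rw [← Finset.union_eq_right.2 h, ← reach_reach]
  exact subset_reach _ _

lemma mem_reach_singleton {i : ι} {x : ι → Bool} :
    x ∈ reach {i} s ↔ ∃ b, Function.update x i b ∈ s := by
  simp only [reach, Set.mem_ofPred_eq, Finset.piecewise_singleton]
  exact ⟨fun ⟨z, hz⟩ => ⟨z i, hz⟩, fun ⟨b, hb⟩ => ⟨fun _ => b, hb⟩⟩

lemma dependsOn_indicator_reach (B : Finset ι) (s : Set (ι → Bool)) :
    DependsOn ((reach B s).indicator (1 : (ι → Bool) → ℝ)) (B : Set ι)ᶜ := by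
  intro x y hxy
  have hpw (z : ι → Bool) : B.piecewise z x = B.piecewise z y := by
    ext j
    by_cases hj : j ∈ B
    · simp [hj]
    · simpa [hj] using hxy j hj
  have hmem : x ∈ reach B s ↔ y ∈ reach B s := by simp only [reach, Set.mem_ofPred_eq, hpw]
  by_cases hx : x ∈ reach B s
  · simp [hx, hmem.1 hx]
  · simp [hx, mt hmem.2 hx]

variable [Fintype ι] {w : ι → Bool → ℝ} {δ L : ℝ}

lemma mul_influence_le_prob_reach_sub (hw : ∀ i, w i ∈ stdSimplex ℝ Bool) {i : ι}
    (hδ : ∀ b, δ ≤ w i b) (s : Set (ι → Bool)) :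
    δ * influence w s i ≤ ℙ[w] (reach {i} s) - ℙ[w] s := by
  rw [influence, prob, prob, ← map_sub, ← smul_eq_mul, ← map_smul]
  refine (expect_mono (prodWeight_mem_stdSimplex hw).1 fun x => ?_).trans_eq
    (expect_avg_self (hw i).2 _)
  have hsum := (hw i).2
  rw [Fintype.sum_bool] at hsum
  rw [avg_apply, expect_apply, Fintype.sum_bool]
  by_cases h0 : Function.update x i false ∈ s <;> by_cases h1 : Function.update x i true ∈ s <;>
    simp [diff_apply, mem_reach_singleton, h0, h1, hδ]

lemma mul_prob_mul_le_sum_prob_reach_sub (hw : ∀ i, w i ∈ stdSimplex ℝ Bool) (hδ0 : 0 < δ)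
    (hδ : ∀ i b, δ ≤ w i b)
    (hsmall : ∀ i, ℙ[w] (reach {i} s) - ℙ[w] s ≤ δ * Real.exp (-2 * L)) :
    2 * (L + 1) * δ * (ℙ[w] s * (1 - ℙ[w] s)) ≤
      3 * ∑ i, (ℙ[w] (reach {i} s) - ℙ[w] s) := by
  have hinf (i : ι) := mul_influence_le_prob_reach_sub hw (hδ i) s
  have hkkl := mul_prob_mul_le_sum_influence hw (s := s) (L := L) fun i =>
    le_of_mul_le_mul_left ((hinf i).trans (hsmall i)) hδ0
  have hsum := Finset.sum_le_sum fun i (_ : i ∈ Finset.univ) => hinf i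
  rw [← Finset.mul_sum] at hsum
  linarith [mul_le_mul_of_nonneg_left hkkl hδ0.le]

end Reach

section RandomGrowth

variable {ι : Type*} [DecidableEq ι] {v : Finset ι → ℝ} {p ε θ T : ℝ} {m : ℕ}

/-- Starting from `C` and adding the choices `ω`, at most `(1 - v C) / θ` further elements raise the
value of the set function `v` to `1 - ε`. -/
def IsCompletable (v : Finset ι → ℝ) (ε θ : ℝ) (C : Finset ι) (ω : Fin m → ι) : Prop :=
  ∃ K : Finset ι, K.card * θ ≤ 1 - v C ∧ 1 - ε ≤ v (C ∪ K ∪ Finset.univ.image ω)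

lemma exists_superset_forall_insert_lt [Finite ι] (v : Finset ι → ℝ) (θ : ℝ) (C₀ : Finset ι) :
    ∃ C, C₀ ⊆ C ∧ v C₀ + (C \ C₀).card * θ ≤ v C ∧ ∀ i ∉ C, v (insert i C) < v C + θ := by
  obtain ⟨C, hC, hmax⟩ := Set.Finite.exists_maximal
    (Set.toFinite {C | C₀ ⊆ C ∧ v C₀ + (C \ C₀).card * θ ≤ v C}) ⟨C₀, by simp⟩
  refine ⟨C, hC.1, hC.2, fun i hi => ?_⟩
  by_contra! hlarge
  refine hi (hmax ⟨hC.1.trans (Finset.subset_insert i C), ?_⟩ (Finset.subset_insert i C)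
    (Finset.mem_insert_self i C))
  rw [Finset.insert_sdiff_of_notMem _ fun h => hi (hC.1 h),
    Finset.card_insert_of_notMem fun h => hi (Finset.mem_sdiff.1 h).1]
  push_cast
  linarith [hC.2]

lemma isCompletable_snoc (hv : Monotone v) {C₀ C : Finset ι}
    (hcard : v C₀ + (C \ C₀).card * θ ≤ v C) {ω : Fin m → ι} {i : ι} (hθ : 0 ≤ θ)
    (h : IsCompletable v ε θ (insert i C) ω) :
    IsCompletable v ε θ C₀ (Fin.snoc ω i : Fin (m + 1) → ι) := by
  obtain ⟨K, hK, hval⟩ := h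
  refine ⟨K ∪ C \ C₀, ?_, hval.trans (hv fun j hj => ?_)⟩
  · have hunion : ((K ∪ C \ C₀).card : ℝ) * θ ≤ (K.card + (C \ C₀).card) * θ :=
      mul_le_mul_of_nonneg_right (by exact_mod_cast Finset.card_union_le _ _) hθ
    have := hv (Finset.subset_insert i C)
    linarith
  · by_cases hj₀ : j ∈ C₀
    · simp [hj₀]
    · simpa [hj₀, Fin.exists_fin_succ', or_comm, or_left_comm, eq_comm] using hj

lemma mul_prob_not_isCompletable_le [Fintype ι] [Nonempty ι] (hv : Monotone v) (hle : ∀ C, v C ≤ 1)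
    (hθ : 0 ≤ θ) (hT : 0 ≤ T)
    (hinc : ∀ C, p ≤ v C → v C < 1 - ε → (∀ i, v (insert i C) ≤ v C + θ) →
      v C + T ≤ expect (uniformWeight ι) fun i => v (insert i C))
    (m : ℕ) {C₀ : Finset ι} (hp : p ≤ v C₀) :
    m * T * ℙ[fun _ : Fin m => uniformWeight ι] {ω | ¬IsCompletable v ε θ C₀ ω} ≤ 1 - v C₀ := by
  induction m generalizing C₀ with
  | zero => simpa using hle C₀
  | succ m ih =>
    have hu := uniformWeight_mem_stdSimplex (Ω := ι)
    obtain ⟨C, hsub, hcard, hmax⟩ := exists_superset_forall_insert_lt v θ C₀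
    by_cases hC : 1 - ε ≤ v C
    · have hall : {ω : Fin (m + 1) → ι | ¬IsCompletable v ε θ C₀ ω} = ∅ := by
        refine Set.eq_empty_of_forall_notMem fun ω hω => hω ⟨C \ C₀, by linarith [hle C], ?_⟩
        rw [Finset.union_sdiff_of_subset hsub]
        exact hC.trans (hv Finset.subset_union_left)
      simpa [hall, prob, ← Pi.zero_def] using hle C₀
    set P := ℙ[fun _ : Fin (m + 1) => uniformWeight ι] {ω | ¬IsCompletable v ε θ C₀ ω}
    have hpC : p ≤ v C := hp.trans (hv hsub)
    have hgrowth := hinc C hpC (not_le.1 hC) fun i => by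
      by_cases hi : i ∈ C
      · simpa [hi] using hθ
      · exact (hmax i hi).le
    have hone : P * T ≤ T :=
      mul_le_of_le_one_left hT (prob_le_one (prodWeight_mem_stdSimplex fun _ => hu) _)
    have hfirst : P ≤ expect (uniformWeight ι) fun i =>
        ℙ[fun _ : Fin m => uniformWeight ι] {ω | ¬IsCompletable v ε θ (insert i C) ω} :=
      prob_prodWeight_snoc_le (fun _ => hu.1) fun ω i => mt (isCompletable_snoc hv hcard hθ)
    have hrest : m * T * P ≤ 1 - expect (uniformWeight ι) fun i => v (insert i C) := by
      refine (mul_le_mul_of_nonneg_left hfirst (by positivity)).trans ?_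
      rw [← smul_eq_mul, ← map_smul, ← expect_const hu 1, ← map_sub]
      exact expect_mono hu.1 fun i => ih (hpC.trans (hv (Finset.subset_insert i C)))
    push_cast
    linarith [hv hsub]

lemma half_le_prob_isCompletable [Fintype ι] [Nonempty ι] (hv : Monotone v) (hle : ∀ C, v C ≤ 1)
    {C₀ : Finset ι} (hv0 : 0 ≤ v C₀) (hθ : 0 ≤ θ) (hT : 0 ≤ T)
    (hinc : ∀ C, p ≤ v C → v C < 1 - ε → (∀ i, v (insert i C) ≤ v C + θ) →
      v C + T ≤ expect (uniformWeight ι) fun i => v (insert i C))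
    (hp : p ≤ v C₀) (hmT : 2 ≤ m * T) :
    1 / 2 ≤ ℙ[fun _ : Fin m => uniformWeight ι] {ω | IsCompletable v ε θ C₀ ω} := by
  have hU := prodWeight_mem_stdSimplex fun _ : Fin m => uniformWeight_mem_stdSimplex (Ω := ι)
  set good : Set (Fin m → ι) := {ω | IsCompletable v ε θ C₀ ω}
  have hbad : m * T * ℙ[fun _ : Fin m => uniformWeight ι] goodᶜ ≤ 1 - v C₀ :=
    mul_prob_not_isCompletable_le hv hle hθ hT hinc m hp
  have hscale := mul_le_mul_of_nonneg_right hmT (prob_nonneg hU.1 goodᶜ)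
  rw [prob_compl hU] at hbad hscale
  linarith

end RandomGrowth

section SmallCoalition

variable {ι : Type*} [Fintype ι] [DecidableEq ι] [Nonempty ι] {w : ι → Bool → ℝ}
  {s : Set (ι → Bool)} {p δ ε L : ℝ} {k m : ℕ}

lemma prob_add_le_expect_prob_reach (hw : ∀ i, w i ∈ stdSimplex ℝ Bool) (hδ0 : 0 < δ)
    (hδ : ∀ i b, δ ≤ w i b)
    (hsmall : ∀ i, ℙ[w] (reach {i} s) ≤ ℙ[w] s + δ * Real.exp (-2 * L)) :
    ℙ[w] s + 2 * (L + 1) * δ * (ℙ[w] s * (1 - ℙ[w] s)) / (3 * Fintype.card ι) ≤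
      expect (uniformWeight ι) fun i => ℙ[w] (reach {i} s) := by
  have hsum := mul_prob_mul_le_sum_prob_reach_sub hw hδ0 hδ fun i => sub_le_iff_le_add'.2 (hsmall i)
  have hmean : (expect (uniformWeight ι) fun i => ℙ[w] (reach {i} s)) - ℙ[w] s =
      (∑ i, (ℙ[w] (reach {i} s) - ℙ[w] s)) / Fintype.card ι := by
    rw [← expect_const (uniformWeight_mem_stdSimplex (Ω := ι)) (ℙ[w] s), ← map_sub, expect_apply,
      expect_const uniformWeight_mem_stdSimplex, Finset.sum_div]
    exact Finset.sum_congr rfl fun i _ => by simp [uniformWeight, div_eq_inv_mul]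
  rw [← le_sub_iff_add_le', hmean, mul_comm (3 : ℝ), ← div_div, div_right_comm,
    div_le_div_iff_of_pos_right (by positivity), div_le_iff₀' three_pos]
  exact hsum

lemma half_le_prob_exists_card_le (hw : ∀ i, w i ∈ stdSimplex ℝ Bool) (hδ0 : 0 < δ)
    (hδ : ∀ i b, δ ≤ w i b) (hL : 0 ≤ L) (hp : 0 < p) (hε : 0 < ε)
    (hk : 1 ≤ k * (δ * Real.exp (-2 * L)))
    (hm : 3 * Fintype.card ι ≤ m * ((L + 1) * δ * (p * ε))) (hs : p ≤ ℙ[w] s) :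
    1 / 2 ≤ ℙ[fun _ : Fin m => uniformWeight ι] {ω | ∃ K : Finset ι, K.card ≤ k ∧
      1 - ε ≤ ℙ[w] (reach (K ∪ Finset.univ.image ω) s)} := by
  set θ := δ * Real.exp (-2 * L)
  have hW := prodWeight_mem_stdSimplex hw
  have hgrowth (C : Finset ι) (hpC : p ≤ ℙ[w] (reach C s)) (hCε : ℙ[w] (reach C s) < 1 - ε)
      (hinc : ∀ i, ℙ[w] (reach (insert i C) s) ≤ ℙ[w] (reach C s) + θ) :
      ℙ[w] (reach C s) + 2 * (L + 1) * δ * (p * ε) / (3 * Fintype.card ι) ≤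
        expect (uniformWeight ι) fun i => ℙ[w] (reach (insert i C) s) := by
    simp only [← Finset.union_singleton, ← reach_reach] at hinc ⊢
    refine le_trans ?_ (prob_add_le_expect_prob_reach hw hδ0 hδ hinc)
    have hpε : p * ε ≤ ℙ[w] (reach C s) * (1 - ℙ[w] (reach C s)) :=
      mul_le_mul hpC (by linarith) hε.le (hp.le.trans hpC)
    gcongr
  refine (half_le_prob_isCompletable (v := fun C => ℙ[w] (reach C s)) (C₀ := ∅)
    (fun A B hAB => prob_mono hW.1 (reach_mono hAB s)) (fun C => prob_le_one hW _)
    (prob_nonneg hW.1 _) (by positivity : 0 ≤ θ) (by positivity) hgrowth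
    (hs.trans (prob_mono hW.1 (subset_reach _ _))) ?_).trans
    (prob_mono (prodWeight_mem_stdSimplex fun _ => uniformWeight_mem_stdSimplex).1 ?_)
  · rw [← mul_div_assoc, le_div_iff₀ (by positivity)]
    linarith
  · rintro ω ⟨K, hK, hval⟩
    have hpos : 0 ≤ ℙ[w] (reach ∅ s) := prob_nonneg hW.1 _
    have hKk : (K.card : ℝ) * θ ≤ k * θ := by linarith
    exact ⟨K, by exact_mod_cast le_of_mul_le_mul_right hKk (by positivity), by simpa using hval⟩

lemma exists_forall_card_fiber_le (ι : Type*) [Fintype ι] (M : ℕ) [NeZero M] :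
    ∃ c : ι → Fin M, ∀ a, (Finset.univ.filter (c · = a)).card ≤ Fintype.card ι / M + 1 := by
  let e := Fintype.equivFin ι
  refine ⟨fun i => Fin.ofNat M (e i), fun a => ?_⟩
  rw [← Finset.card_range (Fintype.card ι / M + 1)]
  refine Finset.card_le_card_of_injOn (fun i => (e i : ℕ) / M) (fun i _ => ?_)
    fun i hi j hj hij => ?_
  · simpa [Nat.lt_succ_iff] using Nat.div_le_div_right (e i).2.le
  · have hmod : (e i : ℕ) % M = e j % M := by
      have := (Finset.mem_filter.1 hi).2.trans (Finset.mem_filter.1 hj).2.symm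
      simpa [Fin.ofNat] using congrArg Fin.val this
    refine e.injective (Fin.ext ?_)
    rw [← Nat.div_add_mod (e i : ℕ) M, ← Nat.div_add_mod (e j : ℕ) M, hmod]
    exact congrArg (M * · + _) hij

lemma exists_mul_prob_le_prob_reach {H : Type*} [Fintype H] {q : H → ℝ} (hq : 0 ≤ q)
    (hw : ∀ i, w i ∈ stdSimplex ℝ Bool) (hδ0 : 0 < δ) (hδ : ∀ i b, δ ≤ w i b) (hL : 0 ≤ L)
    (hp : 0 < p) (hε : 0 < ε) (hk : 1 ≤ k * (δ * Real.exp (-2 * L)))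
    (hm : 3 * Fintype.card ι ≤ m * ((L + 1) * δ * (p * ε))) (s : H → Set (ι → Bool))
    (M : ℕ) [NeZero M] :
    ∃ A : Finset ι, A.card ≤ (Fintype.card ι / M + 1) * k + m ∧
      (2 ^ M)⁻¹ * (1 / 2 * prob q {h | p ≤ ℙ[w] (s h)}) ≤
        prob q {h | 1 - ε ≤ ℙ[w] (reach A (s h))} := by
  obtain ⟨c, hc⟩ := exists_forall_card_fiber_le ι M
  obtain ⟨ω, hω⟩ := exists_mul_prob_le_prob
    (prodWeight_mem_stdSimplex fun _ : Fin m => uniformWeight_mem_stdSimplex (Ω := ι)) hq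
    fun h (hh : p ≤ ℙ[w] (s h)) => half_le_prob_exists_card_le hw hδ0 hδ hL hp hε hk hm hh
  set good := {h | ∃ K : Finset ι, K.card ≤ k ∧
    1 - ε ≤ ℙ[w] (reach (K ∪ Finset.univ.image ω) (s h))}
  have hgood : 1 / 2 * prob q {h | p ≤ ℙ[w] (s h)} ≤ prob q good :=
    hω.trans (prob_mono hq fun h hh => hh.2)
  let cover (S : Finset (Fin M)) : Finset ι := Finset.univ.filter (c · ∈ S)
  have : Nonempty {S : Finset (Fin M) // S.card ≤ k} := ⟨∅, by simp⟩
  obtain ⟨S, hS⟩ := exists_mul_prob_le_prob (c := (2 ^ M)⁻¹) (g := good)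
    (R := fun (S : {S : Finset (Fin M) // S.card ≤ k}) h =>
      1 - ε ≤ ℙ[w] (reach (cover S ∪ Finset.univ.image ω) (s h)))
    uniformWeight_mem_stdSimplex hq (fun h ⟨K, hK, hval⟩ => by
      refine le_trans ?_ (inv_card_le_prob_uniformWeight
        ⟨⟨K.image c, Finset.card_image_le.trans hK⟩, hval.trans (prob_mono
          (prodWeight_mem_stdSimplex hw).1 (reach_mono (Finset.union_subset_union_left ?_) _))⟩)
      · gcongr
        exact_mod_cast (Fintype.card_subtype_le _).trans_eq (by simp)
      · exact fun i hi => by simpa [cover] using ⟨i, hi, rfl⟩)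
  refine ⟨cover S ∪ Finset.univ.image ω, ?_, ?_⟩
  · have hcover : (cover S).card ≤ (Fintype.card ι / M + 1) * S.1.card :=
      Finset.card_le_mul_card_image_of_maps_to (f := c) (by simp [cover]) _ fun a _ =>
        (Finset.card_le_card (Finset.filter_subset_filter _ (Finset.subset_univ _))).trans (hc a)
    have himage : (Finset.univ.image ω).card ≤ m :=
      Finset.card_image_le.trans_eq (Finset.card_fin m)
    exact (Finset.card_union_le _ _).trans
      (add_le_add (hcover.trans (Nat.mul_le_mul_left _ S.2)) himage)
  · exact (mul_le_mul_of_nonneg_left hgood (by positivity)).trans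
      (hS.trans (prob_mono hq fun h hh => hh.2))

end SmallCoalition

section Resampling

variable {ι σ : Type*} [Fintype σ] {w : ι → σ → ℝ} {δ η : ℝ}

/-- The distribution of a bit that equals `true` with probability `δ`. -/
def bernoulliWeight (δ : ℝ) (b : Bool) : ℝ := if b then δ else 1 - δ

lemma bernoulliWeight_mem_stdSimplex (hδ0 : 0 ≤ δ) (hδ1 : δ ≤ 1) :
    bernoulliWeight δ ∈ stdSimplex ℝ Bool := by
  refine ⟨fun b => ?_, by simp [bernoulliWeight]⟩
  cases b <;> simp [bernoulliWeight, hδ0, hδ1]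

/-- The distributions obtained from `w` by replacing each coordinate, independently with
probability `δ`, by a uniform one. -/
noncomputable def mix (δ : ℝ) (w : ι → σ → ℝ) (i : ι) : σ → ℝ :=
  (1 - δ) • w i + δ • uniformWeight σ

lemma mix_mem_stdSimplex [Nonempty σ] (hδ0 : 0 ≤ δ) (hδ1 : δ ≤ 1)
    (hw : ∀ i, w i ∈ stdSimplex ℝ σ) (i : ι) : mix δ w i ∈ stdSimplex ℝ σ :=
  convex_stdSimplex ℝ σ (hw i) uniformWeight_mem_stdSimplex (sub_nonneg.2 hδ1) hδ0 (by ring)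

lemma div_card_le_mix (hδ1 : δ ≤ 1) (hw : ∀ i, w i ∈ stdSimplex ℝ σ) (i : ι) (b : σ) :
    δ / Fintype.card σ ≤ mix δ w i b := by
  simpa [mix, uniformWeight, div_eq_mul_inv] using
    mul_nonneg (sub_nonneg.2 hδ1) ((hw i).1 b)

variable [Fintype ι]

/-- The set of coordinates at which `z` is `true`. -/
def supp (z : ι → Bool) : Finset ι := Finset.univ.filter (z ·)

lemma mem_supp {z : ι → Bool} {i : ι} : i ∈ supp z ↔ z i := by simp [supp]

variable [DecidableEq ι]

lemma expect_prodWeight_mix (δ : ℝ) (w : ι → σ → ℝ) (F : (ι → σ) → ℝ) :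
    𝔼[mix δ w] F = 𝔼[fun _ => bernoulliWeight δ] fun z =>
      𝔼[(supp z).piecewise (fun _ => uniformWeight σ) w] F := by
  have hfactor (z : ι → Bool) (x : ι → σ) :
      prodWeight (fun _ => bernoulliWeight δ) z *
          prodWeight ((supp z).piecewise (fun _ => uniformWeight σ) w) x =
        ∏ i, bernoulliWeight δ (z i) * if z i then uniformWeight σ (x i) else w i (x i) := by
    rw [prodWeight, prodWeight, ← Finset.prod_mul_distrib]
    refine Finset.prod_congr rfl fun i _ => ?_
    by_cases hi : z i <;> simp [Finset.piecewise, mem_supp, hi]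
  simp only [expect_apply, Finset.mul_sum]
  rw [Finset.sum_comm]
  refine Finset.sum_congr rfl fun x _ => ?_
  simp only [← mul_assoc, hfactor, ← Finset.sum_mul]
  have hexpand := Finset.prod_univ_sum (fun _ : ι => (Finset.univ : Finset Bool)) fun i b =>
    bernoulliWeight δ b * if b then uniformWeight σ (x i) else w i (x i)
  rw [Fintype.piFinset_univ] at hexpand
  rw [← hexpand]
  simp [prodWeight, mix, bernoulliWeight, add_comm]

lemma expect_card_supp (hδ0 : 0 ≤ δ) (hδ1 : δ ≤ 1) :
    𝔼[fun _ : ι => bernoulliWeight δ] (fun z => ((supp z).card : ℝ)) = δ * Fintype.card ι := by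
  have hb := bernoulliWeight_mem_stdSimplex hδ0 hδ1
  have hcard : (fun z : ι → Bool => ((supp z).card : ℝ)) =
      ∑ i, fun z : ι → Bool => if z i then (1 : ℝ) else 0 := by
    ext z
    simp [supp]
  have hcoord (i : ι) :
      𝔼[fun _ : ι => bernoulliWeight δ] (fun z => if z i then (1 : ℝ) else 0) = δ := by
    have havg : avg (bernoulliWeight δ) i (fun z => if z i then (1 : ℝ) else 0) = fun _ => δ := by
      ext z
      simp [avg_apply, expect_apply, bernoulliWeight]
    rw [← expect_avg_self (i := i) hb.2, havg, expect_const (prodWeight_mem_stdSimplex fun _ => hb)]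
  rw [hcard, map_sum]
  simp only [hcoord, Finset.sum_const, Finset.card_univ, nsmul_eq_mul, mul_comm]

variable {w : ι → Bool → ℝ} {s : Set (ι → Bool)}

lemma prob_mix_le (hδ0 : 0 ≤ δ) (hδ1 : δ ≤ 1) (hw : ∀ i, w i ∈ stdSimplex ℝ Bool)
    (s : Set (ι → Bool)) :
    ℙ[mix δ w] s ≤ 𝔼[fun _ => bernoulliWeight δ] fun z => ℙ[w] (reach (supp z) s) := by
  rw [prob, expect_prodWeight_mix]
  refine expect_mono (prodWeight_mem_stdSimplex fun _ =>
    bernoulliWeight_mem_stdSimplex hδ0 hδ1).1 fun z => ?_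
  have hpiece (i : ι) :
      (supp z).piecewise (fun _ => uniformWeight Bool) w i ∈ stdSimplex ℝ Bool := by
    by_cases hi : i ∈ supp z
    · simpa [hi] using uniformWeight_mem_stdSimplex
    · simpa [hi] using hw i
  exact (prob_mono (prodWeight_mem_stdSimplex hpiece).1 (subset_reach (supp z) s)).trans_eq
    (expect_piecewise_of_dependsOn hw (fun _ => uniformWeight_mem_stdSimplex) (supp z)
      (dependsOn_indicator_reach (supp z) s))

lemma half_le_prob_card_supp_le [Nonempty ι] (hδ0 : 0 < δ) (hδ1 : δ ≤ 1) (hη : 0 < η)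
    (hw : ∀ i, w i ∈ stdSimplex ℝ Bool) (hs : 1 - η ≤ ℙ[mix δ w] s) :
    1 / 2 ≤ ℙ[fun _ => bernoulliWeight δ] {z | (supp z).card ≤ 4 * (δ * Fintype.card ι) ∧
      1 - 4 * η ≤ ℙ[w] (reach (supp z) s)} := by
  have hB := prodWeight_mem_stdSimplex fun _ : ι => bernoulliWeight_mem_stdSimplex hδ0.le hδ1
  have hsize := one_sub_div_le_prob (F := fun z : ι → Bool => ((supp z).card : ℝ)) hB
    (fun z => Nat.cast_nonneg _) (show 0 < 4 * (δ * Fintype.card ι) by positivity)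
  have hfail := one_sub_div_le_prob (F := fun z : ι → Bool => 1 - ℙ[w] (reach (supp z) s)) hB
    (fun z => sub_nonneg.2 (prob_le_one (prodWeight_mem_stdSimplex hw) _))
    (show 0 < 4 * η by positivity)
  rw [expect_card_supp hδ0.le hδ1, div_mul_cancel_right₀ (by positivity)] at hsize
  have hmean : (𝔼[fun _ => bernoulliWeight δ] fun z => 1 - ℙ[w] (reach (supp z) s)) / (4 * η) ≤
      1 / 4 := by
    have hsub := map_sub 𝔼[fun _ : ι => bernoulliWeight δ] (fun _ => 1)
      fun z => ℙ[w] (reach (supp z) s)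
    rw [expect_const hB] at hsub
    rw [div_le_iff₀ (by positivity)]
    exact hsub.trans_le (by linarith [prob_mix_le hδ0.le hδ1 hw s])
  set few := {z : ι → Bool | ((supp z).card : ℝ) ≤ 4 * (δ * Fintype.card ι)}
  set likely := {z : ι → Bool | 1 - ℙ[w] (reach (supp z) s) ≤ 4 * η}
  have hboth := prob_add_prob_le hB few likely
  exact le_trans (by linarith) (prob_mono hB.1 fun z (hz : z ∈ few ∩ likely) =>
    ⟨hz.1, sub_le_comm.1 hz.2⟩)

end Resampling

section Tower

variable {x : ℝ} {k l : ℕ}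

/-- The tower `2 ^ (2 ^ ⋯ ^ (2 ^ x))` of height `k`. -/
noncomputable def tower (k : ℕ) (x : ℝ) : ℝ := (fun y : ℝ => 2 ^ y)^[k] x

lemma tower_add (k l : ℕ) (x : ℝ) : tower (k + l) x = tower k (tower l x) :=
  Function.iterate_add_apply _ _ _ _

lemma tower_succ (k : ℕ) (x : ℝ) : tower (k + 1) x = 2 ^ tower k x :=
  Function.iterate_succ_apply' _ _ _

lemma self_le_two_rpow (x : ℝ) : x ≤ 2 ^ x := by
  rcases le_total x 1 with hx | hx
  · rcases le_total x 0 with hx0 | hx0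
    · exact hx0.trans (by positivity)
    · exact hx.trans (Real.one_le_rpow one_le_two hx0)
  · have := one_add_mul_self_le_rpow_one_add (by norm_num : (-1 : ℝ) ≤ 1) hx
    norm_num at this
    linarith

lemma tower_mono (k : ℕ) : Monotone (tower k) :=
  Monotone.iterate (fun _ _ h => Real.rpow_le_rpow_of_exponent_le one_le_two h) k

lemma tower_le_tower_of_le (h : k ≤ l) (x : ℝ) : tower k x ≤ tower l x :=
  Function.monotone_iterate_of_id_le self_le_two_rpow h x

lemma add_one_le_tower_one (k : ℕ) : (k : ℝ) + 1 ≤ tower k 1 := by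
  induction k with
  | zero => simp [tower]
  | succ k ih =>
    have hbernoulli := one_add_mul_self_le_rpow_one_add (by norm_num : (-1 : ℝ) ≤ 1)
      (le_trans (by simp) ih)
    norm_num at hbernoulli
    rw [tower_succ]
    push_cast
    linarith

lemma eventually_mul_le_tower_one (c : ℝ) :
    ∀ᶠ r : ℕ in Filter.atTop, c * (r + 1) ≤ tower (2 * r) 1 := by
  have hpow := (isLittleO_coe_const_pow_of_one_lt (one_lt_two (α := ℝ))).const_mul_left c
  have hbound := (Filter.tendsto_add_atTop_nat 1).eventually (hpow.bound one_pos)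
  filter_upwards [hbound, Filter.eventually_ge_atTop 1] with r hr hr1
  calc c * (r + 1) ≤ ‖c * ((r + 1 : ℕ) : ℝ)‖ := by push_cast; exact le_abs_self _
    _ ≤ 2 ^ ((r : ℝ) + 1) := by
      rw [← Nat.cast_add_one, Real.rpow_natCast]
      simpa using hr
    _ ≤ tower (r + 1) 1 := by
      rw [tower_succ]
      exact Real.rpow_le_rpow_of_exponent_le one_le_two (add_one_le_tower_one r)
    _ ≤ tower (2 * r) 1 := tower_le_tower_of_le (by omega) 1

lemma tower_iterLog (h : ∀ j < k, 0 < iterLog j x) : tower k (iterLog k x) = x := by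
  induction k with
  | zero => rfl
  | succ k ih =>
    rw [tower_add, show tower 1 (iterLog (k + 1) x) = iterLog k x from
      Real.rpow_logb two_pos (by norm_num) (h k k.lt_succ_self)]
    exact ih fun j hj => h j (hj.trans k.lt_succ_self)

lemma tower_one_le_of_lt_logStar (h : k < logStar x) : tower k 1 ≤ x := by
  have hiter {j : ℕ} (hj : j ≤ k) : 1 < iterLog j x :=
    not_le.1 (Nat.notMem_of_lt_sInf (hj.trans_lt h))
  conv_rhs => rw [← tower_iterLog fun j hj => one_pos.trans (hiter (le_of_lt hj))]
  exact tower_mono k (hiter le_rfl).le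

lemma exists_forall_tower_le (c : ℝ) (hc : 0 ≤ c) :
    ∃ n₀ : ℕ, ∀ n ≥ n₀, ∀ r, 5 * r < logStar n → tower (3 * r) (c * (r + 1)) ≤ n := by
  obtain ⟨r₀, hr₀⟩ := Filter.eventually_atTop.1 (eventually_mul_le_tower_one c)
  obtain ⟨n₀, hn₀⟩ := exists_nat_ge (tower (3 * r₀) (c * (r₀ + 1)))
  refine ⟨n₀, fun n hn r hr => ?_⟩
  rcases le_total r₀ r with h | h
  · calc tower (3 * r) (c * (r + 1)) ≤ tower (3 * r) (tower (2 * r) 1) := tower_mono _ (hr₀ r h)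
      _ = tower (5 * r) 1 := by rw [← tower_add, ← add_mul]
      _ ≤ n := tower_one_le_of_lt_logStar hr
  · calc tower (3 * r) (c * (r + 1)) ≤ tower (3 * r) (c * (r₀ + 1)) :=
          tower_mono _ (by gcongr)
      _ ≤ tower (3 * r₀) (c * (r₀ + 1)) := tower_le_tower_of_le (by omega) _
      _ ≤ n := hn₀.trans (by exact_mod_cast hn)

end Tower

section Thresholds

variable {x y : ℝ}

lemma exp_le_two_rpow_two_mul (hx : 0 ≤ x) : Real.exp x ≤ 2 ^ (2 * x) := by
  rw [Real.rpow_def_of_pos two_pos, Real.exp_le_exp]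
  nlinarith [Real.log_two_gt_d9]

lemma fifty_mul_pow_four_le_two_rpow (hy : 2000 ≤ y) : 50 * y ^ 4 ≤ 2 ^ y :=
  calc 50 * y ^ 4 ≤ (y / 2) ^ 6 / Nat.factorial 6 := by
        have : 2000 ^ 2 ≤ y ^ 2 := pow_le_pow_left₀ (by norm_num) hy 2
        have : 0 ≤ y ^ 4 := by positivity
        norm_num [Nat.factorial, div_pow]
        nlinarith
    _ ≤ Real.exp (y / 2) := Real.pow_div_factorial_le_exp _ (by linarith) 6
    _ ≤ 2 ^ y := (exp_le_two_rpow_two_mul (by linarith)).trans_eq (by ring_nf)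

lemma exp_mul_pow_four_le_two_rpow_two_rpow (hy : 2000 ≤ y) :
    Real.exp (25 * y ^ 4) ≤ 2 ^ (2 : ℝ) ^ y :=
  (exp_le_two_rpow_two_mul (by positivity)).trans (Real.rpow_le_rpow_of_exponent_le one_le_two
    (by linarith [fifty_mul_pow_four_le_two_rpow hy]))

lemma quadratic_le_exp_pow_four (hy : 2000 ≤ y) : 2 * y ^ 2 + 2 * y + 4 ≤ Real.exp (y ^ 4) := by
  have : 2000 ^ 2 ≤ y ^ 2 := pow_le_pow_left₀ (by norm_num) hy 2
  nlinarith [Real.add_one_le_exp (y ^ 4)]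

/-- Here `k` will be the number of greedily chosen players, and `M` the number of blocks of the
partition that is used for guessing them. -/
lemma exists_mul_two_pow_le_tower (hy : 2000 ≤ y) :
    ∃ k M : ℕ, 2 * y * Real.exp (24 * y ^ 4) ≤ k ∧ k * y ≤ M ∧ 8 * y * 2 ^ M ≤ tower 3 y := by
  set E := Real.exp (24 * y ^ 4)
  have hE1 : 1 ≤ E := Real.one_le_exp (by positivity)
  refine ⟨⌈2 * y * E⌉₊, ⌈⌈2 * y * E⌉₊ * y⌉₊, Nat.le_ceil _, Nat.le_ceil _, ?_⟩
  set k := ⌈2 * y * E⌉₊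
  set M := ⌈k * y⌉₊
  have hk : (k : ℝ) ≤ 2 * y * E + 1 := (Nat.ceil_lt_add_one (by positivity)).le
  have hM : (M : ℝ) ≤ k * y + 1 := (Nat.ceil_lt_add_one (by positivity)).le
  have hsum : 3 + y + M ≤ 2 ^ (2 : ℝ) ^ y :=
    calc 3 + y + M ≤ 2 * y ^ 2 * E + 2 * y + 4 := by nlinarith
      _ ≤ E * (2 * y ^ 2 + 2 * y + 4) := by nlinarith
      _ ≤ E * Real.exp (y ^ 4) := by gcongr; exact quadratic_le_exp_pow_four hy
      _ = Real.exp (25 * y ^ 4) := by rw [← Real.exp_add]; ring_nf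
      _ ≤ 2 ^ (2 : ℝ) ^ y := exp_mul_pow_four_le_two_rpow_two_rpow hy
  calc 8 * y * 2 ^ M ≤ 8 * 2 ^ y * 2 ^ M := by gcongr; exact self_le_two_rpow y
    _ = 2 ^ (3 + y + M) := by
      rw [Real.rpow_add two_pos, Real.rpow_add two_pos, Real.rpow_natCast]
      norm_num
    _ ≤ tower 3 y := Real.rpow_le_rpow_of_exponent_le one_le_two hsum

end Thresholds

section Round

variable {ι H : Type*} [Fintype ι] [DecidableEq ι] [Fintype H] {q : H → ℝ} {w : ι → Bool → ℝ}
  {s : H → Set (ι → Bool)} {η y : ℝ}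

lemma div_add_one_mul_add_ceil_le {n k M : ℕ} (hη : 0 < η) (hηy : 1 ≤ η * y) (hy : 1 ≤ y)
    (hM : 0 < M) (hkM : k * y ≤ M) (hn : 8 * y * 2 ^ M ≤ n) :
    (((n / M + 1) * k + ⌈η * n⌉₊ : ℕ) : ℝ) ≤ 4 * (η * n) := by
  have hm : (⌈η * n⌉₊ : ℝ) ≤ η * n + 1 := (Nat.ceil_lt_add_one (by positivity)).le
  have hpow : (M : ℝ) + 1 ≤ 2 ^ M := mod_cast M.lt_two_pow_self
  have hk : k + 1 ≤ η * n :=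
    calc (k : ℝ) + 1 ≤ k * y + 1 := by gcongr; exact le_mul_of_one_le_right k.cast_nonneg hy
      _ ≤ 2 ^ M := by linarith
      _ ≤ η * y * 2 ^ M := le_mul_of_one_le_left (by positivity) hηy
      _ ≤ η * (8 * y * 2 ^ M) := by nlinarith [show 0 ≤ η * y * 2 ^ M by positivity]
      _ ≤ η * n := by gcongr
  have hblock : ((n / M : ℕ) : ℝ) * k ≤ η * n :=
    calc ((n / M : ℕ) : ℝ) * k ≤ n / M * (η * y * k) := by
          gcongr
          · exact Nat.cast_div_le
          · exact le_mul_of_one_le_left k.cast_nonneg hηy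
      _ = η * n * (k * y / M) := by ring
      _ ≤ η * n := mul_le_of_le_one_right (by positivity) (div_le_one_of_le₀ hkM (by positivity))
  push_cast
  linarith

lemma one_le_mul_exp_neg {k : ℝ} (hη : 0 < η) (hy : 0 < y) (hηy : 1 ≤ η * y)
    (hk : 2 * y * Real.exp (24 * y ^ 4) ≤ k) :
    1 ≤ k * (η / 2 * Real.exp (-2 * (12 * y ^ 4))) :=
  calc 1 ≤ η * y := hηy
    _ = 2 * y * Real.exp (24 * y ^ 4) * (η / 2 * Real.exp (-2 * (12 * y ^ 4))) := by
      rw [show -2 * (12 * y ^ 4) = -(24 * y ^ 4) by ring, Real.exp_neg]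
      field_simp
    _ ≤ k * (η / 2 * Real.exp (-2 * (12 * y ^ 4))) := by gcongr

lemma three_mul_le_of_mul_le {m n : ℝ} (hη : 0 < η) (hy : 0 < y) (hηy : 1 ≤ η * y) (hn : 0 ≤ n)
    (hm : η * n ≤ m) :
    3 * n ≤ m * ((12 * y ^ 4 + 1) * (η / 2) * (1 / (2 * y) * η)) :=
  calc 3 * n ≤ 3 * n * (η * y) ^ 3 := le_mul_of_one_le_right (by positivity) (one_le_pow₀ hηy)
    _ = η * n * (12 * y ^ 4 * (η / 2) * (1 / (2 * y) * η)) := by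
      field_simp
      ring
    _ ≤ m * ((12 * y ^ 4 + 1) * (η / 2) * (1 / (2 * y) * η)) := by
      have : 0 ≤ m := (by positivity : 0 ≤ η * n).trans hm
      gcongr
      exact le_add_of_nonneg_right zero_le_one

lemma exists_two_div_tower_le_prob_reach_mix (hq : q ∈ stdSimplex ℝ H)
    (hw : ∀ i, w i ∈ stdSimplex ℝ Bool) (hη0 : 0 < η) (hη1 : η ≤ 1) (hηy : 1 ≤ η * y)
    (hy : 2000 ≤ y) (hn : tower 3 y ≤ Fintype.card ι)
    (hs : 1 / y ≤ expect q fun h => ℙ[mix η w] (s h)) :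
    ∃ A : Finset ι, A.card ≤ 4 * (η * Fintype.card ι) ∧
      2 / tower 3 y ≤ prob q {h | 1 - η ≤ ℙ[mix η w] (reach A (s h))} := by
  have hy0 : 0 < y := by linarith
  have hmix := mix_mem_stdSimplex hη0.le hη1 hw
  obtain ⟨k, M, hk, hkM, htower⟩ := exists_mul_two_pow_le_tower hy
  have hk0 : 0 < (k : ℝ) := lt_of_lt_of_le (by positivity) hk
  have hM0 : 0 < M := Nat.cast_pos.1 (lt_of_lt_of_le (mul_pos hk0 hy0) hkM)
  have hN : (0 : ℝ) < Fintype.card ι := lt_of_lt_of_le (by positivity) (htower.trans hn)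
  have : NeZero M := ⟨hM0.ne'⟩
  have : Nonempty ι := Fintype.card_pos_iff.1 (Nat.cast_pos.1 hN)
  have hlikely : 1 / (2 * y) ≤ prob q {h | 1 / (2 * y) ≤ ℙ[mix η w] (s h)} := by
    have := hs.trans (expect_le_prob_add hq
      (fun h => prob_le_one (prodWeight_mem_stdSimplex hmix) (s h))
      (show 0 ≤ 1 / (2 * y) by positivity))
    linarith [show 1 / y = 1 / (2 * y) + 1 / (2 * y) by field_simp; norm_num]
  -- The choice `L = 12 * y ^ 4` makes `⌈η * Fintype.card ι⌉₊` random players suffice.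
  obtain ⟨A, hA, hgood⟩ := exists_mul_prob_le_prob_reach hq.1 hmix (half_pos hη0)
    (fun i b => by simpa using div_card_le_mix hη1 hw i b) (show 0 ≤ 12 * y ^ 4 by positivity)
    (show 0 < 1 / (2 * y) by positivity) hη0
    (one_le_mul_exp_neg hη0 hy0 hηy hk)
    (three_mul_le_of_mul_le hη0 hy0 hηy hN.le (Nat.le_ceil _)) s M
  refine ⟨A, (Nat.cast_le.2 hA).trans
    (div_add_one_mul_add_ceil_le hη0 hηy (by linarith) hM0 hkM (htower.trans hn)), ?_⟩
  calc 2 / tower 3 y ≤ 2 / (8 * y * 2 ^ M) := by gcongr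
    _ = (2 ^ M)⁻¹ * (1 / 2 * (1 / (2 * y))) := by field_simp; norm_num
    _ ≤ (2 ^ M)⁻¹ * (1 / 2 * prob q {h | 1 / (2 * y) ≤ ℙ[mix η w] (s h)}) := by gcongr
    _ ≤ _ := hgood

lemma exists_one_div_tower_le_prob_reach (hq : q ∈ stdSimplex ℝ H)
    (hw : ∀ i, w i ∈ stdSimplex ℝ Bool) (hη0 : 0 < η) (hη1 : η ≤ 1) (hηy : 1 ≤ η * y)
    (hy : 2000 ≤ y) (hn : tower 3 y ≤ Fintype.card ι)
    (hs : 1 / y ≤ expect q fun h => ℙ[mix η w] (s h)) :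
    ∃ B : Finset ι, B.card ≤ 8 * (η * Fintype.card ι) ∧
      1 / tower 3 y ≤ prob q {h | 1 - 4 * η ≤ ℙ[w] (reach B (s h))} := by
  have htower : 0 < tower 3 y := Real.rpow_pos_of_pos two_pos _
  have : Nonempty ι := Fintype.card_pos_iff.1 (Nat.cast_pos.1 (htower.trans_le hn))
  obtain ⟨A, hA, hgood⟩ :=
    exists_two_div_tower_le_prob_reach_mix hq hw hη0 hη1 hηy hy hn hs
  obtain ⟨z, hz⟩ := exists_mul_prob_le_prob
    (prodWeight_mem_stdSimplex fun _ : ι => bernoulliWeight_mem_stdSimplex hη0.le hη1) hq.1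
    fun h (hh : 1 - η ≤ ℙ[mix η w] (reach A (s h))) => half_le_prob_card_supp_le hη0 hη1 hη0 hw hh
  have hbound := (show 1 / tower 3 y = 1 / 2 * (2 / tower 3 y) by ring).trans_le
    ((mul_le_mul_of_nonneg_left hgood one_half_pos.le).trans hz)
  obtain ⟨-, -, hsupp, -⟩ := nonempty_of_prob_pos ((one_div_pos.2 htower).trans_le hbound)
  refine ⟨A ∪ supp z, ?_, hbound.trans (prob_mono hq.1 ?_)⟩
  · have hunion : ((A ∪ supp z).card : ℝ) ≤ A.card + (supp z).card :=
      mod_cast Finset.card_union_le A (supp z)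
    linarith
  · rintro h ⟨-, -, hh⟩
    rwa [reach_reach] at hh

end Round

section Play

variable {ι : Type*} [DecidableEq ι] {j : ℕ}

/-- A way `e` for the coalition `B` to play `j` rounds: it maps the bits `α` broadcast by honest
players to the transcript in which the players in `B` deviate. The bits of `α` in `B` are ignored,
and round `i` of the transcript depends only on rounds `≤ i` of `α`. -/
structure IsPlay (B : Finset ι) (e : (Fin j → ι → Bool) → Fin j → ι → Bool) : Prop where
  apply_of_notMem : ∀ α i k, k ∉ B → e α i k = α i k
  causal : ∀ α α' i, (∀ i' ≤ i, ∀ k ∉ B, α i' k = α' i' k) → e α i = e α' i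

lemma IsPlay.exists_snoc {B : Finset ι} {e : (Fin j → ι → Bool) → Fin j → ι → Bool}
    (he : IsPlay B e) (s : Set (Fin (j + 1) → ι → Bool)) :
    ∃ e', IsPlay B e' ∧ ∀ h x, x ∈ reach B {a | Fin.snoc (e h) a ∈ s} →
      e' (Fin.snoc h x) ∈ s := by
  let answer (h : Fin j → ι → Bool) (x : ι → Bool) : ι → Bool :=
    B.piecewise (Classical.epsilon fun z =>
      (Fin.snoc h (B.piecewise z x) : Fin (j + 1) → ι → Bool) ∈ s) x
  have answer_congr (h) {x x' : ι → Bool} (hx : ∀ k ∉ B, x k = x' k) :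
      answer h x = answer h x' := by
    have hpw (z : ι → Bool) : B.piecewise z x = B.piecewise z x' :=
      B.piecewise_congr (fun _ _ => rfl) hx
    simp only [answer, hpw]
  refine ⟨fun α => Fin.snoc (e (Fin.init α)) (answer (e (Fin.init α)) (α (Fin.last j))),
    ⟨fun α i k hk => ?_, fun α α' i h => ?_⟩, fun h x hx => ?_⟩
  · cases i using Fin.lastCases with
    | last => simp [answer, hk]
    | cast i => simpa [Fin.init] using he.apply_of_notMem (Fin.init α) i k hk
  · cases i using Fin.lastCases with
    | last =>
      have hinit : e (Fin.init α) = e (Fin.init α') :=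
        funext fun i => he.causal _ _ i fun i' _ => h i'.castSucc (Fin.le_last _)
      simp only [Fin.snoc_last, hinit]
      exact answer_congr _ (h (Fin.last j) le_rfl)
    | cast i =>
      simpa using he.causal (Fin.init α) (Fin.init α') i fun i' hi =>
        h i'.castSucc (Fin.castSucc_le_castSucc_iff.2 hi)
  · simpa [answer] using Classical.epsilon_spec hx

lemma IsPlay.exists_prob_sub_le [Fintype ι] {B C : Finset ι}
    {e : (Fin j → ι → Bool) → Fin j → ι → Bool} (he : IsPlay C e)
    {w : Fin (j + 1) → ι → Bool → ℝ} (hw : ∀ i k, w i k ∈ stdSimplex ℝ Bool) (hBC : B ⊆ C)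
    {c : ℝ} (hc : 0 ≤ c) (s : Set (Fin (j + 1) → ι → Bool)) :
    ∃ e', IsPlay C e' ∧
      ℙ[fun i => prodWeight (w (Fin.castSucc i))]
          (e ⁻¹' {h | 1 - c ≤ ℙ[w (Fin.last j)] (reach B {a | Fin.snoc h a ∈ s})}) - c ≤
        ℙ[fun i => prodWeight (w i)] (e' ⁻¹' s) := by
  obtain ⟨e', he', hsnoc⟩ := he.exists_snoc s
  have hW (i : Fin (j + 1)) := prodWeight_mem_stdSimplex (hw i)
  refine ⟨e', he', le_trans (sub_le_sub_right (prob_mono ?_ fun h hh => ?_) c)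
    (prob_sub_le_prob_prodWeight_snoc hW hc (e' ⁻¹' s))⟩
  · exact (prodWeight_mem_stdSimplex fun i => hW (Fin.castSucc i)).1
  · exact le_trans hh (prob_mono (hW _).1 ((reach_mono hBC _).trans (hsnoc h)))

lemma IsPlay.exists_strategy {n r : ℕ} {B : Finset (Fin n)}
    {e : (Fin r → Fin n → Bool) → Fin r → Fin n → Bool} (he : IsPlay B e) :
    ∃ π : Strategy n r B, execP B π = e := by
  refine ⟨fun i d => e (fun i' k => if h : i'.val < i.val + 1 ∧ k ∉ B then d ⟨i', h.1⟩ ⟨k, h.2⟩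
    else false) i, ?_⟩
  funext α i k
  unfold execP
  split_ifs with hk
  · refine congrFun (he.causal _ _ i fun i' hi k' hk' => ?_) k
    simp [Nat.lt_succ_of_le hi, hk']
  · rw [he.apply_of_notMem α i k hk]

lemma exists_forall_superset_isPlay [Fintype ι] {η : ℝ} (hη0 : 0 < η) (hη1 : η ≤ 1)
    {y : ℝ} (hy : 2000 ≤ y) (hηy : 1 ≤ η * y) {w : Fin j → ι → Bool → ℝ}
    (hw : ∀ i k, w i k ∈ stdSimplex ℝ Bool) (hn : tower (3 * j) y ≤ Fintype.card ι)
    {s : Set (Fin j → ι → Bool)}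
    (hs : 1 / y ≤ ℙ[fun i => prodWeight (mix η (w i))] s) :
    ∃ B : Finset ι, B.card ≤ 8 * j * (η * Fintype.card ι) ∧ ∀ C, B ⊆ C →
      ∃ e, IsPlay C e ∧ 1 - 4 * j * η ≤ ℙ[fun i => prodWeight (w i)] (e ⁻¹' s) := by
  have hW {l : ℕ} {v : Fin l → ι → Bool → ℝ} (hv : ∀ i k, v i k ∈ stdSimplex ℝ Bool) :
      prodWeight (fun i => prodWeight (v i)) ∈ stdSimplex ℝ (Fin l → ι → Bool) :=
    prodWeight_mem_stdSimplex fun i => prodWeight_mem_stdSimplex (hv i)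
  induction j generalizing y with
  | zero =>
    obtain ⟨x, hx⟩ := nonempty_of_prob_pos ((by positivity : 0 < 1 / y).trans_le hs)
    have hs_univ : s = Set.univ := Set.eq_univ_of_forall fun z => Subsingleton.elim x z ▸ hx
    refine ⟨∅, by simp, fun C _ => ⟨id, ⟨fun _ _ _ _ => rfl, fun _ _ i => i.elim0⟩, ?_⟩⟩
    simp [hs_univ, prob_univ (hW hw)]
  | succ j ih =>
    have htower : tower (3 * (j + 1)) y = tower (3 * j) (tower 3 y) := tower_add _ _ _
    have hy3 : y ≤ tower 3 y := tower_le_tower_of_le (Nat.zero_le 3) y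
    rw [prob_prodWeight_snoc] at hs
    obtain ⟨B₁, hB₁, hlast⟩ := exists_one_div_tower_le_prob_reach
      (hW fun i => mix_mem_stdSimplex hη0.le hη1 (hw (Fin.castSucc i))) (hw (Fin.last j)) hη0 hη1
      hηy hy ((tower_le_tower_of_le (by omega) y).trans hn) hs
    obtain ⟨B₂, hB₂, hprefix⟩ := ih (hy.trans hy3) (hηy.trans (by gcongr))
      (fun i => hw i.castSucc) (htower.symm.trans_le hn) hlast
    refine ⟨B₁ ∪ B₂, ?_, fun C hC => ?_⟩
    · have : ((B₁ ∪ B₂).card : ℝ) ≤ B₁.card + B₂.card := mod_cast Finset.card_union_le B₁ B₂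
      push_cast
      linarith
    obtain ⟨e, he, hprob⟩ := hprefix C (Finset.union_subset_right hC)
    obtain ⟨e', he', hprob'⟩ := he.exists_prob_sub_le hw (Finset.union_subset_left hC)
      (by positivity : 0 ≤ 4 * η) s
    refine ⟨e', he', le_trans ?_ hprob'⟩
    push_cast
    linarith

end Play

section Protocol

lemma real_singleton_mem_stdSimplex {σ : Type*} [Fintype σ] [MeasurableSpace σ]
    [MeasurableSingletonClass σ] (μ : Measure σ) [IsProbabilityMeasure μ] :
    (fun b => μ.real {b}) ∈ stdSimplex ℝ σ :=
  ⟨fun _ => measureReal_nonneg, by simp⟩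

lemma measureReal_eq_prob {σ : Type*} [Fintype σ] [MeasurableSpace σ] [MeasurableSingletonClass σ]
    (μ : Measure σ) [IsFiniteMeasure μ] (s : Set σ) : μ.real s = prob (fun b => μ.real {b}) s := by
  classical
  rw [← s.coe_toFinset, ← sum_measureReal_singleton]
  simp [prob, expect_apply, Set.indicator_apply, Finset.sum_ite]

lemma pi_real_singleton {ι σ : Type*} [Fintype ι] [MeasurableSpace σ] (μ : ι → Measure σ)
    [∀ i, SigmaFinite (μ i)] :
    (fun x => (Measure.pi μ).real {x}) = prodWeight fun i b => (μ i).real {b} := by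
  ext x
  simp [Measure.real, prodWeight, ENNReal.toReal_prod]

variable {n r : ℕ} (μs : Fin r → Fin n → Measure Bool) [∀ i k, IsProbabilityMeasure (μs i k)]
  (f : (Fin r → Fin n → Bool) → Bool)

lemma IsPlay.prob_le_IB {B : Finset (Fin n)} {e : (Fin r → Fin n → Bool) → Fin r → Fin n → Bool}
    (he : IsPlay B e) (b : Bool) :
    ℙ[fun i => prodWeight fun k x => (μs i k).real {x}] (e ⁻¹' (f ⁻¹' {b})) ≤ IB μs f B b := by
  obtain ⟨π, rfl⟩ := he.exists_strategy
  simp_rw [← pi_real_singleton, ← measureReal_eq_prob]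
  exact ENNReal.toReal_mono (ne_top_of_le_ne_top ENNReal.one_ne_top (iSup_le fun _ =>
    MeasureTheory.prob_le_one))
    (le_iSup (fun π => IPi μs f B π b) π)

lemma exists_one_sub_le_IB {ε β : ℝ} (hε : 0 < ε) (hβ : 0 < β)
    (hn : tower (3 * r) ((2000 + 8 / β + 4 / ε) * (r + 1)) ≤ n) :
    ∃ B : Finset (Fin n), B.card ≤ ⌊β * (n : ℝ)⌋₊ ∧ ∃ b, 1 - ε ≤ IB μs f B b := by
  set y : ℝ := (2000 + 8 / β + 4 / ε) * (r + 1)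
  have hβ' : 0 < 8 / β := by positivity
  have hε' : 0 < 4 / ε := by positivity
  have hy : 2000 ≤ y := by nlinarith [(r.cast_nonneg : (0 : ℝ) ≤ r)]
  have hy0 : 0 < y := by linarith
  have hη1 : y⁻¹ ≤ 1 := inv_le_one_of_one_le₀ (by linarith)
  have hw (i : Fin r) (k : Fin n) := real_singleton_mem_stdSimplex (μs i k)
  set w : Fin r → Fin n → Bool → ℝ := fun i k x => (μs i k).real {x}
  have hmix : prodWeight (fun i => prodWeight (mix y⁻¹ (w i))) ∈ stdSimplex ℝ _ :=
    prodWeight_mem_stdSimplex fun i => prodWeight_mem_stdSimplex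
      (mix_mem_stdSimplex (by positivity) hη1 (hw i))
  obtain ⟨b, hb⟩ := exists_half_le_prob_preimage hmix f
  obtain ⟨B, hB, hplay⟩ := exists_forall_superset_isPlay (inv_pos.2 hy0) hη1 hy
    (inv_mul_cancel₀ hy0.ne').ge hw (by simpa using hn)
    ((one_div_le_one_div_of_le two_pos (by linarith)).trans hb)
  obtain ⟨e, he, hprob⟩ := hplay B subset_rfl
  refine ⟨B, Nat.le_floor (hB.trans ?_), b, le_trans ?_ (hprob.trans (he.prob_le_IB μs f b))⟩
  · have : 8 * r * y⁻¹ ≤ β := by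
      rw [← div_eq_mul_inv, div_le_iff₀ hy0, ← div_le_iff₀' hβ, mul_div_right_comm]
      nlinarith
    rw [Fintype.card_fin, ← mul_assoc]
    gcongr
  · have : 4 * r * y⁻¹ ≤ ε := by
      rw [← div_eq_mul_inv, div_le_iff₀ hy0, ← div_le_iff₀' hε, mul_div_right_comm]
      nlinarith
    linarith

end Protocol

end CoinFlip

/-- over any product measure, if an `(n,r)` protocol is `ε`-resilient against all
coalitions of size `⌊βn⌋`, then `r ≥ (log* n)/5`; i.e., `Ω(log* n)` rounds are necessary for
resilience against coalitions of linear size. -/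
theorem rounds_lower_bound :
    ∀ ε : ℝ, 0 < ε → ε ≤ 1/2 →
    ∀ β : ℝ, 0 < β → β < 1 →
    ∃ n₀ : ℕ, ∀ n : ℕ, n₀ ≤ n →
    ∀ r : ℕ,
    ∀ μs : Fin r → Fin n → Measure Bool, (∀ i j, IsProbabilityMeasure (μs i j)) →
    ∀ f : (Fin r → Fin n → Bool) → Bool,
    (∀ B : Finset (Fin n), B.card ≤ ⌊β * (n : ℝ)⌋₊ → ∀ b : Bool, IB μs f B b < 1 - ε) →
    (logStar (n : ℝ) : ℝ) / 5 ≤ (r : ℝ) := by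
  intro ε hε _ β hβ _
  obtain ⟨n₀, hn₀⟩ := CoinFlip.exists_forall_tower_le (2000 + 8 / β + 4 / ε) (by positivity)
  refine ⟨n₀, fun n hn r μs hμ f hresilient => ?_⟩
  by_contra! hr
  have hlt : 5 * r < logStar n := by
    rw [lt_div_iff₀' (by norm_num)] at hr
    exact_mod_cast hr
  obtain ⟨B, hB, b, hb⟩ := CoinFlip.exists_one_sub_le_IB μs f hε hβ (hn₀ n hn r hlt)
  exact (hresilient B hB b).not_ge hb
end
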